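/- Third-order at-the-money implied volatility asymptotics for the pure-jump CGMY model: with κ ≡ 0, define d₁ := (1/π)·Γ(1−1/Y)·(2·C·Γ(−Y)·|cos(πY/2)|)^{1/Y}, d₂ := (C·Γ(−Y)/2)·((M−1)^Y − M^Y − (G+1)^Y + G^Y), d₃₁ := (γ̃²/(2π))·Γ(1+1/Y)·(−2·C·Γ(−Y)·cos(πY/2))^{−1/Y}, d₃₂ := −(1/2)·E[(Z⁺+Ũ)²·1_{Z⁺+Ũ≤0}] − ∫₀^∞ w·(P(Z⁺+Ũ ≥ w) − C·M^Y/(Y·w^Y) − C·(G+1)^Y/(Y·w^Y)) dw, and d₃ := d₃₁ if Y < 3/2, d₃ := d₃₂ if Y > 3/2, and d₃ := d₃₁ + d₃₂ if Y = 3/2. Suppose δ > 0 and σ̂ : (0,δ) → (0,∞) satisfies C_BS(t, σ̂(t)) = Π(t) for all t ∈ (0,δ). Then, as t → 0⁺: if 1 < Y ≤ 3/2, (1/√(2π))·σ̂(t) = d₁·t^{1/Y−1/2} + d₂·t^{1/2} + d₃·t^{3/2−1/Y} + o(t^{3/2−1/Y}); and if 3/2 < Y < 2, (1/√(2π))·σ̂(t)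 = d₁·t^{1/Y−1/2} + d₂·t^{1/2} + d₃·t^{2/Y−1/2} + o(t^{2/Y−1/2}). -/

import Mathlib

open MeasureTheory ProbabilityTheory Filter Topology Asymptotics Set

/-- The standard normal cumulative distribution function. -/
noncomputable def stdGaussianCDF (x : ℝ) : ℝ :=
  ∫ t in Set.Iic x, Real.exp (-t ^ 2 / 2) / Real.sqrt (2 * Real.pi)

/-- The Black–Scholes at-the-money call price with volatility `Σ`, maturity `t`,
spot `1` and zero interest rate. -/
noncomputable def CBS (t Sig : ℝ) : ℝ := 2 * stdGaussianCDF (Sig * Real.sqrt t / 2) - 1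

/-!
Under the share measure, which is an Esscher transform, the driving process at time `t` is the
difference of two exponentially tilted one-sided `Y`-stable variables. Undoing the tilts and scaling
by `l = t ^ (1 / Y)` turns the call price into
`E[exp (-l Ũ) (1 - exp (-(l Z + c t)⁺))]`, up to the factor that normalizes the tilts, with
`Z = U - V`, `Ũ = (M - 1) U + (G + 1) V` and `U`, `V` independent one-sided stable variables.

Without drift this is a difference of the Laplace transforms of `Ũ` and of `Z⁺ + Ũ`, and
`Z⁺ + Ũ = max (M U + G V) ((M - 1) U + (G + 1) V)` has a right tail equivalent to
`C (M ^ Y + (G + 1) ^ Y) / (Y w ^ Y)`: the terms of order `l`, `l ^ Y` and `l ^ 2` are the mean, the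
tail constant and the regularized second moment. The tail of `U` comes from its density, written
as an inverse Laplace integral and expanded after rotating the contour. The drift moves the
threshold in `E[(Z + c t / l)⁺]`: to first order it contributes `P(Z > 0) = 1 / 2`, to second order
the density of `Z` at zero, the source of `d₃₁`.

The Black–Scholes price is linear in `σ √t` up to a cubic error, so the expansion of the price is
that of the implied volatility.
-/

section CGMY

open Complex (I)
open scoped Real

section ContourShift

lemma norm_integral_sub_integral_le_of_strip {H : ℂ → ℂ} {a b : ℝ} (hab : a ≤ b)
    (hcont : ContinuousOn H {z | a ≤ z.im ∧ z.im ≤ b})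
    (hdiff : DifferentiableOn ℂ H {z | a < z.im ∧ z.im < b}) {g : ℝ → ℝ}
    (hle : ∀ x y : ℝ, a ≤ y → y ≤ b → ‖H (x + y * I)‖ ≤ g x) (T : ℝ) :
    ‖(∫ x in (-T)..T, H (x + a * I)) - ∫ x in (-T)..T, H (x + b * I)‖
      ≤ (g T + g (-T)) * (b - a) := by
  have hrect := Complex.integral_boundary_rect_eq_zero_of_continuousOn_of_differentiableOn H
    ⟨-T, a⟩ ⟨T, b⟩
    (hcont.mono fun z hz ↦ by
      simpa [uIcc_of_le hab] using (Complex.mem_reProdIm.1 hz).2)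
    (hdiff.mono fun z hz ↦ by
      simpa [min_eq_left hab, max_eq_right hab] using (Complex.mem_reProdIm.1 hz).2)
  have hside (S : ℝ) : ‖∫ y in a..b, H (S + y * I)‖ ≤ g S * (b - a) := by
    refine (intervalIntegral.norm_integral_le_of_norm_le_const fun y hy ↦ ?_).trans_eq
      (by rw [abs_of_nonneg (sub_nonneg.2 hab)])
    rw [uIoc_of_le hab] at hy
    exact hle S y hy.1.le hy.2
  have hsplit : (∫ x in (-T)..T, H (x + a * I)) - ∫ x in (-T)..T, H (x + b * I) =
      I • (∫ y in a..b, H ((-T : ℝ) + y * I)) - I • ∫ y in a..b, H (T + y * I) := by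
    linear_combination hrect
  calc _ ≤ ‖∫ y in a..b, H ((-T : ℝ) + y * I)‖ + ‖∫ y in a..b, H (T + y * I)‖ := by
        rw [hsplit]
        refine (norm_sub_le _ _).trans_eq ?_
        rw [norm_smul, norm_smul, Complex.norm_I, one_mul, one_mul]
    _ ≤ (g T + g (-T)) * (b - a) := by linarith [hside T, hside (-T)]

lemma integral_add_mul_I_eq_of_strip {H : ℂ → ℂ} {a b : ℝ} (hab : a ≤ b)
    (hcont : ContinuousOn H {z | a ≤ z.im ∧ z.im ≤ b})
    (hdiff : DifferentiableOn ℂ H {z | a < z.im ∧ z.im < b}) {g : ℝ → ℝ} (hg : Integrable g)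
    (hg0 : Tendsto g (cocompact ℝ) (𝓝 0))
    (hle : ∀ x y : ℝ, a ≤ y → y ≤ b → ‖H (x + y * I)‖ ≤ g x) :
    ∫ x : ℝ, H (x + a * I) = ∫ x : ℝ, H (x + b * I) := by
  have hint (y : ℝ) (hay : a ≤ y) (hyb : y ≤ b) : Integrable fun x : ℝ ↦ H (x + y * I) :=
    hg.mono' (hcont.comp_continuous (by fun_prop) (by simp [hay, hyb])).aestronglyMeasurable
      (ae_of_all _ fun x ↦ hle x y hay hyb)
  have hlim (y : ℝ) (hay : a ≤ y) (hyb : y ≤ b) :=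
    intervalIntegral_tendsto_integral (hint y hay hyb) tendsto_neg_atTop_atBot tendsto_id
  have hbound : Tendsto (fun T ↦ (g T + g (-T)) * (b - a)) atTop (𝓝 0) := by
    simpa using ((hg0.mono_left atTop_le_cocompact).add
      ((hg0.mono_left atBot_le_cocompact).comp tendsto_neg_atTop_atBot)).mul_const (b - a)
  exact sub_eq_zero.1 <| tendsto_nhds_unique ((hlim a le_rfl hab).sub (hlim b hab le_rfl)) <|
    squeeze_zero_norm (norm_integral_sub_integral_le_of_strip hab hcont hdiff hle) hbound

lemma integral_exp_smul_comp_exp {E : Type*} [NormedAddCommGroup E] [NormedSpace ℝ E]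
    (f : ℝ → E) : ∫ x : ℝ, Real.exp x • f (Real.exp x) = ∫ s in Ioi 0, f s := by
  simpa [Real.range_exp, abs_of_pos (Real.exp_pos _)] using
    (integral_image_eq_integral_abs_deriv_smul MeasurableSet.univ
      (fun x _ ↦ (Real.hasDerivAt_exp x).hasDerivWithinAt) Real.exp_injective.injOn f).symm

lemma integrable_exp_mul_comp_exp {g : ℝ → ℝ} (hg : IntegrableOn g (Ioi 0)) :
    Integrable fun x ↦ Real.exp x * g (Real.exp x) := by
  have h := (integrableOn_image_iff_integrableOn_abs_deriv_smul (s := univ) MeasurableSet.univ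
    (fun x _ ↦ (Real.hasDerivAt_exp x).hasDerivWithinAt) Real.exp_injective.injOn g).1
    (by rwa [image_univ, Real.range_exp])
  simpa [abs_of_pos (Real.exp_pos _)] using h

/- In the logarithmic coordinate `w = exp z` rays become horizontal lines, so rotating a ray is
shifting a line. -/
lemma integral_ray_eq_integral_ray {F : ℂ → ℂ} {α β : ℝ} (hαβ : α ≤ β)
    (hdiff : ∀ s : ℝ, 0 < s → ∀ θ ∈ Icc α β, DifferentiableAt ℂ F (s * Complex.exp (θ * I)))
    {g : ℝ → ℝ} (hg : IntegrableOn g (Ioi 0))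
    (hg_zero : Tendsto (fun s ↦ s * g s) (𝓝[>] 0) (𝓝 0))
    (hg_top : Tendsto (fun s ↦ s * g s) atTop (𝓝 0))
    (hle : ∀ s : ℝ, 0 < s → ∀ θ ∈ Icc α β, ‖F (s * Complex.exp (θ * I))‖ ≤ g s) :
    Complex.exp (α * I) * ∫ s in Ioi (0 : ℝ), F (s * Complex.exp (α * I)) =
      Complex.exp (β * I) * ∫ s in Ioi (0 : ℝ), F (s * Complex.exp (β * I)) := by
  have hexp (x y : ℝ) : Complex.exp (x + y * I) = (Real.exp x : ℝ) * Complex.exp (y * I) := by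
    rw [Complex.exp_add, Complex.ofReal_exp]
  have hdiffH : ∀ z ∈ {z : ℂ | α ≤ z.im ∧ z.im ≤ β},
      DifferentiableAt ℂ (fun z ↦ Complex.exp z * F (Complex.exp z)) z := fun z hz ↦ by
    have hF := hdiff _ (Real.exp_pos z.re) z.im hz
    rw [← hexp, Complex.re_add_im] at hF
    exact Complex.differentiableAt_exp.mul (hF.comp z Complex.differentiableAt_exp)
  have hshift := integral_add_mul_I_eq_of_strip hαβ
    (H := fun z ↦ Complex.exp z * F (Complex.exp z))
    (fun z hz ↦ (hdiffH z hz).continuousAt.continuousWithinAt)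
    (fun z hz ↦ (hdiffH z ⟨hz.1.le, hz.2.le⟩).differentiableWithinAt)
    (integrable_exp_mul_comp_exp hg)
    (by
      rw [cocompact_eq_atBot_atTop]
      exact (hg_zero.comp Real.tendsto_exp_atBot_nhdsGT).sup (hg_top.comp Real.tendsto_exp_atTop))
    (fun x y hαy hyβ ↦ by
      rw [norm_mul, Complex.norm_exp, hexp]
      gcongr
      · simp
      · exact hle _ (Real.exp_pos x) y ⟨hαy, hyβ⟩)
  have hline (y : ℝ) : ∫ x : ℝ, Complex.exp (x + y * I) * F (Complex.exp (x + y * I)) =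
      Complex.exp (y * I) * ∫ s in Ioi (0 : ℝ), F (s * Complex.exp (y * I)) := by
    rw [← integral_exp_smul_comp_exp, ← integral_const_mul]
    congr with x
    rw [hexp, Complex.real_smul]
    ring
  simpa only [hline] using hshift

end ContourShift

section RpowExp

lemma tendsto_rpow_mul_exp_neg_mul_rpow_nhdsGT_zero {p q b : ℝ} (hp : 0 < p) (hq : 0 < q) :
    Tendsto (fun s ↦ s ^ p * Real.exp (-b * s ^ q)) (𝓝[>] 0) (𝓝 0) := by
  have hcont : Continuous fun s : ℝ ↦ s ^ p * Real.exp (-b * s ^ q) :=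
    (Real.continuous_rpow_const hp.le).mul
      ((continuous_const.mul (Real.continuous_rpow_const hq.le)).rexp)
  simpa [Real.zero_rpow hp.ne'] using (hcont.tendsto 0).mono_left nhdsWithin_le_nhds

lemma tendsto_rpow_mul_exp_neg_mul_rpow_atTop (p : ℝ) {q b : ℝ} (hq : 0 < q) (hb : 0 < b) :
    Tendsto (fun s ↦ s ^ p * Real.exp (-b * s ^ q)) atTop (𝓝 0) := by
  refine ((tendsto_rpow_mul_exp_neg_mul_atTop_nhds_zero (p / q) b hb).comp
    (tendsto_rpow_atTop hq)).congr' ?_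
  filter_upwards [eventually_gt_atTop 0] with s hs
  rw [Function.comp_apply, ← Real.rpow_mul hs.le, mul_div_cancel₀ _ hq.ne']

lemma integral_ray_eq_integral_ray_of_le_rpow_mul_exp {F : ℂ → ℂ} {α β : ℝ} (hαβ : α ≤ β)
    (hdiff : ∀ s : ℝ, 0 < s → ∀ θ ∈ Icc α β, DifferentiableAt ℂ F (s * Complex.exp (θ * I)))
    {p q b : ℝ} (hp : -1 < p) (hq : 0 < q) (hb : 0 < b)
    (hle : ∀ s : ℝ, 0 < s → ∀ θ ∈ Icc α β,
      ‖F (s * Complex.exp (θ * I))‖ ≤ s ^ p * Real.exp (-b * s ^ q)) :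
    Complex.exp (α * I) * ∫ s in Ioi (0 : ℝ), F (s * Complex.exp (α * I)) =
      Complex.exp (β * I) * ∫ s in Ioi (0 : ℝ), F (s * Complex.exp (β * I)) := by
  have hmul : ∀ s : ℝ, 0 < s →
      s ^ (p + 1) * Real.exp (-b * s ^ q) = s * (s ^ p * Real.exp (-b * s ^ q)) := fun s hs ↦ by
    rw [Real.rpow_add_one hs.ne']; ring
  refine integral_ray_eq_integral_ray hαβ hdiff (integrableOn_rpow_mul_exp_neg_mul_rpow hp hq hb)
    ?_ ?_ hle
  · refine (tendsto_rpow_mul_exp_neg_mul_rpow_nhdsGT_zero (p := p + 1) (b := b) (by linarith)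
      hq).congr' ?_
    filter_upwards [self_mem_nhdsWithin] with s hs using hmul s hs
  · refine (tendsto_rpow_mul_exp_neg_mul_rpow_atTop (p + 1) hq hb).congr' ?_
    filter_upwards [eventually_gt_atTop 0] with s hs using hmul s hs

lemma integrable_of_even {E : Type*} [NormedAddCommGroup E] {f : ℝ → E} (hf : Function.Even f)
    (h : IntegrableOn f (Ioi 0)) : Integrable f := by
  have hneg : IntegrableOn f (Iio 0) := by
    simpa [Function.comp_def, hf _] using
      ((Measure.measurePreserving_neg (volume : Measure ℝ)).integrableOn_comp_preimage
        (Homeomorph.neg ℝ).measurableEmbedding (f := f) (s := Ioi 0)).2 h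
  rw [← integrableOn_univ, ← Iio_union_Ici (a := (0 : ℝ))]
  exact hneg.union ((integrableOn_Ici_iff_integrableOn_Ioi (by finiteness)).2 h)

lemma integrable_exp_neg_mul_abs_rpow {b q : ℝ} (hb : 0 < b) (hq : 0 < q) :
    Integrable fun u : ℝ ↦ Real.exp (-b * |u| ^ q) := by
  refine integrable_of_even (fun u ↦ by rw [abs_neg])
    ((integrableOn_rpow_mul_exp_neg_mul_rpow (s := 0) (by norm_num) hq hb).congr_fun
      (fun u hu ↦ ?_) measurableSet_Ioi)
  simp [abs_of_pos (mem_Ioi.1 hu)]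

lemma tendsto_exp_neg_mul_abs_rpow_cocompact {b q : ℝ} (hb : 0 < b) (hq : 0 < q) :
    Tendsto (fun u : ℝ ↦ Real.exp (-b * |u| ^ q)) (cocompact ℝ) (𝓝 0) :=
  Real.tendsto_exp_atBot.comp <| ((tendsto_rpow_atTop hq).comp
    tendsto_norm_cocompact_atTop).const_mul_atTop_of_neg (neg_neg_of_pos hb)

end RpowExp

section DensityOfCharFun

lemma charFun_withDensity_ofReal {f : ℝ → ℝ} (hf : Measurable f) (u : ℝ) :
    charFun (volume.withDensity fun x ↦ ENNReal.ofReal (f x)) u =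
      ∫ x : ℝ, ((max (f x) 0 : ℝ) : ℂ) * Complex.exp (u * x * I) := by
  rw [charFun_apply_real, integral_withDensity_eq_integral_toReal_smul (by fun_prop) (by simp)]
  simp only [ENNReal.toReal_ofReal', Complex.real_smul]

lemma charFun_add_measure (m ν : Measure ℝ) [IsFiniteMeasure m] [IsFiniteMeasure ν] (u : ℝ) :
    charFun (m + ν) u = charFun m u + charFun ν u := by
  have hint (ρ : Measure ℝ) [IsFiniteMeasure ρ] :
      Integrable (fun x : ℝ ↦ Complex.exp (u * x * I)) ρ :=
    (integrable_const (1 : ℝ)).mono' (by fun_prop) (ae_of_all _ fun x ↦ by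
      rw [← Complex.ofReal_mul, Complex.norm_exp_ofReal_mul_I])
  simp only [charFun_apply_real, integral_add_measure (hint m) (hint ν)]

lemma add_withDensity_neg_eq_withDensity_of_charFun_eq {m : Measure ℝ} [IsFiniteMeasure m]
    {f : ℝ → ℝ} (hfm : Measurable f) (hf : Integrable f)
    (hchar : ∀ u, charFun m u = ∫ x : ℝ, (f x : ℂ) * Complex.exp (u * x * I)) :
    m + volume.withDensity (fun x ↦ ENNReal.ofReal (-f x)) =
      volume.withDensity fun x ↦ ENNReal.ofReal (f x) := by
  have := isFiniteMeasure_withDensity_ofReal hf.2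
  have := isFiniteMeasure_withDensity_ofReal hf.neg.2
  refine Measure.ext_of_charFun (funext fun u ↦ ?_)
  have hint {h : ℝ → ℝ} (hh : Integrable h) :
      Integrable fun x : ℝ ↦ (h x : ℂ) * Complex.exp (u * x * I) :=
    hh.ofReal.mul_bdd (c := 1) (by fun_prop) (ae_of_all _ fun x ↦ by
      rw [← Complex.ofReal_mul, Complex.norm_exp_ofReal_mul_I])
  have hneg : Integrable fun x ↦ max (-f x) 0 := hf.neg.pos_part
  rw [charFun_add_measure, hchar, charFun_withDensity_ofReal hfm,
    charFun_withDensity_ofReal (f := fun x ↦ -f x) hfm.neg, ← integral_add (hint hf) (hint hneg)]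
  congr with x
  rw [← add_mul, ← Complex.ofReal_add]
  congr 2
  rcases le_total 0 (f x) with h | h <;> simp [h]

lemma ae_nonneg_of_charFun_eq_integral {m : Measure ℝ} [IsFiniteMeasure m]
    {f : ℝ → ℝ} (hfm : Measurable f) (hf : Integrable f)
    (hchar : ∀ u, charFun m u = ∫ x : ℝ, (f x : ℂ) * Complex.exp (u * x * I)) :
    0 ≤ᵐ[volume] f := by
  have hzero : ∫⁻ x in {x | f x < 0}, ENNReal.ofReal (-f x) = 0 := by
    have hS : MeasurableSet {x | f x < 0} := hfm measurableSet_Iio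
    have hpos : ∫⁻ x in {x | f x < 0}, ENNReal.ofReal (f x) = 0 :=
      (setLIntegral_congr_fun hS fun x hx ↦ ENNReal.ofReal_of_nonpos (le_of_lt hx)).trans
        lintegral_zero
    rw [← withDensity_apply _ hS] at hpos ⊢
    rw [← add_withDensity_neg_eq_withDensity_of_charFun_eq hfm hf hchar, Measure.add_apply] at hpos
    exact (add_eq_zero.1 hpos).2
  rw [lintegral_eq_zero_iff (by fun_prop)] at hzero
  filter_upwards [(ae_restrict_iff' (hfm measurableSet_Iio)).1 hzero] with x hx
  by_contra! hneg
  exact hneg.not_ge (by simpa using hx hneg)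

lemma eq_withDensity_of_charFun_eq_integral {m : Measure ℝ} [IsFiniteMeasure m]
    {f : ℝ → ℝ} (hfm : Measurable f) (hf : Integrable f)
    (hchar : ∀ u, charFun m u = ∫ x : ℝ, (f x : ℂ) * Complex.exp (u * x * I)) :
    m = volume.withDensity fun x ↦ ENNReal.ofReal (f x) := by
  have hneg : (fun x ↦ ENNReal.ofReal (-f x)) =ᵐ[volume] 0 := by
    filter_upwards [ae_nonneg_of_charFun_eq_integral hfm hf hchar] with x hx
    simpa using hx
  rw [← add_withDensity_neg_eq_withDensity_of_charFun_eq hfm hf hchar,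
    withDensity_congr_ae hneg, withDensity_zero, add_zero]

end DensityOfCharFun

section HalfPlanePower

lemma continuousOn_cpow_of_re_nonneg {Y : ℝ} (hY : 0 < Y) :
    ContinuousOn (fun z : ℂ ↦ z ^ (Y : ℂ)) {z | 0 ≤ z.re} := by
  intro z hz
  refine ContinuousAt.continuousWithinAt ?_
  rcases eq_or_ne z 0 with rfl | hz0
  · exact (Complex.continuousAt_cpow_zero_of_re_pos (by simpa)).comp
      (f := fun z : ℂ ↦ (z, (Y : ℂ))) (by fun_prop)
  · refine continuousAt_cpow_const (Complex.mem_slitPlane_iff.2 ?_)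
    rcases (mem_ofPred.1 hz).lt_or_eq with hre | hre
    · exact .inl hre
    · exact .inr fun him ↦ hz0 (Complex.ext hre.symm him)

lemma cpow_ofReal_eq_norm_mul (z : ℂ) (Y : ℝ) :
    z ^ (Y : ℂ) = (‖z‖ ^ Y : ℝ) * (Real.cos (z.arg * Y) + I * Real.sin (z.arg * Y)) := by
  rw [← Complex.re_add_im (z ^ (Y : ℂ)), Complex.cpow_ofReal_re, Complex.cpow_ofReal_im]
  push_cast
  ring

lemma neg_I_mul_cpow {Y : ℝ} (hY : 0 < Y) (u : ℝ) :
    (-(I * u)) ^ (Y : ℂ) = (|u| ^ Y : ℝ) *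
      (Real.cos (π * Y / 2) - I * Real.sign u * Real.sin (π * Y / 2)) := by
  rcases eq_or_ne u 0 with rfl | hu
  · simp [Complex.zero_cpow (Complex.ofReal_ne_zero.2 hY.ne'), Real.zero_rpow hY.ne']
  have hnorm : ‖-(I * u)‖ = |u| := by simp
  rw [cpow_ofReal_eq_norm_mul, hnorm]
  rcases lt_or_gt_of_ne hu with hneg | hpos
  · have harg : (-(I * u)).arg = π / 2 := by
      rw [Complex.arg_eq_pi_div_two_iff]; simpa
    rw [harg, Real.sign_of_neg hneg, show π / 2 * Y = π * Y / 2 by ring]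
    push_cast; ring
  · have harg : (-(I * u)).arg = -(π / 2) := by
      rw [Complex.arg_eq_neg_pi_div_two_iff]; simpa
    rw [harg, Real.sign_of_pos hpos, show -(π / 2) * Y = -(π * Y / 2) by ring, Real.cos_neg,
      Real.sin_neg]
    push_cast; ring

lemma cos_pi_mul_div_two_neg {Y : ℝ} (h1 : 1 < Y) (h2 : Y < 2) : Real.cos (π * Y / 2) < 0 :=
  Real.cos_neg_of_pi_div_two_lt_of_lt (by nlinarith [Real.pi_pos]) (by nlinarith [Real.pi_pos])

/- Jordan's inequality bounds the angle between `z` and the imaginary axis by a multiple of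
`z.re / ‖z‖`. -/
lemma re_cpow_le {z : ℂ} (hz : 0 ≤ z.re) {Y : ℝ} (hY : 0 < Y) :
    (z ^ (Y : ℂ)).re ≤
      Real.cos (π * Y / 2) * ‖z‖ ^ Y + π * Y / 2 * ‖z‖ ^ (Y - 1) * z.re := by
  rcases eq_or_ne z 0 with rfl | hz0
  · simp [Complex.zero_cpow (Complex.ofReal_ne_zero.2 hY.ne'), Real.zero_rpow hY.ne']
  have hnorm : 0 < ‖z‖ := norm_pos_iff.2 hz0
  have harg : |z.arg| ≤ π / 2 := Complex.abs_arg_le_pi_div_two_iff.2 hz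
  have hjordan : π / 2 - |z.arg| ≤ π / 2 * Real.cos z.arg := by
    have h := Real.one_sub_mul_le_cos (abs_nonneg z.arg) harg
    rw [Real.cos_abs] at h
    calc π / 2 - |z.arg| = π / 2 * (1 - 2 / π * |z.arg|) := by field_simp
      _ ≤ _ := by gcongr
  have hcos : Real.cos (z.arg * Y) ≤ Real.cos (π * Y / 2) + π * Y / 2 * Real.cos z.arg := by
    have h := (le_abs_self _).trans (Real.abs_cos_sub_cos_le (|z.arg| * Y) (π * Y / 2))
    rw [show Real.cos (|z.arg| * Y) = Real.cos (z.arg * Y) by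
      rw [← Real.cos_abs (z.arg * Y), abs_mul, abs_of_pos hY],
      show |z.arg| * Y - π * Y / 2 = -((π / 2 - |z.arg|) * Y) by ring, abs_neg,
      abs_of_nonneg (mul_nonneg (sub_nonneg.2 harg) hY.le)] at h
    nlinarith
  calc (z ^ (Y : ℂ)).re = ‖z‖ ^ Y * Real.cos (z.arg * Y) := Complex.cpow_ofReal_re z Y
    _ ≤ ‖z‖ ^ Y * (Real.cos (π * Y / 2) + π * Y / 2 * Real.cos z.arg) := by gcongr
    _ = Real.cos (π * Y / 2) * ‖z‖ ^ Y +
        π * Y / 2 * ‖z‖ ^ (Y - 1) * (‖z‖ * Real.cos z.arg) := by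
      rw [Real.rpow_sub_one hnorm.ne']; field_simp
    _ = _ := by rw [Complex.norm_mul_cos_arg]

end HalfPlanePower

section StableDensity

/-- The integrand `exp (x z + k z ^ Y)` of the inversion integral of the one-sided stable law whose
Laplace transform at `z` is `exp (k z ^ Y)`. -/
noncomputable def stableIntegrand (k Y x : ℝ) (z : ℂ) : ℂ :=
  Complex.exp (x * z + k * z ^ (Y : ℂ))

/-- The density of the totally positively skewed, centered, strictly `Y`-stable law whose Laplace
transform at `z` is `exp (k z ^ Y)`. The integral is real, see
`integral_stableIntegrand_eq_two_mul_re`. -/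
noncomputable def stableDensity (k Y x : ℝ) : ℝ :=
  (∫ u : ℝ, stableIntegrand k Y x (-(I * u))).re / (2 * π)

variable {k Y : ℝ}

lemma exists_re_cpow_le (h1 : 1 < Y) (h2 : Y < 2) (L : ℝ) :
    ∃ K, ∀ z : ℂ, 0 ≤ z.re → z.re ≤ L →
      (z ^ (Y : ℂ)).re ≤ Real.cos (π * Y / 2) / 2 * |z.im| ^ Y + K := by
  have hq : Real.cos (π * Y / 2) < 0 := cos_pi_mul_div_two_neg h1 h2
  set q := Real.cos (π * Y / 2)
  set R := π * Y * L / -q with hR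
  refine ⟨π * Y / 2 * |R| ^ (Y - 1) * |L|, fun z hz hzL ↦ ?_⟩
  have hterm : q / 2 * ‖z‖ ^ Y + π * Y / 2 * ‖z‖ ^ (Y - 1) * L ≤
      π * Y / 2 * |R| ^ (Y - 1) * |L| := by
    have hfactor : q / 2 * ‖z‖ ^ Y + π * Y / 2 * ‖z‖ ^ (Y - 1) * L =
        ‖z‖ ^ (Y - 1) * (q / 2 * (‖z‖ - R)) := by
      rcases eq_or_ne z 0 with rfl | hz0
      · simp [Real.zero_rpow (by linarith : Y ≠ 0), Real.zero_rpow (by linarith : Y - 1 ≠ 0)]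
      · rw [Real.rpow_sub_one (norm_ne_zero_iff.2 hz0), hR]
        field_simp [norm_ne_zero_iff.2 hz0, hq.ne]
        ring
    rcases le_total R ‖z‖ with hRz | hzR
    · rw [hfactor]
      refine (mul_nonpos_of_nonneg_of_nonpos (by positivity) ?_).trans (by positivity)
      nlinarith
    · have hqz : q / 2 * ‖z‖ ^ Y ≤ 0 := mul_nonpos_of_nonpos_of_nonneg (by linarith) (by positivity)
      have : π * Y / 2 * ‖z‖ ^ (Y - 1) * L ≤ π * Y / 2 * |R| ^ (Y - 1) * |L| := by
        gcongr
        · linarith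
        · exact hzR.trans (le_abs_self R)
        · exact le_abs_self L
      linarith
  have him : |z.im| ^ Y ≤ ‖z‖ ^ Y := by
    gcongr
    exact Complex.abs_im_le_norm z
  have hre : π * Y / 2 * ‖z‖ ^ (Y - 1) * z.re ≤ π * Y / 2 * ‖z‖ ^ (Y - 1) * L := by gcongr
  nlinarith [re_cpow_le hz (by linarith : 0 < Y)]

lemma exists_norm_stableIntegrand_le (hk : 0 < k) (h1 : 1 < Y) (h2 : Y < 2) (L : ℝ) :
    ∃ κ > 0, ∃ K > 0, ∀ (x : ℝ) (z : ℂ), 0 ≤ z.re → z.re ≤ L →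
      ‖stableIntegrand k Y x z‖ ≤ Real.exp (x * z.re) * (K * Real.exp (-κ * |z.im| ^ Y)) := by
  obtain ⟨K, hK⟩ := exists_re_cpow_le h1 h2 L
  refine ⟨-(k * Real.cos (π * Y / 2) / 2), ?_, Real.exp (k * K), Real.exp_pos _,
    fun x z hz hzL ↦ ?_⟩
  · nlinarith [cos_pi_mul_div_two_neg h1 h2]
  · rw [stableIntegrand, Complex.norm_exp, ← Real.exp_add, ← Real.exp_add]
    gcongr
    simp only [Complex.add_re, Complex.re_ofReal_mul]
    nlinarith [hK z hz hzL]

lemma continuousOn_stableIntegrand (hY : 0 < Y) (x : ℝ) :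
    ContinuousOn (stableIntegrand k Y x) {z | 0 ≤ z.re} :=
  ((by fun_prop : Continuous fun z : ℂ ↦ x * z).continuousOn.add
    (continuousOn_const.mul (continuousOn_cpow_of_re_nonneg hY))).cexp

lemma differentiableAt_stableIntegrand (x : ℝ) {z : ℂ} (hz : z ∈ Complex.slitPlane) :
    DifferentiableAt ℂ (stableIntegrand k Y x) z :=
  ((differentiableAt_id.const_mul _).add ((differentiableAt_id.cpow_const hz).const_mul _)).cexp

lemma integrable_stableIntegrand_line (hk : 0 < k) (h1 : 1 < Y) (h2 : Y < 2) {s : ℝ} (hs : 0 ≤ s)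
    (x : ℝ) : Integrable fun u : ℝ ↦ stableIntegrand k Y x (s - I * u) := by
  obtain ⟨κ, hκ, K, -, hle⟩ := exists_norm_stableIntegrand_le hk h1 h2 s
  have hY : 0 < Y := by linarith
  refine (((integrable_exp_neg_mul_abs_rpow hκ hY).const_mul K).const_mul
    (Real.exp (x * s))).mono' ?_ (ae_of_all _ fun u ↦ ?_)
  · exact ((continuousOn_stableIntegrand hY x).comp_continuous (by fun_prop)
      (by simpa)).aestronglyMeasurable
  · simpa using hle x (s - I * u) (by simpa) (by simp)

lemma integral_stableIntegrand_line (hk : 0 < k) (h1 : 1 < Y) (h2 : Y < 2) {s : ℝ} (hs : 0 ≤ s)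
    (x : ℝ) :
    ∫ u : ℝ, stableIntegrand k Y x (-(I * u)) = ∫ u : ℝ, stableIntegrand k Y x (s - I * u) := by
  obtain ⟨κ, hκ, K, hK, hle⟩ := exists_norm_stableIntegrand_le hk h1 h2 s
  have hY : 0 < Y := by linarith
  have hline (u y : ℝ) : -I * (u + y * I) = y - I * u := by
    linear_combination (-y : ℂ) * Complex.I_mul_I
  have hshift := integral_add_mul_I_eq_of_strip hs
    (H := fun z ↦ stableIntegrand k Y x (-I * z))
    ((continuousOn_stableIntegrand hY x).comp (by fun_prop)
      fun z hz ↦ by simpa using hz.1)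
    (fun z hz ↦ ((differentiableAt_stableIntegrand x (.inl (by simpa using hz.1))).comp z
      (by fun_prop)).differentiableWithinAt)
    (((integrable_exp_neg_mul_abs_rpow hκ hY).const_mul K).const_mul (Real.exp (|x| * s)))
    (by
      simpa only [mul_zero] using ((tendsto_exp_neg_mul_abs_rpow_cocompact hκ hY).const_mul
        K).const_mul (Real.exp (|x| * s)))
    (fun u y hy0 hys ↦ by
      have h := hle x (y - I * u) (by simpa) (by simpa)
      rw [hline]
      refine h.trans ?_
      simp only [Complex.sub_re, Complex.ofReal_re, Complex.sub_im, Complex.ofReal_im,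
        Complex.mul_re, Complex.I_re, Complex.mul_im, Complex.I_im, zero_mul, one_mul, mul_zero,
        sub_zero, zero_add, zero_sub, abs_neg]
      gcongr
      exact le_abs_self x)
  simpa only [hline, Complex.ofReal_zero, zero_mul, add_zero, neg_mul] using hshift

lemma stableIntegrand_conj (hY : 0 < Y) (x u : ℝ) :
    stableIntegrand k Y x (-(I * (-u : ℝ))) =
      (starRingEnd ℂ) (stableIntegrand k Y x (-(I * u))) := by
  simp only [stableIntegrand, ← Complex.exp_conj, neg_I_mul_cpow hY, map_add, map_mul, map_sub,
    map_neg, Complex.conj_ofReal, Complex.conj_I, abs_neg, Real.sign_neg]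
  push_cast
  ring_nf

lemma integral_stableIntegrand_eq_two_mul_re (hk : 0 < k) (h1 : 1 < Y) (h2 : Y < 2) (x : ℝ) :
    ∫ u : ℝ, stableIntegrand k Y x (-(I * u)) =
      ((2 * (∫ u in Ioi (0 : ℝ), stableIntegrand k Y x (-(I * u))).re : ℝ) : ℂ) := by
  have hint : Integrable fun u : ℝ ↦ stableIntegrand k Y x (-(I * u)) := by
    simpa using integrable_stableIntegrand_line hk h1 h2 le_rfl x
  have hneg := integral_comp_neg_Ioi 0 fun u : ℝ ↦ stableIntegrand k Y x (-(I * u))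
  simp only [stableIntegrand_conj (by linarith : 0 < Y), neg_zero, integral_conj] at hneg
  rw [← intervalIntegral.integral_Iic_add_Ioi (b := 0) hint.integrableOn hint.integrableOn, ← hneg,
    add_comm, Complex.add_conj]

lemma ofReal_stableDensity (hk : 0 < k) (h1 : 1 < Y) (h2 : Y < 2) (x : ℝ) :
    (stableDensity k Y x : ℂ) = (∫ u : ℝ, stableIntegrand k Y x (-(I * u))) / (2 * π) := by
  rw [stableDensity, integral_stableIntegrand_eq_two_mul_re hk h1 h2, Complex.ofReal_re]
  push_cast
  rfl

lemma continuous_stableDensity (hk : 0 < k) (h1 : 1 < Y) (h2 : Y < 2) :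
    Continuous (stableDensity k Y) := by
  obtain ⟨κ, hκ, K, -, hle⟩ := exists_norm_stableIntegrand_le hk h1 h2 0
  refine (Complex.continuous_re.comp (continuous_of_dominated
    (bound := fun u ↦ K * Real.exp (-κ * |u| ^ Y)) (fun x ↦ ?_)
    (fun x ↦ ae_of_all _ fun u ↦ ?_) ?_ (ae_of_all _ fun u ↦ ?_))).div_const _
  · simpa using (integrable_stableIntegrand_line hk h1 h2 le_rfl x).aestronglyMeasurable
  · simpa using hle x (-(I * u)) (by simp) (by simp)
  · exact (integrable_exp_neg_mul_abs_rpow hκ (by linarith)).const_mul K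
  · unfold stableIntegrand; fun_prop

/- Moving the line of integration far into the right half-plane makes the density decay faster than
every exponential at `-∞`. -/
lemma exists_abs_stableDensity_le_exp (hk : 0 < k) (h1 : 1 < Y) (h2 : Y < 2) {s : ℝ}
    (hs : 0 ≤ s) : ∃ B, ∀ x, |stableDensity k Y x| ≤ B * Real.exp (s * x) := by
  obtain ⟨κ, hκ, K, -, hle⟩ := exists_norm_stableIntegrand_le hk h1 h2 s
  have hint : Integrable fun u : ℝ ↦ K * Real.exp (-κ * |u| ^ Y) :=
    (integrable_exp_neg_mul_abs_rpow hκ (by linarith)).const_mul K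
  refine ⟨(∫ u : ℝ, K * Real.exp (-κ * |u| ^ Y)) / (2 * π), fun x ↦ ?_⟩
  rw [stableDensity, abs_div, abs_of_pos Real.two_pi_pos, div_mul_eq_mul_div]
  gcongr
  calc |(∫ u : ℝ, stableIntegrand k Y x (-(I * u))).re|
      ≤ ‖∫ u : ℝ, stableIntegrand k Y x (s - I * u)‖ := by
        rw [integral_stableIntegrand_line hk h1 h2 hs]
        exact Complex.abs_re_le_norm _
    _ ≤ ∫ u : ℝ, K * Real.exp (-κ * |u| ^ Y) * Real.exp (s * x) := by
        refine norm_integral_le_of_norm_le (hint.mul_const _) (ae_of_all _ fun u ↦ ?_)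
        simpa [mul_comm] using hle x (s - I * u) (by simpa) (by simp)
    _ = _ := integral_mul_const _ _

end StableDensity

section StableDensityTail

lemma norm_exp_sub_one_sub_id_le_of_re_nonpos {w : ℂ} (hw : w.re ≤ 0) :
    ‖Complex.exp w - 1 - w‖ ≤ 3 * ‖w‖ ^ 2 := by
  rcases le_or_gt ‖w‖ 1 with hsmall | hlarge
  · nlinarith [Complex.norm_exp_sub_one_sub_id_le hsmall, sq_nonneg ‖w‖]
  · have hexp : ‖Complex.exp w‖ ≤ 1 := by
      rw [Complex.norm_exp]; exact Real.exp_le_one_iff.2 hw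
    calc ‖Complex.exp w - 1 - w‖ ≤ ‖Complex.exp w‖ + ‖(1 : ℂ)‖ + ‖w‖ :=
          (norm_sub_le _ _).trans (by gcongr; exact norm_sub_le _ _)
      _ ≤ 3 * ‖w‖ ^ 2 := by rw [norm_one]; nlinarith

lemma norm_mul_exp_ofReal_mul_I {s : ℝ} (hs : 0 ≤ s) (θ : ℝ) :
    ‖(s : ℂ) * Complex.exp (θ * I)‖ = s := by
  rw [norm_mul, Complex.norm_exp_ofReal_mul_I, mul_one, Complex.norm_of_nonneg hs]

lemma mul_exp_ofReal_mul_I_re (s θ : ℝ) :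
    ((s : ℂ) * Complex.exp (θ * I)).re = s * Real.cos θ := by
  rw [Complex.re_ofReal_mul, Complex.exp_ofReal_mul_I_re]

lemma arg_mul_exp_ofReal_mul_I {s θ : ℝ} (hs : 0 < s) (hθ : θ ∈ Ioc (-π) π) :
    ((s : ℂ) * Complex.exp (θ * I)).arg = θ := by
  rw [Complex.arg_real_mul _ hs, Complex.exp_mul_I, Complex.arg_cos_add_sin_mul_I hθ]

lemma mul_exp_cpow_ofReal {s θ : ℝ} (hs : 0 < s) (hθ : θ ∈ Ioc (-π) π) (a : ℝ) :
    ((s : ℂ) * Complex.exp (θ * I)) ^ (a : ℂ) =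
      (s ^ a : ℝ) * Complex.exp ((θ * a : ℝ) * I) := by
  rw [cpow_ofReal_eq_norm_mul, norm_mul_exp_ofReal_mul_I hs.le, arg_mul_exp_ofReal_mul_I hs hθ,
    Complex.exp_mul_I]
  push_cast
  ring

lemma mul_exp_mem_slitPlane {s θ : ℝ} (hs : 0 < s) (hθ : θ ∈ Ioo (-π) π) :
    (s : ℂ) * Complex.exp (θ * I) ∈ Complex.slitPlane := by
  rw [Complex.mem_slitPlane_iff_arg, arg_mul_exp_ofReal_mul_I hs (Ioo_subset_Ioc_self hθ)]
  exact ⟨hθ.2.ne, mul_ne_zero (by exact_mod_cast hs.ne') (Complex.exp_ne_zero _)⟩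

lemma integral_rpow_mul_exp_neg_mul_ray {a x θ : ℝ} (ha : 0 < a) (hx : 0 < x) (hθ0 : 0 ≤ θ)
    (hθ : θ < π / 2) :
    ∫ s in Ioi (0 : ℝ), ((s ^ (a - 1) : ℝ) : ℂ) * Complex.exp (-(x * (s * Complex.exp (θ * I)))) =
      ((1 / x) ^ a * Real.Gamma a : ℝ) * Complex.exp ((-(θ * a) : ℝ) * I) := by
  have hmem {φ : ℝ} (hφ : φ ∈ Icc 0 θ) : φ ∈ Ioo (-π) π :=
    ⟨by linarith [hφ.1, Real.pi_pos], by linarith [hφ.2, Real.pi_pos]⟩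
  have hrot := integral_ray_eq_integral_ray_of_le_rpow_mul_exp hθ0
    (F := fun z ↦ z ^ ((a - 1 : ℝ) : ℂ) * Complex.exp (-(x * z)))
    (fun s hs φ hφ ↦ by
      refine DifferentiableAt.mul (differentiableAt_id.cpow_const ?_) (by fun_prop)
      exact mul_exp_mem_slitPlane hs (hmem hφ))
    (p := a - 1) (q := 1) (b := x * Real.cos θ) (by linarith) one_pos
    (mul_pos hx (Real.cos_pos_of_mem_Ioo ⟨by linarith [Real.pi_pos], hθ⟩))
    (fun s hs φ hφ ↦ by
      have hcos : Real.cos θ ≤ Real.cos φ :=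
        Real.cos_le_cos_of_nonneg_of_le_pi hφ.1 (by linarith [Real.pi_pos]) hφ.2
      rw [mul_exp_cpow_ofReal hs (Ioo_subset_Ioc_self (hmem hφ)), norm_mul,
        norm_mul_exp_ofReal_mul_I (by positivity), Complex.norm_exp, Complex.neg_re,
        Complex.re_ofReal_mul, mul_exp_ofReal_mul_I_re, Real.rpow_one]
      gcongr
      have := mul_le_mul_of_nonneg_left hcos (mul_pos hx hs).le
      linarith)
  have hgamma : ∫ s in Ioi (0 : ℝ), ((s * Complex.exp ((0 : ℝ) * I)) ^ ((a - 1 : ℝ) : ℂ) *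
      Complex.exp (-(x * (s * Complex.exp ((0 : ℝ) * I))))) =
      (((1 / x) ^ a * Real.Gamma a : ℝ) : ℂ) := by
    rw [← Real.integral_rpow_mul_exp_neg_mul_Ioi ha hx, ← integral_complex_ofReal]
    refine setIntegral_congr_fun measurableSet_Ioi fun s hs ↦ ?_
    simp [Complex.ofReal_cpow (le_of_lt hs)]
  have hray : ∫ s in Ioi (0 : ℝ), ((s * Complex.exp (θ * I)) ^ ((a - 1 : ℝ) : ℂ) *
      Complex.exp (-(x * (s * Complex.exp (θ * I))))) = Complex.exp ((θ * (a - 1) : ℝ) * I) *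
      ∫ s in Ioi (0 : ℝ), ((s ^ (a - 1) : ℝ) : ℂ) *
        Complex.exp (-(x * (s * Complex.exp (θ * I)))) := by
    rw [← integral_const_mul]
    refine setIntegral_congr_fun measurableSet_Ioi fun s hs ↦ ?_
    simp only [mul_exp_cpow_ofReal hs (Ioo_subset_Ioc_self (hmem ⟨hθ0, le_rfl⟩))]
    ring
  rw [hgamma, hray, ← mul_assoc, ← Complex.exp_add, Complex.ofReal_zero, zero_mul,
    Complex.exp_zero, one_mul, show (θ : ℂ) * I + (θ * (a - 1) : ℝ) * I = (θ * a : ℝ) * I by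
      push_cast; ring] at hrot
  rw [hrot, Complex.ofReal_neg, neg_mul, mul_right_comm, ← Complex.exp_add, add_neg_cancel,
    Complex.exp_zero, one_mul]

lemma exp_neg_three_pi_div_four_mul_I :
    Complex.exp ((-(3 * π / 4) : ℝ) * I) = -Complex.exp ((π / 4 : ℝ) * I) := by
  rw [show ((-(3 * π / 4) : ℝ) : ℂ) * I = (π / 4 : ℝ) * I - π * I by push_cast; ring,
    Complex.exp_sub, Complex.exp_pi_mul_I, div_neg, div_one]

lemma cos_neg_three_pi_div_four : Real.cos (-(3 * π / 4)) = -(√2 / 2) := by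
  rw [Real.cos_neg, ← Real.cos_pi_div_four, ← Real.cos_pi_sub]
  ring_nf

lemma norm_exp_mul_ray (x s : ℝ) :
    ‖Complex.exp (x * (s * Complex.exp ((-(3 * π / 4) : ℝ) * I)))‖ =
      Real.exp (-(x * (√2 / 2)) * s) := by
  rw [Complex.norm_exp, Complex.re_ofReal_mul, mul_exp_ofReal_mul_I_re, cos_neg_three_pi_div_four]
  ring_nf

lemma integrableOn_rpow_mul_exp_ray {a x : ℝ} (ha : 0 < a) (hx : 0 < x) :
    IntegrableOn (fun s : ℝ ↦ ((s ^ (a - 1) : ℝ) : ℂ) *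
      Complex.exp (x * (s * Complex.exp ((-(3 * π / 4) : ℝ) * I)))) (Ioi 0) := by
  refine (integrableOn_rpow_mul_exp_neg_mul_rpow (s := a - 1) (p := 1) (b := x * (√2 / 2))
    (by linarith) one_pos (by positivity)).mono' (by fun_prop) ?_
  filter_upwards [ae_restrict_mem measurableSet_Ioi] with s hs
  rw [norm_mul, norm_exp_mul_ray, Complex.norm_of_nonneg (Real.rpow_nonneg (le_of_lt hs) _),
    Real.rpow_one]

lemma re_I_mul_integral_rpow_mul_exp_ray {a x : ℝ} (ha : 0 < a) (hx : 0 < x) :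
    (I * (Complex.exp ((-(3 * π / 4) * a : ℝ) * I) * ∫ s in Ioi (0 : ℝ), ((s ^ (a - 1) : ℝ) : ℂ) *
      Complex.exp (x * (s * Complex.exp ((-(3 * π / 4) : ℝ) * I))))).re =
      (1 / x) ^ a * Real.Gamma a * Real.sin (π * a) := by
  have hray := integral_rpow_mul_exp_neg_mul_ray ha hx (θ := π / 4) (by positivity)
    (by linarith [Real.pi_pos])
  simp only [exp_neg_three_pi_div_four_mul_I, mul_neg]
  rw [hray, mul_left_comm (Complex.exp _), ← Complex.exp_add,
    show ((-(3 * π / 4) * a : ℝ) : ℂ) * I + (-(π / 4 * a) : ℝ) * I = (-(π * a) : ℝ) * I by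
      push_cast; ring, Complex.I_mul_re, Complex.im_ofReal_mul, Complex.exp_ofReal_mul_I_im,
    Real.sin_neg]
  ring

lemma cos_mul_neg_of_mem_Icc {Y θ : ℝ} (h1 : 1 < Y) (h2 : Y < 2)
    (hθ : θ ∈ Icc (-(3 * π / 4)) (-(π / 2))) : Real.cos (θ * Y) < 0 := by
  rw [← Real.cos_neg]
  apply Real.cos_neg_of_pi_div_two_lt_of_lt <;> nlinarith [hθ.1, hθ.2, Real.pi_pos]

variable {k Y : ℝ}

lemma stableIntegrand_ray {s θ : ℝ} (hs : 0 < s) (hθ : θ ∈ Ioc (-π) π) (x : ℝ) :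
    stableIntegrand k Y x (s * Complex.exp (θ * I)) =
      Complex.exp (x * (s * Complex.exp (θ * I))) *
        Complex.exp (k * ((s ^ Y : ℝ) * Complex.exp ((θ * Y : ℝ) * I))) := by
  rw [stableIntegrand, Complex.exp_add, mul_exp_cpow_ofReal hs hθ]

lemma integral_stableIntegrand_half_line (hk : 0 < k) (h1 : 1 < Y) (h2 : Y < 2) {x : ℝ}
    (hx : 0 < x) :
    ∫ u in Ioi (0 : ℝ), stableIntegrand k Y x (-(I * u)) =
      I * (Complex.exp ((-(3 * π / 4) : ℝ) * I) * ∫ s in Ioi (0 : ℝ),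
        stableIntegrand k Y x (s * Complex.exp ((-(3 * π / 4) : ℝ) * I))) := by
  have hαβ : -(3 * π / 4) ≤ -(π / 2) := by linarith [Real.pi_pos]
  have hmem {θ : ℝ} (hθ : θ ∈ Icc (-(3 * π / 4)) (-(π / 2))) : θ ∈ Ioo (-π) π :=
    ⟨by linarith [hθ.1, Real.pi_pos], by linarith [hθ.2, Real.pi_pos]⟩
  obtain ⟨θ₀, hθ₀, hmax⟩ := isCompact_Icc.exists_isMaxOn (nonempty_Icc.2 hαβ)
    (f := fun θ ↦ Real.cos (θ * Y)) (by fun_prop)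
  rw [integral_ray_eq_integral_ray_of_le_rpow_mul_exp hαβ
    (fun s hs θ hθ ↦ differentiableAt_stableIntegrand x (mul_exp_mem_slitPlane hs (hmem hθ)))
    (p := 0) (q := Y) (b := k * -Real.cos (θ₀ * Y)) (by norm_num) (by linarith)
    (mul_pos hk (neg_pos.2 (cos_mul_neg_of_mem_Icc h1 h2 hθ₀))) (fun s hs θ hθ ↦ ?_)]
  · have hI : Complex.exp ((-(π / 2) : ℝ) * I) = -I := by
      push_cast
      rw [neg_mul, Complex.exp_neg, Complex.exp_pi_div_two_mul_I, Complex.inv_I]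
    have hneg (u : ℝ) : (u : ℂ) * -I = -(I * u) := by ring
    simp only [hI, hneg]
    rw [← mul_assoc, mul_neg, Complex.I_mul_I, neg_neg, one_mul]
  · have hcos : Real.cos θ ≤ 0 := by
      rw [← Real.cos_neg]
      exact Real.cos_nonpos_of_pi_div_two_le_of_le (by linarith [hθ.2])
        (by linarith [hθ.1, Real.pi_pos])
    rw [stableIntegrand_ray hs (Ioo_subset_Ioc_self (hmem hθ)), norm_mul, Complex.norm_exp,
      Complex.norm_exp, Complex.re_ofReal_mul, mul_exp_ofReal_mul_I_re, Complex.re_ofReal_mul,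
      mul_exp_ofReal_mul_I_re, Real.rpow_zero]
    refine mul_le_mul (Real.exp_le_one_iff.2 ?_) (Real.exp_le_exp.2 ?_) (Real.exp_nonneg _)
      zero_le_one
    · nlinarith [mul_nonneg (mul_pos hx hs).le (neg_nonneg.2 hcos)]
    · have : Real.cos (θ * Y) ≤ Real.cos (θ₀ * Y) := hmax hθ
      have := mul_le_mul_of_nonneg_left this (mul_pos hk (Real.rpow_pos_of_pos hs Y)).le
      linarith

/-- The error in replacing `exp (k z ^ Y)` by `1 + k z ^ Y` in `stableIntegrand`, at the point
`z = s exp (-3πi/4)`. -/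
noncomputable def stableRayError (k Y x s : ℝ) : ℂ :=
  stableIntegrand k Y x (s * Complex.exp ((-(3 * π / 4) : ℝ) * I)) -
    Complex.exp (x * (s * Complex.exp ((-(3 * π / 4) : ℝ) * I))) *
      (1 + k * ((s ^ Y : ℝ) * Complex.exp ((-(3 * π / 4) * Y : ℝ) * I)))

lemma norm_stableRayError_le (hk : 0 < k) (h1 : 1 < Y) (h2 : Y < 2) (x : ℝ) {s : ℝ} (hs : 0 < s) :
    ‖stableRayError k Y x s‖ ≤
      3 * k ^ 2 * (s ^ (2 * Y + 1 - 1) * Real.exp (-(x * (√2 / 2) * s))) := by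
  have hmem : -(3 * π / 4) ∈ Icc (-(3 * π / 4)) (-(π / 2)) := ⟨le_rfl, by linarith [Real.pi_pos]⟩
  rw [stableRayError]
  set w : ℂ := k * ((s ^ Y : ℝ) * Complex.exp ((-(3 * π / 4) * Y : ℝ) * I))
  have hw : w.re ≤ 0 := by
    rw [Complex.re_ofReal_mul, mul_exp_ofReal_mul_I_re]
    have := mul_pos (mul_pos hk (Real.rpow_pos_of_pos hs Y))
      (neg_pos.2 (cos_mul_neg_of_mem_Icc h1 h2 hmem))
    linarith
  have hnorm : ‖w‖ ^ 2 = k ^ 2 * s ^ (2 * Y) := by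
    rw [norm_mul, norm_mul_exp_ofReal_mul_I (by positivity), Complex.norm_of_nonneg hk.le, mul_pow,
      mul_comm 2 Y, Real.rpow_mul hs.le, Real.rpow_two]
  rw [stableIntegrand_ray hs ⟨by linarith [Real.pi_pos], by linarith [Real.pi_pos]⟩, ← mul_sub,
    ← sub_sub, norm_mul, norm_exp_mul_ray]
  calc _ ≤ Real.exp (-(x * (√2 / 2)) * s) * (3 * ‖w‖ ^ 2) := by
        gcongr
        exact norm_exp_sub_one_sub_id_le_of_re_nonpos hw
    _ = _ := by rw [hnorm]; ring_nf

lemma integrableOn_rpow_mul_exp_neg_mul {a b : ℝ} (ha : 0 < a) (hb : 0 < b) :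
    IntegrableOn (fun s ↦ s ^ (a - 1) * Real.exp (-(b * s))) (Ioi 0) := by
  simpa only [Real.rpow_one, neg_mul] using
    integrableOn_rpow_mul_exp_neg_mul_rpow (s := a - 1) (by linarith) one_pos hb

lemma integrableOn_stableRayError (hk : 0 < k) (h1 : 1 < Y) (h2 : Y < 2) {x : ℝ} (hx : 0 < x) :
    IntegrableOn (stableRayError k Y x) (Ioi 0) := by
  refine ((integrableOn_rpow_mul_exp_neg_mul (a := 2 * Y + 1) (b := x * (√2 / 2)) (by linarith)
    (by positivity)).const_mul (3 * k ^ 2)).mono' ?_ ?_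
  · refine AEStronglyMeasurable.sub (ContinuousOn.aestronglyMeasurable (fun s hs ↦ ?_)
      measurableSet_Ioi) (by fun_prop)
    exact ContinuousAt.continuousWithinAt (ContinuousAt.comp (f := fun s : ℝ ↦ (s : ℂ) * _)
      (differentiableAt_stableIntegrand x (mul_exp_mem_slitPlane hs
        ⟨by linarith [Real.pi_pos], by linarith [Real.pi_pos]⟩)).continuousAt (by fun_prop))
  · filter_upwards [ae_restrict_mem measurableSet_Ioi] with s hs
    exact norm_stableRayError_le hk h1 h2 x hs

lemma norm_integral_stableRayError_le (hk : 0 < k) (h1 : 1 < Y) (h2 : Y < 2) {x : ℝ}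
    (hx : 0 < x) :
    ‖∫ s in Ioi (0 : ℝ), stableRayError k Y x s‖ ≤
      3 * k ^ 2 * ((√2 / 2) ^ (-(2 * Y + 1)) * Real.Gamma (2 * Y + 1)) * x ^ (-(2 * Y + 1)) := by
  have hb : 0 < x * (√2 / 2) := by positivity
  calc _ ≤ ∫ s in Ioi (0 : ℝ),
        3 * k ^ 2 * (s ^ (2 * Y + 1 - 1) * Real.exp (-(x * (√2 / 2) * s))) := by
        refine norm_integral_le_of_norm_le ((integrableOn_rpow_mul_exp_neg_mul (by linarith)
          hb).const_mul _) ?_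
        filter_upwards [ae_restrict_mem measurableSet_Ioi] with s hs
        exact norm_stableRayError_le hk h1 h2 x hs
    _ = _ := by
        rw [integral_const_mul, Real.integral_rpow_mul_exp_neg_mul_Ioi (by linarith) hb, one_div,
          Real.inv_rpow hb.le, ← Real.rpow_neg hb.le, Real.mul_rpow hx.le (by positivity)]
        ring

/- On the ray at angle `-3π/4` the integrand is `exp (x z)` times `1 + k z ^ Y + O(z ^ (2 Y))`; the
term `1` contributes nothing to the real part. -/
lemma re_integral_stableIntegrand_half_line (hk : 0 < k) (h1 : 1 < Y) (h2 : Y < 2) {x : ℝ}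
    (hx : 0 < x) :
    (∫ u in Ioi (0 : ℝ), stableIntegrand k Y x (-(I * u))).re =
      k * (x ^ (-(Y + 1)) * Real.Gamma (Y + 1) * Real.sin (π * (Y + 1))) +
      (I * (Complex.exp ((-(3 * π / 4) : ℝ) * I) *
        ∫ s in Ioi (0 : ℝ), stableRayError k Y x s)).re := by
  have h0 := integrableOn_rpow_mul_exp_ray one_pos hx
  have hY := integrableOn_rpow_mul_exp_ray (by linarith : 0 < Y + 1) hx
  have hre0 := re_I_mul_integral_rpow_mul_exp_ray one_pos hx
  have hreY := re_I_mul_integral_rpow_mul_exp_ray (by linarith : 0 < Y + 1) hx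
  have herr := integrableOn_stableRayError hk h1 h2 hx
  have hexp : Complex.exp ((-(3 * π / 4) * (Y + 1) : ℝ) * I) =
      Complex.exp ((-(3 * π / 4) : ℝ) * I) * Complex.exp ((-(3 * π / 4) * Y : ℝ) * I) := by
    rw [← Complex.exp_add]; congr 1; push_cast; ring
  simp only [sub_self, Real.rpow_zero, Complex.ofReal_one, one_mul, mul_one, Real.sin_pi, mul_zero,
    add_sub_cancel_right] at h0 hY hre0 hreY
  rw [hexp] at hreY
  rw [integral_stableIntegrand_half_line hk h1 h2 hx]
  set v := Complex.exp ((-(3 * π / 4) : ℝ) * I) with hv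
  set e := Complex.exp ((-(3 * π / 4) * Y : ℝ) * I) with he
  have hsplit : ∫ s in Ioi (0 : ℝ), stableIntegrand k Y x (s * v) =
      (∫ s in Ioi (0 : ℝ), Complex.exp (x * (s * v))) +
        (k * e) * (∫ s in Ioi (0 : ℝ), ((s ^ Y : ℝ) : ℂ) * Complex.exp (x * (s * v))) +
        ∫ s in Ioi (0 : ℝ), stableRayError k Y x s := by
    rw [← integral_const_mul, ← integral_add h0 (hY.const_mul _),
      ← integral_add (h0.fun_add (hY.const_mul _)) herr]
    refine setIntegral_congr_fun measurableSet_Ioi fun s _ ↦ ?_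
    simp only [stableRayError, ← hv, ← he]
    ring
  rw [hsplit, mul_add, mul_add, mul_add, mul_add, Complex.add_re, Complex.add_re, hre0, zero_add,
    show x ^ (-(Y + 1)) = (1 / x) ^ (Y + 1) by
      rw [one_div, Real.inv_rpow hx.le, Real.rpow_neg hx.le], ← hreY, ← Complex.re_ofReal_mul]
  congr 2
  ring

lemma Gamma_neg_pos (h1 : 1 < Y) (h2 : Y < 2) : 0 < Real.Gamma (-Y) := by
  have hstep : Real.Gamma (2 - Y) = (1 - Y) * -Y * Real.Gamma (-Y) := by
    rw [show 2 - Y = (1 - Y) + 1 by ring, Real.Gamma_add_one (by linarith),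
      show 1 - Y = -Y + 1 by ring, Real.Gamma_add_one (by linarith)]
    ring
  have hpos : 0 < Real.Gamma (2 - Y) := Real.Gamma_pos_of_pos (by linarith)
  exact pos_of_mul_pos_right (hstep ▸ hpos) (by nlinarith)

lemma Gamma_neg_mul_Gamma_add_one_mul_sin (h1 : 1 < Y) (h2 : Y < 2) :
    Real.Gamma (-Y) * Real.Gamma (Y + 1) * Real.sin (π * (Y + 1)) = π := by
  have hsin : 0 < Real.sin (π * (Y - 1)) :=
    Real.sin_pos_of_pos_of_lt_pi (by nlinarith [Real.pi_pos]) (by nlinarith [Real.pi_pos])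
  have hrefl := Real.Gamma_mul_Gamma_one_sub (-Y)
  rw [sub_neg_eq_add, add_comm, mul_neg, Real.sin_neg] at hrefl
  rw [hrefl, mul_add_one, Real.sin_add_pi]
  rw [mul_sub_one, Real.sin_sub_pi] at hsin
  exact div_mul_cancel₀ _ hsin.ne'

lemma exists_abs_stableDensity_sub_le {C : ℝ} (hC : 0 < C) (h1 : 1 < Y) (h2 : Y < 2) :
    ∃ B, ∀ x, 0 < x →
      |stableDensity (C * Real.Gamma (-Y)) Y x - C * x ^ (-(Y + 1))| ≤ B * x ^ (-(2 * Y + 1)) := by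
  have hk : 0 < C * Real.Gamma (-Y) := mul_pos hC (Gamma_neg_pos h1 h2)
  set k := C * Real.Gamma (-Y) with hkdef
  refine ⟨3 * k ^ 2 * ((√2 / 2) ^ (-(2 * Y + 1)) * Real.Gamma (2 * Y + 1)) / π, fun x hx ↦ ?_⟩
  have hmain : k * (x ^ (-(Y + 1)) * Real.Gamma (Y + 1) * Real.sin (π * (Y + 1))) =
      C * π * x ^ (-(Y + 1)) := by
    rw [hkdef]
    linear_combination C * x ^ (-(Y + 1)) * Gamma_neg_mul_Gamma_add_one_mul_sin h1 h2
  have hdiff : stableDensity k Y x - C * x ^ (-(Y + 1)) =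
      (I * (Complex.exp ((-(3 * π / 4) : ℝ) * I) *
        ∫ s in Ioi (0 : ℝ), stableRayError k Y x s)).re / π := by
    rw [stableDensity, integral_stableIntegrand_eq_two_mul_re hk h1 h2, Complex.ofReal_re,
      re_integral_stableIntegrand_half_line hk h1 h2 hx, hmain]
    field_simp
    ring
  rw [hdiff, abs_div, abs_of_pos Real.pi_pos, div_mul_eq_mul_div]
  gcongr
  refine (Complex.abs_re_le_norm _).trans ?_
  rw [norm_mul, norm_mul, Complex.norm_I, Complex.norm_exp_ofReal_mul_I, one_mul, one_mul]
  exact norm_integral_stableRayError_le hk h1 h2 hx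

end StableDensityTail

section StableDensityTransform

variable {C Y : ℝ}

lemma exists_abs_stableDensity_le_rpow (hC : 0 < C) (h1 : 1 < Y) (h2 : Y < 2) :
    ∃ B, ∀ x, 1 ≤ x → |stableDensity (C * Real.Gamma (-Y)) Y x| ≤ B * x ^ (-(Y + 1)) := by
  obtain ⟨B, hB⟩ := exists_abs_stableDensity_sub_le hC h1 h2
  refine ⟨C + |B|, fun x hx ↦ ?_⟩
  have hpos : 0 < x ^ (-(Y + 1)) := Real.rpow_pos_of_pos (by linarith) _
  calc |stableDensity (C * Real.Gamma (-Y)) Y x|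
      ≤ |C * x ^ (-(Y + 1))| +
          |stableDensity (C * Real.Gamma (-Y)) Y x - C * x ^ (-(Y + 1))| := by
        simpa using abs_add_le (C * x ^ (-(Y + 1)))
          (stableDensity (C * Real.Gamma (-Y)) Y x - C * x ^ (-(Y + 1)))
    _ ≤ C * x ^ (-(Y + 1)) + |B| * x ^ (-(Y + 1)) := by
        rw [abs_of_pos (mul_pos hC hpos)]
        gcongr
        calc _ ≤ B * x ^ (-(2 * Y + 1)) := hB x (by linarith)
          _ ≤ |B| * x ^ (-(Y + 1)) := by gcongr ?_ * x ^ ?_; exacts [le_abs_self B, by linarith]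
    _ = _ := by ring

lemma continuous_one_add_abs_mul_exp_mul_stableDensity (hC : 0 < C) (h1 : 1 < Y) (h2 : Y < 2)
    (l : ℝ) :
    Continuous fun x ↦
      (1 + |x|) * Real.exp (-(l * x)) * stableDensity (C * Real.Gamma (-Y)) Y x := by
  have := continuous_stableDensity (mul_pos hC (Gamma_neg_pos h1 h2)) h1 h2
  fun_prop

lemma integrableOn_Iic_one_add_abs_mul_exp_mul_stableDensity (hC : 0 < C) (h1 : 1 < Y)
    (h2 : Y < 2) {l : ℝ} (hl : 0 ≤ l) :
    IntegrableOn (fun x ↦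
      (1 + |x|) * Real.exp (-(l * x)) * stableDensity (C * Real.Gamma (-Y)) Y x) (Iic 1) := by
  obtain ⟨B, hB⟩ := exists_abs_stableDensity_le_exp (mul_pos hC (Gamma_neg_pos h1 h2)) h1 h2
    (s := l + 2) (by linarith)
  have hB0 : 0 ≤ B := by simpa using (abs_nonneg _).trans (hB 0)
  refine (((integrableOn_exp_Iic 1).const_mul (Real.exp 2)).const_mul B).mono'
    (continuous_one_add_abs_mul_exp_mul_stableDensity hC h1 h2 l).aestronglyMeasurable
    (ae_restrict_of_forall_mem measurableSet_Iic fun x (hx : x ≤ 1) ↦ ?_)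
  rw [Real.norm_eq_abs, abs_mul,
    abs_of_nonneg (by positivity : 0 ≤ (1 + |x|) * Real.exp (-(l * x)))]
  calc (1 + |x|) * Real.exp (-(l * x)) * |stableDensity (C * Real.Gamma (-Y)) Y x|
      ≤ Real.exp |x| * Real.exp (-(l * x)) * (B * Real.exp ((l + 2) * x)) := by
        gcongr
        · linarith [Real.add_one_le_exp |x|]
        · exact hB x
    _ = B * Real.exp (|x| + 2 * x) := by
        rw [mul_left_comm, ← Real.exp_add, ← Real.exp_add]
        ring_nf
    _ ≤ B * (Real.exp 2 * Real.exp x) := by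
        rw [← Real.exp_add]
        refine mul_le_mul_of_nonneg_left (Real.exp_le_exp.2 ?_) hB0
        rcases abs_cases x with h | h <;> linarith

lemma integrableOn_Ioi_one_add_abs_mul_exp_mul_stableDensity (hC : 0 < C) (h1 : 1 < Y)
    (h2 : Y < 2) {l : ℝ} (hl : 0 ≤ l) :
    IntegrableOn (fun x ↦
      (1 + |x|) * Real.exp (-(l * x)) * stableDensity (C * Real.Gamma (-Y)) Y x) (Ioi 1) := by
  obtain ⟨B, hB⟩ := exists_abs_stableDensity_le_rpow hC h1 h2
  refine (((integrableOn_Ioi_rpow_of_lt (a := -Y) (by linarith) one_pos).const_mul B).const_mul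
    2).mono' (continuous_one_add_abs_mul_exp_mul_stableDensity hC h1 h2 l).aestronglyMeasurable
    (ae_restrict_of_forall_mem measurableSet_Ioi fun x (hx : 1 < x) ↦ ?_)
  have hx0 : 0 < x := by linarith
  rw [Real.norm_eq_abs, abs_of_pos hx0, abs_mul,
    abs_of_nonneg (by positivity : 0 ≤ (1 + x) * Real.exp (-(l * x)))]
  calc (1 + x) * Real.exp (-(l * x)) * |stableDensity (C * Real.Gamma (-Y)) Y x|
      ≤ (2 * x) * 1 * (B * x ^ (-(Y + 1))) := by
        gcongr
        · linarith
        · exact Real.exp_le_one_iff.2 (neg_nonpos.2 (by positivity))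
        · exact hB x hx.le
    _ = 2 * (B * x ^ (-Y)) := by
        rw [neg_add, ← sub_eq_add_neg, Real.rpow_sub_one hx0.ne']
        field_simp

lemma integrable_one_add_abs_mul_exp_mul_stableDensity (hC : 0 < C) (h1 : 1 < Y) (h2 : Y < 2)
    {l : ℝ} (hl : 0 ≤ l) :
    Integrable fun x ↦
      (1 + |x|) * Real.exp (-(l * x)) * stableDensity (C * Real.Gamma (-Y)) Y x := by
  rw [← integrableOn_univ, ← Iic_union_Ioi (a := (1 : ℝ))]
  exact (integrableOn_Iic_one_add_abs_mul_exp_mul_stableDensity hC h1 h2 hl).union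
    (integrableOn_Ioi_one_add_abs_mul_exp_mul_stableDensity hC h1 h2 hl)

lemma integrable_exp_mul_stableDensity (hC : 0 < C) (h1 : 1 < Y) (h2 : Y < 2) {l : ℝ}
    (hl : 0 ≤ l) :
    Integrable fun x ↦ Real.exp (-(l * x)) * stableDensity (C * Real.Gamma (-Y)) Y x := by
  have hcont := continuous_stableDensity (mul_pos hC (Gamma_neg_pos h1 h2)) h1 h2
  refine (integrable_one_add_abs_mul_exp_mul_stableDensity hC h1 h2 hl).mono
    (Continuous.aestronglyMeasurable (by fun_prop)) (ae_of_all _ fun x ↦ ?_)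
  rw [mul_assoc, norm_mul (1 + |x|), Real.norm_of_nonneg (by positivity : 0 ≤ 1 + |x|)]
  exact le_mul_of_one_le_left (norm_nonneg _) (by linarith [abs_nonneg x])

open FourierTransform in
lemma fourier_stableIntegrand_line {k : ℝ} (hk : 0 < k) (h1 : 1 < Y) (h2 : Y < 2) {l : ℝ}
    (hl : 0 ≤ l) (ξ : ℝ) :
    𝓕 (fun u : ℝ ↦ stableIntegrand k Y 0 (l - I * u)) ξ =
      (2 * π : ℝ) * (Real.exp (-(l * (2 * π * ξ))) * stableDensity k Y (2 * π * ξ) : ℝ) := by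
  rw [Complex.ofReal_mul (Real.exp _), ofReal_stableDensity hk h1 h2,
    integral_stableIntegrand_line hk h1 h2 hl, Real.fourier_eq', mul_left_comm,
    Complex.ofReal_mul 2 π, Complex.ofReal_ofNat,
    mul_div_cancel₀ _ (by simp [Real.pi_ne_zero]), ← integral_const_mul]
  refine integral_congr_ae (ae_of_all _ fun u ↦ ?_)
  simp only [stableIntegrand, smul_eq_mul, Complex.ofReal_exp, ← Complex.exp_add]
  congr 1
  push_cast [RCLike.inner_apply, conj_trivial]
  ring

open FourierTransform in
lemma integral_exp_neg_mul_mul_stableDensity (hC : 0 < C) (h1 : 1 < Y) (h2 : Y < 2) {z : ℂ}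
    (hz : 0 ≤ z.re) :
    ∫ x : ℝ, Complex.exp (-(z * x)) * (stableDensity (C * Real.Gamma (-Y)) Y x : ℂ) =
      Complex.exp ((C * Real.Gamma (-Y) : ℝ) * z ^ (Y : ℂ)) := by
  have hk : 0 < C * Real.Gamma (-Y) := mul_pos hC (Gamma_neg_pos h1 h2)
  set k := C * Real.Gamma (-Y)
  have hz' : z = z.re - I * (-z.im : ℝ) := by
    push_cast
    linear_combination -Complex.re_add_im z
  set h : ℝ → ℂ := fun u ↦ stableIntegrand k Y 0 (z.re - I * u)
  have hcont : Continuous h := (continuousOn_stableIntegrand (by linarith) 0).comp_continuous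
    (by fun_prop) fun u ↦ by simpa using hz
  have hF : 𝓕 h = fun ξ : ℝ ↦ ((2 * π : ℝ) : ℂ) *
      (Real.exp (-(z.re * (2 * π * ξ))) * stableDensity k Y (2 * π * ξ) : ℝ) :=
    funext fun ξ ↦ fourier_stableIntegrand_line hk h1 h2 hz ξ
  have hFint : Integrable (𝓕 h) := by
    rw [hF]
    exact ((integrable_exp_mul_stableDensity hC h1 h2 hz).comp_mul_left' Real.two_pi_pos.ne').ofReal
      |>.const_mul _
  have hinv := congrFun (hcont.fourierInv_fourier_eq (integrable_stableIntegrand_line hk h1 h2 hz 0)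
    hFint) (-z.im)
  rw [Real.fourierInv_eq', hF] at hinv
  calc _ = ((2 * π : ℝ) : ℂ) * ∫ ξ : ℝ, Complex.exp (-(z * (2 * π * ξ : ℝ))) *
        (stableDensity k Y (2 * π * ξ) : ℂ) := by
        rw [Measure.integral_comp_mul_left (fun x : ℝ ↦ Complex.exp (-(z * x)) *
          (stableDensity k Y x : ℂ)), abs_of_pos (by positivity), Complex.real_smul, ← mul_assoc,
          ← Complex.ofReal_mul, mul_inv_cancel₀ Real.two_pi_pos.ne', Complex.ofReal_one, one_mul]
    _ = h (-z.im) := by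
        rw [← hinv, ← integral_const_mul]
        refine integral_congr_ae (ae_of_all _ fun ξ ↦ ?_)
        simp only [smul_eq_mul, Complex.ofReal_mul (Real.exp _), mul_left_comm _ ((2 * π : ℝ) : ℂ)]
        rw [← mul_assoc (Complex.exp _) (Real.exp _ : ℂ), Complex.ofReal_exp, ← Complex.exp_add]
        congr 3
        nth_rewrite 1 [hz']
        push_cast [RCLike.inner_apply, conj_trivial]
        ring
    _ = _ := by
        simp only [h, ← hz', stableIntegrand, Complex.ofReal_zero, zero_mul, zero_add]

end StableDensityTransform

section OneSidedStable

/-- `m` is the centered, totally positively skewed strictly `Y`-stable law with Lévy density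
`C * x ^ (-Y - 1)` on `(0, ∞)`. The characteristic function is given in its analytic form, see
`neg_I_mul_cpow` for the form with a cosine and a sine. -/
structure IsOneSidedStable (C Y : ℝ) (m : Measure ℝ) : Prop where
  pos : 0 < C
  one_lt : 1 < Y
  lt_two : Y < 2
  isProbabilityMeasure : IsProbabilityMeasure m
  charFun_eq : ∀ u : ℝ,
    charFun m u = Complex.exp ((C * Real.Gamma (-Y) : ℝ) * (-(I * u)) ^ (Y : ℂ))

namespace IsOneSidedStable

variable {C Y : ℝ} {m : Measure ℝ} {E : Type*} [NormedAddCommGroup E] [NormedSpace ℝ E]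

lemma scale_pos (h : IsOneSidedStable C Y m) : 0 < C * Real.Gamma (-Y) :=
  mul_pos h.pos (Gamma_neg_pos h.one_lt h.lt_two)

lemma integrable_stableDensity (h : IsOneSidedStable C Y m) :
    Integrable (stableDensity (C * Real.Gamma (-Y)) Y) := by
  simpa using integrable_exp_mul_stableDensity h.pos h.one_lt h.lt_two le_rfl

lemma measurable_stableDensity (h : IsOneSidedStable C Y m) :
    Measurable (stableDensity (C * Real.Gamma (-Y)) Y) :=
  (continuous_stableDensity h.scale_pos h.one_lt h.lt_two).measurable

lemma charFun_eq_integral (h : IsOneSidedStable C Y m) (u : ℝ) :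
    charFun m u =
      ∫ x, (stableDensity (C * Real.Gamma (-Y)) Y x : ℂ) * Complex.exp (u * x * I) := by
  rw [h.charFun_eq, ← integral_exp_neg_mul_mul_stableDensity h.pos h.one_lt h.lt_two (by simp)]
  refine integral_congr_ae (ae_of_all _ fun x ↦ ?_)
  ring_nf

lemma eq_withDensity (h : IsOneSidedStable C Y m) :
    m = volume.withDensity fun x ↦ ENNReal.ofReal (stableDensity (C * Real.Gamma (-Y)) Y x) :=
  have := h.isProbabilityMeasure
  eq_withDensity_of_charFun_eq_integral h.measurable_stableDensity h.integrable_stableDensity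
    h.charFun_eq_integral

lemma toReal_stableDensity_ae_eq (h : IsOneSidedStable C Y m) :
    (fun x ↦ (ENNReal.ofReal (stableDensity (C * Real.Gamma (-Y)) Y x)).toReal)
      =ᵐ[volume] stableDensity (C * Real.Gamma (-Y)) Y := by
  have := h.isProbabilityMeasure
  filter_upwards [ae_nonneg_of_charFun_eq_integral h.measurable_stableDensity
    h.integrable_stableDensity h.charFun_eq_integral] with x hx using ENNReal.toReal_ofReal hx

lemma integral_eq (h : IsOneSidedStable C Y m) (g : ℝ → E) :
    ∫ x, g x ∂m = ∫ x, stableDensity (C * Real.Gamma (-Y)) Y x • g x := by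
  conv_lhs => rw [h.eq_withDensity]
  rw [integral_withDensity_eq_integral_toReal_smul h.measurable_stableDensity.ennreal_ofReal
    (ae_of_all _ fun _ ↦ ENNReal.ofReal_lt_top)]
  refine integral_congr_ae ?_
  filter_upwards [h.toReal_stableDensity_ae_eq] with x hx using by rw [hx]

lemma integrable_iff (h : IsOneSidedStable C Y m) {g : ℝ → E} :
    Integrable g m ↔ Integrable fun x ↦ stableDensity (C * Real.Gamma (-Y)) Y x • g x := by
  conv_lhs => rw [h.eq_withDensity]
  rw [integrable_withDensity_iff_integrable_smul' h.measurable_stableDensity.ennreal_ofReal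
    (ae_of_all _ fun _ ↦ ENNReal.ofReal_lt_top)]
  refine integrable_congr ?_
  filter_upwards [h.toReal_stableDensity_ae_eq] with x hx using by rw [hx]

lemma nullSingletonClass (h : IsOneSidedStable C Y m) : NullSingletonClass m :=
  ⟨fun x ↦ by
    rw [h.eq_withDensity]
    exact withDensity_absolutelyContinuous _ _ (measure_singleton x)⟩

lemma integrable_one_add_abs_mul_exp (h : IsOneSidedStable C Y m) {l : ℝ} (hl : 0 ≤ l) :
    Integrable (fun x ↦ (1 + |x|) * Real.exp (-(l * x))) m := by
  rw [h.integrable_iff]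
  simpa only [smul_eq_mul, mul_comm] using
    integrable_one_add_abs_mul_exp_mul_stableDensity h.pos h.one_lt h.lt_two hl

lemma integrable_exp (h : IsOneSidedStable C Y m) {l : ℝ} (hl : 0 ≤ l) :
    Integrable (fun x ↦ Real.exp (-(l * x))) m := by
  rw [h.integrable_iff]
  simpa only [smul_eq_mul, mul_comm] using
    integrable_exp_mul_stableDensity h.pos h.one_lt h.lt_two hl

lemma integral_cexp (h : IsOneSidedStable C Y m) {z : ℂ} (hz : 0 ≤ z.re) :
    ∫ x : ℝ, Complex.exp (-(z * x)) ∂m =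
      Complex.exp ((C * Real.Gamma (-Y) : ℝ) * z ^ (Y : ℂ)) := by
  rw [h.integral_eq, ← integral_exp_neg_mul_mul_stableDensity h.pos h.one_lt h.lt_two hz]
  simp only [Complex.real_smul, mul_comm]

lemma integral_exp (h : IsOneSidedStable C Y m) {l : ℝ} (hl : 0 ≤ l) :
    ∫ x, Real.exp (-(l * x)) ∂m = Real.exp (C * Real.Gamma (-Y) * l ^ Y) := by
  have hcomplex := h.integral_cexp (z := l) (by simpa using hl)
  rw [← Complex.ofReal_cpow hl] at hcomplex
  refine Complex.ofReal_injective ?_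
  rw [← integral_complex_ofReal]
  push_cast at hcomplex ⊢
  exact hcomplex

lemma integrable_id (h : IsOneSidedStable C Y m) : Integrable (fun x ↦ x) m := by
  have hweight := h.integrable_one_add_abs_mul_exp le_rfl
  simp only [zero_mul, neg_zero, Real.exp_zero, mul_one] at hweight
  refine hweight.mono (by fun_prop) (ae_of_all _ fun x ↦ ?_)
  rw [Real.norm_eq_abs, Real.norm_of_nonneg (by positivity)]
  exact le_add_of_nonneg_left zero_le_one

lemma hasDerivAt_charFun_zero (h : IsOneSidedStable C Y m) : HasDerivAt (charFun m) 0 0 := by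
  have hexponent : HasDerivAt
      (fun u : ℝ ↦ ((C * Real.Gamma (-Y) : ℝ) : ℂ) * (-(I * u)) ^ (Y : ℂ)) 0 0 := by
    have habs := (hasDerivAt_abs_rpow 0 h.one_lt).isLittleO
    have h0 : Y ≠ 0 := (zero_lt_one.trans h.one_lt).ne'
    refine HasDerivAt.of_isLittleO ?_
    simp only [abs_zero, Real.zero_rpow h0, sub_zero, mul_zero, smul_zero, Complex.ofReal_zero,
      neg_zero, Complex.zero_cpow (Complex.ofReal_ne_zero.2 h0)] at habs ⊢
    refine (IsBigO.of_bound |C * Real.Gamma (-Y)| (.of_forall fun u ↦ ?_)).trans_isLittleO habs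
    rw [norm_mul, Complex.norm_real, Real.norm_eq_abs, Complex.norm_cpow_real, norm_neg,
      norm_mul, Complex.norm_I, one_mul, Complex.norm_real, Real.norm_eq_abs,
      Real.norm_of_nonneg (by positivity)]
  have hexp := hexponent.cexp
  rw [mul_zero] at hexp
  exact hexp.congr_of_eventuallyEq (.of_forall h.charFun_eq)

lemma integral_id (h : IsOneSidedStable C Y m) : ∫ x, x ∂m = 0 := by
  have := h.isProbabilityMeasure
  have hderiv := iteratedDeriv_charFun_zero (μ := m) (n := 1)
    (by rw [Nat.cast_one]; exact memLp_one_iff_integrable.2 h.integrable_id)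
  rw [iteratedDeriv_one, h.hasDerivAt_charFun_zero.deriv] at hderiv
  simpa using hderiv.symm

lemma measureReal_Ici (h : IsOneSidedStable C Y m) (x : ℝ) :
    m.real (Ici x) = ∫ s in Ioi x, stableDensity (C * Real.Gamma (-Y)) Y s := by
  rw [← integral_indicator_one measurableSet_Ici, h.integral_eq, ← integral_Ici_eq_integral_Ioi,
    ← integral_indicator measurableSet_Ici]
  refine integral_congr_ae (ae_of_all _ fun s ↦ ?_)
  by_cases hs : s ∈ Ici x <;> simp [hs]

lemma exists_abs_measureReal_Ici_sub_le (h : IsOneSidedStable C Y m) :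
    ∃ B, 0 ≤ B ∧ ∀ x, 0 < x → |m.real (Ici x) - C / Y * x ^ (-Y)| ≤ B * x ^ (-(2 * Y)) := by
  have hY : 1 < Y := h.one_lt
  have hY0 : 0 < Y := zero_lt_one.trans hY
  obtain ⟨B, hB⟩ := exists_abs_stableDensity_sub_le h.pos hY h.lt_two
  have hB0 : 0 ≤ B := by simpa using (abs_nonneg _).trans (hB 1 one_pos)
  refine ⟨B / (2 * Y), by positivity, fun x hx ↦ ?_⟩
  have htail (a : ℝ) {p : ℝ} (hp : 0 < p) :
      ∫ s in Ioi x, a * s ^ (-(p + 1)) = a / p * x ^ (-p) := by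
    rw [integral_const_mul, integral_Ioi_rpow_of_lt (by linarith) hx,
      show -(p + 1) + 1 = -p by ring]
    field_simp
  have hint {p : ℝ} (hp : 0 < p) : IntegrableOn (fun s : ℝ ↦ s ^ (-(p + 1))) (Ioi x) :=
    integrableOn_Ioi_rpow_of_lt (by linarith) hx
  rw [h.measureReal_Ici, ← htail C hY0, ← htail B (p := 2 * Y) (by positivity),
    ← integral_sub h.integrable_stableDensity.integrableOn ((hint hY0).const_mul C),
    ← Real.norm_eq_abs]
  exact norm_integral_le_of_norm_le ((hint (by positivity)).const_mul B)
    (ae_restrict_of_forall_mem measurableSet_Ioi fun s hs ↦ hB s (hx.trans hs))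

end IsOneSidedStable

end OneSidedStable

section OneSubExp

lemma one_sub_exp_neg_nonneg {x : ℝ} (hx : 0 ≤ x) : 0 ≤ 1 - Real.exp (-x) :=
  sub_nonneg.2 (Real.exp_le_one_iff.2 (neg_nonpos.2 hx))

lemma one_sub_exp_neg_le_one (x : ℝ) : 1 - Real.exp (-x) ≤ 1 :=
  sub_le_self _ (Real.exp_pos _).le

variable {s p q : ℝ}

lemma abs_one_sub_exp_mul_rpow_le_rpow (hs : 0 ≤ s) (a : ℝ) {u : ℝ} (hu : 0 ≤ u) :
    |(1 - Real.exp (-(s * u ^ p))) * u ^ a| ≤ u ^ a := by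
  rw [abs_mul, abs_of_nonneg (one_sub_exp_neg_nonneg (by positivity)),
    abs_of_nonneg (Real.rpow_nonneg hu a)]
  exact mul_le_of_le_one_left (Real.rpow_nonneg hu a) (one_sub_exp_neg_le_one _)

lemma abs_one_sub_exp_mul_rpow_le_mul_rpow (hs : 0 ≤ s) (a : ℝ) {u : ℝ} (hu : 0 < u) :
    |(1 - Real.exp (-(s * u ^ p))) * u ^ a| ≤ s * u ^ (p + a) := by
  rw [abs_mul, abs_of_nonneg (one_sub_exp_neg_nonneg (by positivity)),
    abs_of_nonneg (Real.rpow_nonneg hu.le a), Real.rpow_add hu, ← mul_assoc]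
  gcongr
  linarith [Real.one_sub_le_exp_neg (s * u ^ p)]

lemma integrableOn_one_sub_exp_mul_rpow (hs : 0 ≤ s) (hq : 1 < q) (hpq : q - 1 < p) :
    IntegrableOn (fun u : ℝ ↦ (1 - Real.exp (-(s * u ^ p))) * u ^ (-q)) (Ioi 0) := by
  have hmeas : Measurable fun u : ℝ ↦ (1 - Real.exp (-(s * u ^ p))) * u ^ (-q) := by fun_prop
  rw [← Ioc_union_Ioi_eq_Ioi zero_le_one]
  refine IntegrableOn.union ?_ ?_
  · have hint : IntegrableOn (fun u : ℝ ↦ s * u ^ (p + -q)) (Ioc 0 1) := by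
      rw [← intervalIntegrable_iff_integrableOn_Ioc_of_le zero_le_one]
      exact (intervalIntegral.intervalIntegrable_rpow' (by linarith)).const_mul s
    exact hint.mono' hmeas.aestronglyMeasurable (ae_restrict_of_forall_mem measurableSet_Ioc
      fun u hu ↦ abs_one_sub_exp_mul_rpow_le_mul_rpow hs _ hu.1)
  · exact (integrableOn_Ioi_rpow_of_lt (by linarith) one_pos).mono' hmeas.aestronglyMeasurable
      (ae_restrict_of_forall_mem measurableSet_Ioi fun u (hu : 1 < u) ↦
        abs_one_sub_exp_mul_rpow_le_rpow hs _ (zero_le_one.trans hu.le))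

lemma tendsto_one_sub_exp_mul_rpow_nhdsGT_zero (hs : 0 ≤ s) (hpq : q - 1 < p) :
    Tendsto (fun u : ℝ ↦ (1 - Real.exp (-(s * u ^ p))) * u ^ (1 - q)) (𝓝[>] 0) (𝓝 0) := by
  have hpow : Tendsto (fun u : ℝ ↦ s * u ^ (p + (1 - q))) (𝓝[>] 0) (𝓝 0) := by
    have hcont := (Real.continuousAt_rpow_const 0 (p + (1 - q)) (Or.inr (by linarith))).const_mul s
    rw [ContinuousAt, Real.zero_rpow (by linarith), mul_zero] at hcont
    exact hcont.mono_left nhdsWithin_le_nhds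
  refine squeeze_zero_norm' ?_ hpow
  filter_upwards [self_mem_nhdsWithin] with u hu
    using abs_one_sub_exp_mul_rpow_le_mul_rpow hs _ hu

lemma tendsto_one_sub_exp_mul_rpow_atTop (hs : 0 ≤ s) (hq : 1 < q) :
    Tendsto (fun u : ℝ ↦ (1 - Real.exp (-(s * u ^ p))) * u ^ (1 - q)) atTop (𝓝 0) := by
  have hpow := tendsto_rpow_neg_atTop (sub_pos.2 hq)
  rw [neg_sub] at hpow
  refine squeeze_zero_norm' ?_ hpow
  filter_upwards [eventually_ge_atTop 0] with u hu
    using abs_one_sub_exp_mul_rpow_le_rpow hs _ hu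

lemma hasDerivAt_one_sub_exp_neg_mul_rpow {u : ℝ} (hu : 0 < u) :
    HasDerivAt (fun u : ℝ ↦ 1 - Real.exp (-(s * u ^ p)))
      (s * p * u ^ (p - 1) * Real.exp (-(s * u ^ p))) u := by
  have hderiv := ((Real.hasDerivAt_rpow_const (p := p) (Or.inl hu.ne')).const_mul s).fun_neg
  exact (hderiv.exp.const_sub 1).congr_deriv (by ring)

lemma integral_one_sub_exp_mul_rpow (hs : 0 < s) (hp : 0 < p) (hq : 1 < q) (hpq : q - 1 < p) :
    ∫ u in Ioi (0 : ℝ), (1 - Real.exp (-(s * u ^ p))) * u ^ (-q) =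
      s ^ ((q - 1) / p) * Real.Gamma (1 - (q - 1) / p) / (q - 1) := by
  have hprod : ∀ u ∈ Ioi (0 : ℝ), s * p * u ^ (p - 1) * Real.exp (-(s * u ^ p)) * u ^ (1 - q) =
      s * p * (u ^ (p - q) * Real.exp (-s * u ^ p)) := fun u hu ↦ by
    rw [show p - q = p - 1 + (1 - q) by ring, Real.rpow_add hu, neg_mul]
    ring
  have hint : IntegrableOn (fun u : ℝ ↦ (1 - Real.exp (-(s * u ^ p))) * ((1 - q) * u ^ (-q)))
      (Ioi 0) := by
    simp only [mul_left_comm _ (1 - q)]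
    exact (integrableOn_one_sub_exp_mul_rpow hs.le hq hpq).const_mul _
  have hint' : IntegrableOn (fun u : ℝ ↦
      s * p * u ^ (p - 1) * Real.exp (-(s * u ^ p)) * u ^ (1 - q)) (Ioi 0) :=
    IntegrableOn.congr_fun
      ((integrableOn_rpow_mul_exp_neg_mul_rpow (by linarith) hp hs).const_mul (s * p))
      (fun u hu ↦ (hprod u hu).symm) measurableSet_Ioi
  have hparts := integral_Ioi_mul_deriv_eq_deriv_mul
    (fun u hu ↦ hasDerivAt_one_sub_exp_neg_mul_rpow hu)
    (fun u (hu : 0 < u) ↦ (Real.hasDerivAt_rpow_const (p := 1 - q) (Or.inl hu.ne')).congr_deriv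
      (show _ = (1 - q) * u ^ (-q) by ring_nf)) hint hint'
    (tendsto_one_sub_exp_mul_rpow_nhdsGT_zero hs.le hpq)
    (tendsto_one_sub_exp_mul_rpow_atTop hs.le hq)
  rw [setIntegral_congr_fun measurableSet_Ioi hprod, integral_const_mul,
    integral_rpow_mul_exp_neg_mul_rpow hp (by linarith) hs] at hparts
  simp only [mul_left_comm _ (1 - q)] at hparts
  have hexp : s ^ ((q - 1) / p) = s * s ^ (-(p - q + 1) / p) := by
    rw [show (q - 1) / p = 1 + -(p - q + 1) / p by field_simp; ring, Real.rpow_add hs,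
      Real.rpow_one]
  rw [integral_const_mul, show (p - q + 1) / p = 1 - (q - 1) / p by field_simp; ring] at hparts
  rw [hexp]
  have hq'' : q - 1 ≠ 0 := (sub_pos.2 hq).ne'
  field_simp at hparts ⊢
  linear_combination -hparts

end OneSubExp

section SecondOrderLaplace

lemma exp_neg_sub_one_add_nonneg (x : ℝ) : 0 ≤ Real.exp (-x) - 1 + x := by
  linarith [Real.one_sub_le_exp_neg x]

lemma tendsto_exp_neg_sub_one_add_div_sq (x : ℝ) :
    Tendsto (fun h : ℝ ↦ (Real.exp (-(h * x)) - 1 + h * x) / h ^ 2) (𝓝[>] 0)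
      (𝓝 (x ^ 2 / 2)) := by
  have hsmall : Tendsto (fun h : ℝ ↦ |h * x|) (𝓝[>] 0) (𝓝 0) := by
    have hcont : Continuous fun h : ℝ ↦ |h * x| := by fun_prop
    simpa using (hcont.tendsto 0).mono_left nhdsWithin_le_nhds
  have hbound : Tendsto (fun h : ℝ ↦ |h * x| * x ^ 2) (𝓝[>] 0) (𝓝 0) := by
    simpa using hsmall.mul_const (x ^ 2)
  rw [tendsto_iff_norm_sub_tendsto_zero]
  refine squeeze_zero' (.of_forall fun h ↦ norm_nonneg _) ?_ hbound
  filter_upwards [hsmall.eventually_le_const one_pos, self_mem_nhdsWithin] with h hle hpos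
  replace hpos : 0 < h := hpos
  have htaylor := Real.exp_bound (x := -(h * x)) (by rwa [abs_neg]) (n := 3) (by norm_num)
  norm_num [Finset.sum_range_succ, Nat.factorial] at htaylor
  rw [show (Real.exp (-(h * x)) - 1 + h * x) / h ^ 2 - x ^ 2 / 2 =
      (Real.exp (-(h * x)) - (1 + -(h * x) + (h * x) ^ 2 / 2)) / h ^ 2 by field_simp; ring,
    norm_div, Real.norm_eq_abs, Real.norm_of_nonneg (sq_nonneg h), div_le_iff₀ (by positivity)]
  calc |Real.exp (-(h * x)) - (1 + -(h * x) + (h * x) ^ 2 / 2)|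
      ≤ (|h| * |x|) ^ 3 * (2 / 9) := htaylor
    _ ≤ (|h| * |x|) ^ 3 := mul_le_of_le_one_right (by positivity) (by norm_num)
    _ = |h * x| * x ^ 2 * h ^ 2 := by rw [abs_mul, ← sq_abs x, ← sq_abs h]; ring

lemma exp_sub_one_sub_le_sq_mul_exp {z : ℝ} (hz : 0 ≤ z) :
    Real.exp z - 1 - z ≤ z ^ 2 * Real.exp z := by
  have hle : Real.exp z - 1 ≤ z * Real.exp z := by
    have h := mul_le_mul_of_nonneg_right (Real.one_sub_le_exp_neg z) (Real.exp_pos z).le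
    rw [← Real.exp_add, neg_add_cancel, Real.exp_zero] at h
    linarith
  nlinarith

lemma exp_sub_one_sub_le_mul_sq_mul_exp {h y : ℝ} (h0 : 0 ≤ h) (h1 : h ≤ 1 / 2) (hy : 0 ≤ y) :
    Real.exp (h * y) - 1 - h * y ≤ 8 * Real.exp y * h ^ 2 := by
  have hsq : y ^ 2 ≤ 8 * Real.exp (y / 2) := by
    nlinarith [Real.quadratic_le_exp_of_nonneg (x := y / 2) (by positivity)]
  calc Real.exp (h * y) - 1 - h * y ≤ (h * y) ^ 2 * Real.exp (h * y) :=
        exp_sub_one_sub_le_sq_mul_exp (by positivity)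
    _ ≤ (h * y) ^ 2 * Real.exp (y / 2) := by gcongr; nlinarith
    _ = y ^ 2 * (Real.exp (y / 2) * h ^ 2) := by ring
    _ ≤ 8 * Real.exp (y / 2) * (Real.exp (y / 2) * h ^ 2) := by gcongr
    _ = 8 * Real.exp y * h ^ 2 := by
      nth_rw 3 [← add_halves y]
      rw [Real.exp_add]
      ring

variable {Ω : Type*} [MeasurableSpace Ω] {Q : Measure Ω} {W : Ω → ℝ}

lemma tendsto_integral_exp_neg_sub_one_add_min_zero_div_sq [IsFiniteMeasure Q] (hW : Measurable W)
    (hexp : Integrable (fun ω ↦ Real.exp (-W ω)) Q) :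
    Tendsto (fun h : ℝ ↦ ∫ ω, (Real.exp (-(h * min (W ω) 0)) - 1 + h * min (W ω) 0) / h ^ 2 ∂Q)
      (𝓝[>] 0) (𝓝 (∫ ω, min (W ω) 0 ^ 2 / 2 ∂Q)) := by
  refine tendsto_integral_filter_of_dominated_convergence
    (fun ω ↦ 8 * (1 + Real.exp (-W ω))) (.of_forall fun h ↦ by fun_prop) ?_
    (((integrable_const 1).add hexp).const_mul 8)
    (ae_of_all _ fun ω ↦ tendsto_exp_neg_sub_one_add_div_sq _)
  filter_upwards [Ioc_mem_nhdsGT (show (0 : ℝ) < 1 / 2 by norm_num)] with h hh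
  have h0 : 0 < h := hh.1
  refine ae_of_all _ fun ω ↦ ?_
  rw [Real.norm_of_nonneg (div_nonneg (exp_neg_sub_one_add_nonneg _) (sq_nonneg h)),
    div_le_iff₀ (by positivity)]
  have hbound := exp_sub_one_sub_le_mul_sq_mul_exp h0.le hh.2
    (neg_nonneg.2 (min_le_right (W ω) 0))
  have hmax : Real.exp (-min (W ω) 0) ≤ 1 + Real.exp (-W ω) := by
    rcases min_choice (W ω) 0 with h | h <;> rw [h]
    · linarith
    · simpa using (Real.exp_pos (-W ω)).le
  calc Real.exp (-(h * min (W ω) 0)) - 1 + h * min (W ω) 0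
      ≤ 8 * Real.exp (-min (W ω) 0) * h ^ 2 := by rwa [mul_neg, sub_neg_eq_add] at hbound
    _ ≤ 8 * (1 + Real.exp (-W ω)) * h ^ 2 := by gcongr

lemma integral_comp_eq_integral_comp_min_add_integral_comp_max (hW : Measurable W) {φ : ℝ → ℝ}
    (hφ : Measurable φ) (hφ0 : φ 0 = 0) (hint : Integrable (fun ω ↦ φ (W ω)) Q) :
    ∫ ω, φ (W ω) ∂Q = ∫ ω, φ (min (W ω) 0) ∂Q + ∫ ω, φ (max (W ω) 0) ∂Q := by
  have hmin : Integrable (fun ω ↦ φ (min (W ω) 0)) Q :=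
    hint.mono (hφ.comp (hW.min measurable_const)).aestronglyMeasurable (ae_of_all _ fun ω ↦ by
      rcases min_choice (W ω) 0 with h | h <;> simp [h, hφ0])
  have hmax : Integrable (fun ω ↦ φ (max (W ω) 0)) Q :=
    hint.mono (hφ.comp (hW.max measurable_const)).aestronglyMeasurable (ae_of_all _ fun ω ↦ by
      rcases max_choice (W ω) 0 with h | h <;> simp [h, hφ0])
  rw [← integral_add hmin hmax]
  refine integral_congr_ae (ae_of_all _ fun ω ↦ ?_)
  rcases le_total (W ω) 0 with h | h <;> simp [h, hφ0]

lemma antitone_measureReal_le [IsFiniteMeasure Q] (W : Ω → ℝ) :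
    Antitone fun w : ℝ ↦ Q.real {ω | w ≤ W ω} :=
  fun _ _ hab ↦ measureReal_mono fun _ hω ↦ hab.trans hω

lemma integral_intervalIntegral_max_zero [IsFiniteMeasure Q] (hW : Measurable W) {g : ℝ → ℝ}
    (hg : Continuous g) (hg0 : ∀ w, 0 ≤ w → 0 ≤ g w) :
    ∫ ω, (∫ w in (0 : ℝ)..max (W ω) 0, g w) ∂Q =
      ∫ w in Ioi 0, Q.real {ω | w ≤ W ω} * g w := by
  have hg0' : ∀ᵐ w ∂volume.restrict (Ioi (0 : ℝ)), 0 ≤ g w :=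
    ae_restrict_of_forall_mem measurableSet_Ioi fun w hw ↦ hg0 w (le_of_lt hw)
  have hlayer := lintegral_comp_eq_lintegral_meas_le_mul (f := fun ω ↦ max (W ω) 0) Q
    (ae_of_all _ fun ω ↦ le_max_right _ _) (by fun_prop)
    (fun t _ ↦ hg.intervalIntegrable 0 t) hg0'
  have hprim : Continuous fun x : ℝ ↦ ∫ w in (0 : ℝ)..x, g w :=
    intervalIntegral.continuous_primitive (fun a b ↦ hg.intervalIntegrable a b) 0
  rw [integral_eq_lintegral_of_nonneg_ae, integral_eq_lintegral_of_nonneg_ae, hlayer]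
  · congr 1
    refine setLIntegral_congr_fun measurableSet_Ioi fun w hw ↦ ?_
    have hset : {ω | w ≤ max (W ω) 0} = {ω | w ≤ W ω} := by
      ext ω
      simp [not_le.2 (show 0 < w from hw)]
    rw [hset, ENNReal.ofReal_mul measureReal_nonneg, ofReal_measureReal]
  · filter_upwards [hg0'] with w hw using mul_nonneg measureReal_nonneg hw
  · exact ((antitone_measureReal_le W).measurable.mul hg.measurable).aestronglyMeasurable
  · exact ae_of_all _ fun ω ↦
      intervalIntegral.integral_nonneg (le_max_right _ _) fun w hw ↦ hg0 w hw.1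
  · exact (hprim.measurable.comp (hW.max measurable_const)).aestronglyMeasurable

lemma integral_exp_neg_sub_one_add_max_zero [IsFiniteMeasure Q] (hW : Measurable W) {h : ℝ}
    (hh : 0 ≤ h) :
    ∫ ω, (Real.exp (-(h * max (W ω) 0)) - 1 + h * max (W ω) 0) ∂Q =
      ∫ w in Ioi (0 : ℝ), Q.real {ω | w ≤ W ω} * (h * (1 - Real.exp (-(h * w)))) := by
  have hcont : Continuous fun w : ℝ ↦ h * (1 - Real.exp (-(h * w))) := by fun_prop
  have hprim (x : ℝ) : ∫ w in (0 : ℝ)..x, h * (1 - Real.exp (-(h * w))) =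
      Real.exp (-(h * x)) - 1 + h * x := by
    rw [intervalIntegral.integral_eq_sub_of_hasDerivAt
      (f := fun w ↦ Real.exp (-(h * w)) - 1 + h * w) (fun w _ ↦ ?_)
      (hcont.intervalIntegrable 0 x)]
    · simp
    · have hlin := (hasDerivAt_id' w).const_mul h
      exact ((hlin.fun_neg.exp.sub_const 1).add hlin).congr_deriv (by ring)
  rw [← integral_intervalIntegral_max_zero hW hcont fun w hw ↦
    mul_nonneg hh (one_sub_exp_neg_nonneg (by positivity))]
  simp only [hprim]

lemma integrableOn_mul_sub_mul_rpow {T : ℝ → ℝ} {K B Y : ℝ} (h1 : 1 < Y) (h2 : Y < 2)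
    (hmeas : Measurable T) (hT : ∀ w, |T w| ≤ 1)
    (hB : ∀ w, 1 ≤ w → |T w - K * w ^ (-Y)| ≤ B * w ^ (-(Y + 1))) :
    IntegrableOn (fun w ↦ w * (T w - K * w ^ (-Y))) (Ioi 0) := by
  have hmeas' : Measurable fun w ↦ w * (T w - K * w ^ (-Y)) := by fun_prop
  rw [← Ioc_union_Ioi_eq_Ioi zero_le_one]
  refine IntegrableOn.union ?_ ?_
  · have hint : IntegrableOn (fun w : ℝ ↦ 1 + |K| * w ^ (1 - Y)) (Ioc 0 1) := by
      rw [← intervalIntegrable_iff_integrableOn_Ioc_of_le zero_le_one]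
      exact intervalIntegrable_const.add
        ((intervalIntegral.intervalIntegrable_rpow' (by linarith)).const_mul |K|)
    refine hint.mono' hmeas'.aestronglyMeasurable
      (ae_restrict_of_forall_mem measurableSet_Ioc fun w hw ↦ ?_)
    rw [mul_sub]
    refine (norm_sub_le _ _).trans (add_le_add ?_ (le_of_eq ?_))
    · rw [Real.norm_eq_abs, abs_mul, abs_of_pos hw.1]
      exact mul_le_one₀ hw.2 (abs_nonneg _) (hT w)
    · rw [Real.norm_eq_abs, abs_mul, abs_mul, abs_of_pos hw.1,
        abs_of_nonneg (Real.rpow_nonneg hw.1.le _), sub_eq_add_neg, Real.rpow_add hw.1,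
        Real.rpow_one]
      ring
  · refine ((integrableOn_Ioi_rpow_of_lt (a := -Y) (by linarith) one_pos).const_mul B).mono'
      hmeas'.aestronglyMeasurable
      (ae_restrict_of_forall_mem measurableSet_Ioi fun w (hw : 1 < w) ↦ ?_)
    have hw0 : 0 < w := one_pos.trans hw
    rw [Real.norm_eq_abs, abs_mul, abs_of_pos hw0]
    refine (mul_le_mul_of_nonneg_left (hB w hw.le) hw0.le).trans_eq ?_
    rw [show -Y = 1 + -(Y + 1) by ring, Real.rpow_add hw0, Real.rpow_one]
    ring

lemma norm_one_sub_exp_neg_div_mul_le {h w : ℝ} (hh : 0 < h) (hw : 0 < w) (a : ℝ) :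
    ‖(1 - Real.exp (-(h * w))) / h * a‖ ≤ ‖w * a‖ := by
  rw [norm_mul, norm_mul, Real.norm_of_nonneg hw.le,
    Real.norm_of_nonneg (div_nonneg (one_sub_exp_neg_nonneg (by positivity)) hh.le)]
  refine mul_le_mul_of_nonneg_right ?_ (norm_nonneg a)
  rw [div_le_iff₀ hh]
  linarith [Real.one_sub_le_exp_neg (h * w)]

lemma integrableOn_one_sub_exp_neg_div_mul {φ : ℝ → ℝ} (hφ : Measurable φ)
    (hint : IntegrableOn (fun w ↦ w * φ w) (Ioi 0)) {h : ℝ} (hh : 0 < h) :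
    IntegrableOn (fun w ↦ (1 - Real.exp (-(h * w))) / h * φ w) (Ioi 0) :=
  Integrable.mono hint (by fun_prop) (ae_restrict_of_forall_mem measurableSet_Ioi fun _ hw ↦
    norm_one_sub_exp_neg_div_mul_le hh hw _)

lemma tendsto_integral_one_sub_exp_neg_div_mul {φ : ℝ → ℝ} (hφ : Measurable φ)
    (hint : IntegrableOn (fun w ↦ w * φ w) (Ioi 0)) :
    Tendsto (fun h : ℝ ↦ ∫ w in Ioi (0 : ℝ), (1 - Real.exp (-(h * w))) / h * φ w) (𝓝[>] 0)
      (𝓝 (∫ w in Ioi (0 : ℝ), w * φ w)) := by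
  refine tendsto_integral_filter_of_dominated_convergence _
    (.of_forall fun h ↦ by fun_prop) ?_ hint.norm (ae_of_all _ fun w ↦ ?_)
  · filter_upwards [self_mem_nhdsWithin] with h hh
    exact ae_restrict_of_forall_mem measurableSet_Ioi fun w hw ↦
      norm_one_sub_exp_neg_div_mul_le hh hw _
  · have hderiv : HasDerivAt (fun h : ℝ ↦ 1 - Real.exp (-(h * w))) w 0 := by
      simpa using ((hasDerivAt_mul_const w (x := (0 : ℝ))).fun_neg.exp).const_sub 1
    refine (hderiv.tendsto_slope_zero_right.mul_const (φ w)).congr fun h ↦ ?_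
    simp [div_eq_inv_mul]

lemma integral_mul_one_sub_exp_neg_eq_add_rpow {T : ℝ → ℝ} {K Y : ℝ} (h1 : 1 < Y) (h2 : Y < 2)
    (hT : Measurable T) (hint : IntegrableOn (fun w ↦ w * (T w - K * w ^ (-Y))) (Ioi 0)) {h : ℝ}
    (hh : 0 < h) :
    ∫ w in Ioi (0 : ℝ), T w * (h * (1 - Real.exp (-(h * w)))) =
      h ^ 2 * (∫ w in Ioi (0 : ℝ), (1 - Real.exp (-(h * w))) / h * (T w - K * w ^ (-Y))) +
        K * (Real.Gamma (2 - Y) / (Y - 1)) * h ^ Y := by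
  have hintT := integrableOn_one_sub_exp_neg_div_mul (by fun_prop) hint hh
  have hintK := integrableOn_one_sub_exp_mul_rpow hh.le h1 (p := 1) (by linarith)
  have hK := integral_one_sub_exp_mul_rpow hh one_pos h1 (by linarith)
  simp only [Real.rpow_one, div_one] at hintK hK
  have hrpow : h ^ Y = h * h ^ (Y - 1) := by
    rw [← Real.rpow_one_add' hh.le (by linarith), add_sub_cancel]
  calc ∫ w in Ioi (0 : ℝ), T w * (h * (1 - Real.exp (-(h * w))))
      = ∫ w in Ioi (0 : ℝ), (h ^ 2 * ((1 - Real.exp (-(h * w))) / h * (T w - K * w ^ (-Y))) +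
          K * h * ((1 - Real.exp (-(h * w))) * w ^ (-Y))) := by
        congr 1 with w
        field_simp
        ring
    _ = _ := by
      rw [integral_add (hintT.const_mul _) (hintK.const_mul _), integral_const_mul,
        integral_const_mul, hK, hrpow, show 1 - (Y - 1) = 2 - Y by ring]
      ring

/- Since `W = max W 0 + min W 0` with one of the two terms zero, the integrand splits into a
negative part, which is expanded directly, and a positive part, which the layer-cake formula
expresses through the tail of `W`; the power tail `K * w ^ (-Y)` contributes the term `h ^ Y`. -/
theorem tendsto_integral_exp_neg_sub_one_add_sub_rpow_div_sq [IsProbabilityMeasure Q]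
    (hW : Measurable W) (hexp : ∀ l : ℝ, 0 ≤ l → Integrable (fun ω ↦ Real.exp (-(l * W ω))) Q)
    (hint : Integrable W Q) {Y K B : ℝ} (h1 : 1 < Y) (h2 : Y < 2)
    (hB : ∀ w, 1 ≤ w → |Q.real {ω | w ≤ W ω} - K * w ^ (-Y)| ≤ B * w ^ (-(Y + 1))) :
    Tendsto (fun h : ℝ ↦ (∫ ω, (Real.exp (-(h * W ω)) - 1 + h * W ω) ∂Q -
        K * (Real.Gamma (2 - Y) / (Y - 1)) * h ^ Y) / h ^ 2) (𝓝[>] 0)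
      (𝓝 (∫ ω, min (W ω) 0 ^ 2 / 2 ∂Q +
        ∫ w in Ioi (0 : ℝ), w * (Q.real {ω | w ≤ W ω} - K * w ^ (-Y)))) := by
  have hmeas : Measurable fun w : ℝ ↦ Q.real {ω | w ≤ W ω} :=
    (antitone_measureReal_le W).measurable
  have htail := integrableOn_mul_sub_mul_rpow h1 h2 hmeas
    (fun w ↦ (abs_of_nonneg measureReal_nonneg).trans_le measureReal_le_one) hB
  refine ((tendsto_integral_exp_neg_sub_one_add_min_zero_div_sq hW
    (by simpa using hexp 1 zero_le_one)).add
    (tendsto_integral_one_sub_exp_neg_div_mul (by fun_prop) htail)).congr' ?_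
  filter_upwards [self_mem_nhdsWithin] with h (hh : 0 < h)
  have hintW : Integrable (fun ω ↦ Real.exp (-(h * W ω)) - 1 + h * W ω) Q :=
    ((hexp h hh.le).sub (integrable_const 1)).add (hint.const_mul h)
  rw [integral_comp_eq_integral_comp_min_add_integral_comp_max hW
      (φ := fun x ↦ Real.exp (-(h * x)) - 1 + h * x) (by fun_prop) (by simp) hintW,
    integral_exp_neg_sub_one_add_max_zero hW hh.le,
    integral_mul_one_sub_exp_neg_eq_add_rpow h1 h2 hmeas htail hh, integral_div]
  field_simp
  ring

end SecondOrderLaplace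

section PairTail

lemma abs_rpow_neg_sub_rpow_neg_le {Y r x y : ℝ} (hY : 0 ≤ Y) (hr : 0 < r) (hx : r ≤ x)
    (hy : r ≤ y) : |x ^ (-Y) - y ^ (-Y)| ≤ Y * r ^ (-(Y + 1)) * |x - y| := by
  refine Convex.norm_image_sub_le_of_norm_hasDerivWithin_le (f := fun x : ℝ ↦ x ^ (-Y))
    (f' := fun x ↦ -Y * x ^ (-Y - 1)) (s := Ici r) (fun z hz ↦ ?_) (fun z hz ↦ ?_)
    (convex_Ici r) hy hx
  · exact (Real.hasDerivAt_rpow_const (Or.inl (hr.trans_le hz).ne')).hasDerivWithinAt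
  · rw [norm_mul, norm_neg, Real.norm_of_nonneg hY,
      Real.norm_of_nonneg (Real.rpow_nonneg (hr.le.trans hz) _), ← neg_add']
    exact mul_le_mul_of_nonneg_left (Real.rpow_le_rpow_of_nonpos hr hz (by linarith)) hY

lemma setOf_le_add_inter_eq_Ici {a : ℝ} (ha : 0 < a) (b w y : ℝ) :
    {x | w ≤ a * x + b * y ∧ y ≤ x} = Ici (max y ((w - b * y) / a)) := by
  ext x
  simp only [mem_ofPred_eq, mem_Ici, max_le_iff, div_le_iff₀ ha, sub_le_iff_le_add, mul_comm x]
  exact and_comm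

lemma div_add_le_max {a b : ℝ} (ha : 0 < a) (hb : 0 ≤ b) (w y : ℝ) :
    w / (a + b) ≤ max y ((w - b * y) / a) := by
  rw [div_le_iff₀ (by positivity)]
  have h1 := le_max_left y ((w - b * y) / a)
  have h2 := (div_le_iff₀ ha).1 (le_max_right y ((w - b * y) / a))
  nlinarith

lemma abs_max_sub_div_le {a b w : ℝ} (ha : 0 < a) (hb : 0 ≤ b) (hw : 0 ≤ w) (y : ℝ) :
    |max y ((w - b * y) / a) - w / a| ≤ (1 + b / a) * |y| := by
  have hslope : (w - b * y) / a = w / a - b / a * y := by ring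
  have hba : 0 ≤ b / a := by positivity
  have hwa : 0 ≤ w / a := by positivity
  have hby := mul_le_mul_of_nonneg_left (le_abs_self y) hba
  have hby' := mul_le_mul_of_nonneg_left (neg_abs_le y) hba
  rw [hslope, abs_le]
  constructor
  · linarith [le_max_right y (w / a - b / a * y), abs_nonneg y]
  · rw [sub_le_iff_le_add, max_le_iff]
    constructor <;> linarith [le_abs_self y, abs_nonneg y, mul_nonneg hba (abs_nonneg y)]

lemma measureReal_prod_eq_integral {α β : Type*} [MeasurableSpace α] [MeasurableSpace β]
    {μ : Measure α} {ν : Measure β} [IsFiniteMeasure ν] {A : Set (α × β)} (hA : MeasurableSet A) :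
    (μ.prod ν).real A = ∫ x, ν.real (Prod.mk x ⁻¹' A) ∂μ := by
  rw [measureReal_def, Measure.prod_apply hA]
  exact (integral_toReal (measurable_measure_prodMk_left hA).aemeasurable
    (ae_of_all _ fun x ↦ measure_lt_top _ _)).symm

lemma measurableSet_le_add_inter (a b w : ℝ) :
    MeasurableSet {p : ℝ × ℝ | w ≤ a * p.1 + b * p.2 ∧ p.2 ≤ p.1} :=
  .inter (s₁ := {p : ℝ × ℝ | w ≤ a * p.1 + b * p.2}) (measurableSet_le (by fun_prop) (by fun_prop))
    (measurableSet_le measurable_snd measurable_fst)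

namespace IsOneSidedStable

variable {C Y : ℝ} {m : Measure ℝ}

lemma exists_abs_measureReal_Ici_sub_le_add (h : IsOneSidedStable C Y m) :
    ∃ B, 0 ≤ B ∧ ∀ r, 0 < r → ∀ x, r ≤ x → ∀ y, r ≤ y →
      |m.real (Ici x) - C / Y * y ^ (-Y)| ≤
        B * r ^ (-(2 * Y)) + C * r ^ (-(Y + 1)) * |x - y| := by
  obtain ⟨B, hB0, hB⟩ := h.exists_abs_measureReal_Ici_sub_le
  have hY : 0 < Y := zero_lt_one.trans h.one_lt
  have hC := h.pos
  refine ⟨B, hB0, fun r hr x hx y hy ↦ (abs_sub_le _ (C / Y * x ^ (-Y)) _).trans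
    (add_le_add ?_ ?_)⟩
  · refine (hB x (hr.trans_le hx)).trans ?_
    exact mul_le_mul_of_nonneg_left (Real.rpow_le_rpow_of_nonpos hr hx (by linarith)) hB0
  · calc |C / Y * x ^ (-Y) - C / Y * y ^ (-Y)| = C / Y * |x ^ (-Y) - y ^ (-Y)| := by
          rw [← mul_sub, abs_mul, abs_of_nonneg (by positivity : 0 ≤ C / Y)]
      _ ≤ C / Y * (Y * r ^ (-(Y + 1)) * |x - y|) := by
        gcongr
        exact abs_rpow_neg_sub_rpow_neg_le hY.le hr hx hy
      _ = C * r ^ (-(Y + 1)) * |x - y| := by field_simp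

lemma exists_abs_measureReal_le_add_sub_le (h : IsOneSidedStable C Y m) {a b : ℝ} (ha : 0 < a)
    (hb : 0 ≤ b) :
    ∃ c, 0 ≤ c ∧ ∀ w, 1 ≤ w → ∀ y,
      |m.real {x | w ≤ a * x + b * y ∧ y ≤ x} - C * a ^ Y / Y * w ^ (-Y)| ≤
        c * (1 + |y|) * w ^ (-(Y + 1)) := by
  obtain ⟨B, hB0, hB⟩ := h.exists_abs_measureReal_Ici_sub_le_add
  have hY := h.one_lt
  have hC := h.pos
  have hθ : 0 < a + b := by positivity
  set c₁ := B * (a + b) ^ (2 * Y)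
  set c₂ := C * (a + b) ^ (Y + 1) * (1 + b / a)
  have hc₁ : 0 ≤ c₁ := by positivity
  have hc₂ : 0 ≤ c₂ := by positivity
  refine ⟨c₁ + c₂, by positivity, fun w hw y ↦ ?_⟩
  have hw0 : 0 < w := zero_lt_one.trans_le hw
  have hrpow (p : ℝ) : (w / (a + b)) ^ (-p) = (a + b) ^ p * w ^ (-p) := by
    rw [Real.div_rpow hw0.le hθ.le, Real.rpow_neg hθ.le, div_inv_eq_mul, mul_comm]
  have hlead : C / Y * (w / a) ^ (-Y) = C * a ^ Y / Y * w ^ (-Y) := by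
    rw [Real.div_rpow hw0.le ha.le, Real.rpow_neg ha.le, div_inv_eq_mul]
    ring
  rw [setOf_le_add_inter_eq_Ici ha, ← hlead]
  set T := max y ((w - b * y) / a)
  calc |m.real (Ici T) - C / Y * (w / a) ^ (-Y)|
      ≤ B * (w / (a + b)) ^ (-(2 * Y)) + C * (w / (a + b)) ^ (-(Y + 1)) * |T - w / a| :=
        hB _ (by positivity) T (div_add_le_max ha hb w y) _ (by gcongr; linarith)
    _ ≤ B * (w / (a + b)) ^ (-(2 * Y)) +
          C * (w / (a + b)) ^ (-(Y + 1)) * ((1 + b / a) * |y|) := by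
        gcongr
        exact abs_max_sub_div_le ha hb hw0.le y
    _ = c₁ * w ^ (-(2 * Y)) + c₂ * |y| * w ^ (-(Y + 1)) := by
        rw [hrpow, hrpow]
        ring
    _ ≤ c₁ * w ^ (-(Y + 1)) + c₂ * |y| * w ^ (-(Y + 1)) := by
        gcongr
        linarith
    _ ≤ (c₁ + c₂) * (1 + |y|) * w ^ (-(Y + 1)) := by
        rw [← add_mul]
        gcongr
        linarith [mul_nonneg hc₁ (abs_nonneg y)]

lemma integrable_one_add_abs (h : IsOneSidedStable C Y m) :
    Integrable (fun x ↦ 1 + |x|) m :=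
  have := h.isProbabilityMeasure
  (integrable_const 1).add h.integrable_id.abs

lemma exists_abs_measureReal_prod_le_add_sub_le (h : IsOneSidedStable C Y m) {a b : ℝ}
    (ha : 0 < a) (hb : 0 ≤ b) :
    ∃ c, 0 ≤ c ∧ ∀ w, 1 ≤ w →
      |(m.prod m).real {p | w ≤ a * p.2 + b * p.1 ∧ p.1 ≤ p.2} - C * a ^ Y / Y * w ^ (-Y)| ≤
        c * w ^ (-(Y + 1)) := by
  have := h.isProbabilityMeasure
  obtain ⟨c, hc0, hc⟩ := h.exists_abs_measureReal_le_add_sub_le ha hb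
  refine ⟨c * ∫ y, (1 + |y|) ∂m, mul_nonneg hc0 (integral_nonneg fun y ↦ by positivity),
    fun w hw ↦ ?_⟩
  set A := {p : ℝ × ℝ | w ≤ a * p.2 + b * p.1 ∧ p.1 ≤ p.2}
  have hA : MeasurableSet A :=
    measurable_swap (measurableSet_le_add_inter a b w)
  have hslice : Integrable (fun y ↦ m.real (Prod.mk y ⁻¹' A)) m :=
    Integrable.of_bound (measurable_measure_prodMk_left hA).ennreal_toReal.aestronglyMeasurable 1
      (ae_of_all _ fun y ↦ (Real.norm_of_nonneg measureReal_nonneg).trans_le measureReal_le_one)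
  have hconst : C * a ^ Y / Y * w ^ (-Y) = ∫ _, C * a ^ Y / Y * w ^ (-Y) ∂m := by simp
  rw [measureReal_prod_eq_integral hA, hconst, ← integral_sub hslice (integrable_const _),
    ← Real.norm_eq_abs]
  refine (norm_integral_le_of_norm_le
    ((h.integrable_one_add_abs.const_mul c).mul_const (w ^ (-(Y + 1))))
    (ae_of_all _ fun y ↦ hc w hw y)).trans_eq ?_
  rw [integral_mul_const, integral_const_mul]

end IsOneSidedStable

end PairTail

section TiltedSpread

/-- The random variable `Z⁺ + Ũ` of the third-order coefficient, as a function of the pair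
`(U, V)`. -/
noncomputable def tiltedSpread (M G : ℝ) (p : ℝ × ℝ) : ℝ :=
  max (p.1 - p.2) 0 + ((M - 1) * p.1 + (G + 1) * p.2)

lemma measurable_tiltedSpread (M G : ℝ) : Measurable (tiltedSpread M G) := by
  unfold tiltedSpread
  fun_prop

lemma le_tiltedSpread (M G : ℝ) (p : ℝ × ℝ) : M * p.1 + G * p.2 ≤ tiltedSpread M G p := by
  unfold tiltedSpread
  linarith [le_max_left (p.1 - p.2) 0]

lemma setOf_le_tiltedSpread (M G w : ℝ) :
    {p | w ≤ tiltedSpread M G p} = {p | w ≤ M * p.1 + G * p.2 ∧ p.2 ≤ p.1} ∪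
      {p | w ≤ (G + 1) * p.2 + (M - 1) * p.1 ∧ p.1 ≤ p.2} := by
  ext p
  simp only [mem_ofPred_eq, mem_union, tiltedSpread]
  rcases le_total p.2 p.1 with h | h
  · rw [max_eq_left (sub_nonneg.2 h)]
    exact ⟨fun hw ↦ .inl ⟨by linarith, h⟩, by rintro (hw | hw) <;> linarith⟩
  · rw [max_eq_right (sub_nonpos.2 h)]
    exact ⟨fun hw ↦ .inr ⟨by linarith, h⟩, by rintro (hw | hw) <;> linarith⟩

lemma Gamma_two_sub_div {Y : ℝ} (h0 : Y ≠ 0) (h1 : Y ≠ 1) :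
    Real.Gamma (2 - Y) / (Y - 1) = Y * Real.Gamma (-Y) := by
  have hfst := Real.Gamma_add_one (s := -Y) (neg_ne_zero.2 h0)
  have hsnd := Real.Gamma_add_one (s := -Y + 1) (by contrapose! h1; linarith)
  rw [show -Y + 1 + 1 = 2 - Y by ring] at hsnd
  rw [hsnd, hfst, div_eq_iff (sub_ne_zero.2 h1)]
  ring

/-- The coefficient of `h ^ 2` in the Laplace transform at `h` of `tiltedSpread M G` under
`m.prod m`. It is the negative of the coefficient `d₃₂` of the implied volatility expansion. -/
noncomputable def tiltedSpreadCoeff (C Y M G : ℝ) (m : Measure ℝ) : ℝ :=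
  ∫ p, min (tiltedSpread M G p) 0 ^ 2 / 2 ∂m.prod m +
    ∫ w in Ioi (0 : ℝ), w * ((m.prod m).real {p | w ≤ tiltedSpread M G p} -
      C * (M ^ Y + (G + 1) ^ Y) / Y * w ^ (-Y))

namespace IsOneSidedStable

variable {C Y M G : ℝ} {m : Measure ℝ}

lemma integrable_exp_prod (h : IsOneSidedStable C Y m) {a b : ℝ} (ha : 0 ≤ a) (hb : 0 ≤ b) :
    Integrable (fun p : ℝ × ℝ ↦ Real.exp (-(a * p.1 + b * p.2))) (m.prod m) := by
  have := h.isProbabilityMeasure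
  simp only [neg_add, Real.exp_add]
  exact (h.integrable_exp ha).mul_prod (h.integrable_exp hb)

lemma integrable_linear_prod (h : IsOneSidedStable C Y m) (a b : ℝ) :
    Integrable (fun p : ℝ × ℝ ↦ a * p.1 + b * p.2) (m.prod m) :=
  have := h.isProbabilityMeasure
  ((h.integrable_id.comp_fst m).const_mul a).add ((h.integrable_id.comp_snd m).const_mul b)

lemma integral_linear_prod (h : IsOneSidedStable C Y m) (a b : ℝ) :
    ∫ p : ℝ × ℝ, (a * p.1 + b * p.2) ∂m.prod m = 0 := by
  have := h.isProbabilityMeasure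
  rw [integral_add ((h.integrable_id.comp_fst m).const_mul a)
      ((h.integrable_id.comp_snd m).const_mul b), integral_const_mul, integral_const_mul,
    integral_fun_fst (fun x ↦ x), integral_fun_snd (fun x ↦ x), h.integral_id]
  simp

lemma integrable_max_sub_zero (h : IsOneSidedStable C Y m) :
    Integrable (fun p : ℝ × ℝ ↦ max (p.1 - p.2) 0) (m.prod m) := by
  simpa [← sub_eq_add_neg] using (h.integrable_linear_prod 1 (-1)).pos_part

lemma integrable_tiltedSpread (h : IsOneSidedStable C Y m) (M G : ℝ) :
    Integrable (tiltedSpread M G) (m.prod m) :=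
  h.integrable_max_sub_zero.add (h.integrable_linear_prod (M - 1) (G + 1))

lemma integral_tiltedSpread (h : IsOneSidedStable C Y m) (M G : ℝ) :
    ∫ p, tiltedSpread M G p ∂m.prod m = ∫ p, max (p.1 - p.2) 0 ∂m.prod m := by
  unfold tiltedSpread
  rw [integral_add h.integrable_max_sub_zero (h.integrable_linear_prod (M - 1) (G + 1)),
    h.integral_linear_prod, add_zero]

lemma integrable_exp_tiltedSpread (h : IsOneSidedStable C Y m) (hM : 0 ≤ M) (hG : 0 ≤ G) {l : ℝ}
    (hl : 0 ≤ l) : Integrable (fun p ↦ Real.exp (-(l * tiltedSpread M G p))) (m.prod m) := by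
  refine (h.integrable_exp_prod (mul_nonneg hl hM) (mul_nonneg hl hG)).mono'
    ((measurable_tiltedSpread M G).const_mul l).neg.exp.aestronglyMeasurable
    (ae_of_all _ fun p ↦ ?_)
  rw [Real.norm_of_nonneg (Real.exp_pos _).le, mul_assoc, mul_assoc, ← mul_add]
  gcongr
  exact le_tiltedSpread M G p

lemma aedisjoint_le_prod (h : IsOneSidedStable C Y m) (s t : Set (ℝ × ℝ)) :
    AEDisjoint (m.prod m) (s ∩ {p | p.2 ≤ p.1}) (t ∩ {p | p.1 ≤ p.2}) := by
  have := h.isProbabilityMeasure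
  have := h.nullSingletonClass
  have hdiag : (m.prod m) {p | p.1 = p.2} = 0 := by
    rw [Measure.measure_prod_null (measurableSet_eq_fun measurable_fst measurable_snd)]
    refine ae_of_all _ fun x ↦ ?_
    have hslice : Prod.mk x ⁻¹' {p : ℝ × ℝ | p.1 = p.2} = {x} := by
      ext y
      exact eq_comm
    simp [hslice]
  exact measure_mono_null (fun p hp ↦ le_antisymm hp.2.2 hp.1.2) hdiag

lemma exists_abs_measureReal_le_tiltedSpread_sub_le (h : IsOneSidedStable C Y m) (hM : 1 ≤ M)
    (hG : 0 ≤ G) :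
    ∃ B, ∀ w, 1 ≤ w →
      |(m.prod m).real {p | w ≤ tiltedSpread M G p} -
        C * (M ^ Y + (G + 1) ^ Y) / Y * w ^ (-Y)| ≤ B * w ^ (-(Y + 1)) := by
  have := h.isProbabilityMeasure
  obtain ⟨c₁, -, hc₁⟩ := h.exists_abs_measureReal_prod_le_add_sub_le (zero_lt_one.trans_le hM) hG
  obtain ⟨c₂, -, hc₂⟩ := h.exists_abs_measureReal_prod_le_add_sub_le (a := G + 1) (b := M - 1)
    (by positivity) (sub_nonneg.2 hM)
  refine ⟨c₁ + c₂, fun w hw ↦ ?_⟩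
  set A₁ := {p : ℝ × ℝ | w ≤ M * p.1 + G * p.2 ∧ p.2 ≤ p.1}
  set A₂ := {p : ℝ × ℝ | w ≤ (G + 1) * p.2 + (M - 1) * p.1 ∧ p.1 ≤ p.2}
  have hA₁ : MeasurableSet A₁ := measurableSet_le_add_inter M G w
  have hswap : (m.prod m).real A₁ = (m.prod m).real (Prod.swap ⁻¹' A₁) := by
    rw [Measure.measurePreserving_swap.measureReal_preimage hA₁.nullMeasurableSet]
  have hdisj : AEDisjoint (m.prod m) A₁ A₂ :=
    h.aedisjoint_le_prod {p | w ≤ M * p.1 + G * p.2} {p | w ≤ (G + 1) * p.2 + (M - 1) * p.1}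
  rw [setOf_le_tiltedSpread, measureReal_union₀' hA₁.nullMeasurableSet hdisj, hswap]
  calc |(m.prod m).real (Prod.swap ⁻¹' A₁) + (m.prod m).real A₂ -
        C * (M ^ Y + (G + 1) ^ Y) / Y * w ^ (-Y)|
      = |((m.prod m).real (Prod.swap ⁻¹' A₁) - C * M ^ Y / Y * w ^ (-Y)) +
          ((m.prod m).real A₂ - C * (G + 1) ^ Y / Y * w ^ (-Y))| := by ring_nf
    _ ≤ c₁ * w ^ (-(Y + 1)) + c₂ * w ^ (-(Y + 1)) :=
        (abs_add_le _ _).trans (add_le_add (hc₁ w hw) (hc₂ w hw))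
    _ = (c₁ + c₂) * w ^ (-(Y + 1)) := by ring

theorem tendsto_integral_exp_tiltedSpread_sub_rpow_div_sq (h : IsOneSidedStable C Y m)
    (hM : 1 ≤ M) (hG : 0 ≤ G) :
    Tendsto (fun l : ℝ ↦
        (∫ p, (Real.exp (-(l * tiltedSpread M G p)) - 1 + l * tiltedSpread M G p) ∂m.prod m -
          C * Real.Gamma (-Y) * (M ^ Y + (G + 1) ^ Y) * l ^ Y) / l ^ 2)
      (𝓝[>] 0) (𝓝 (tiltedSpreadCoeff C Y M G m)) := by
  have := h.isProbabilityMeasure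
  obtain ⟨B, hB⟩ := h.exists_abs_measureReal_le_tiltedSpread_sub_le hM hG
  have hY : Y ≠ 0 := (zero_lt_one.trans h.one_lt).ne'
  unfold tiltedSpreadCoeff
  convert tendsto_integral_exp_neg_sub_one_add_sub_rpow_div_sq (measurable_tiltedSpread M G)
    (fun l hl ↦ h.integrable_exp_tiltedSpread (zero_le_one.trans hM) hG hl)
    (h.integrable_tiltedSpread M G) h.one_lt h.lt_two hB using 5
  rw [Gamma_two_sub_div hY h.one_lt.ne']
  field_simp

end IsOneSidedStable

end TiltedSpread

section AbsMoment

lemma one_sub_cos_div_sq_nonneg (u x : ℝ) : 0 ≤ (1 - Real.cos (u * x)) / u ^ 2 :=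
  div_nonneg (sub_nonneg.2 (Real.cos_le_one _)) (sq_nonneg u)

lemma one_sub_cos_div_sq_eq_sinc_sq {u : ℝ} (hu : u ≠ 0) (a : ℝ) :
    (1 - Real.cos (u * a)) / u ^ 2 = Real.sinc (u * a / 2) ^ 2 / 2 * a ^ 2 := by
  rcases eq_or_ne a 0 with rfl | ha
  · simp
  · rw [Real.sinc_of_ne_zero (by positivity), div_pow, Real.sin_sq_eq_half_sub,
      mul_div_cancel₀ _ two_ne_zero]
    field_simp

lemma integrableOn_one_sub_cos_div_sq (x : ℝ) :
    IntegrableOn (fun u : ℝ ↦ (1 - Real.cos (u * x)) / u ^ 2) (Ioi 0) := by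
  have hmeas : Measurable fun u : ℝ ↦ (1 - Real.cos (u * x)) / u ^ 2 := by fun_prop
  rw [← Ioc_union_Ioi_eq_Ioi zero_le_one]
  refine IntegrableOn.union ?_ ?_
  · refine Integrable.mono' (g := fun _ ↦ x ^ 2 / 2) (integrableOn_const (by simp))
      hmeas.aestronglyMeasurable (ae_restrict_of_forall_mem measurableSet_Ioc fun u hu ↦ ?_)
    rw [Real.norm_of_nonneg (one_sub_cos_div_sq_nonneg u x), div_le_iff₀ (pow_pos hu.1 2)]
    linarith [Real.one_sub_sq_div_two_le_cos (x := u * x)]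
  · refine ((integrableOn_Ioi_rpow_of_lt (by norm_num : (-2 : ℝ) < -1) one_pos).const_mul 2).mono'
      hmeas.aestronglyMeasurable (ae_restrict_of_forall_mem measurableSet_Ioi fun u hu ↦ ?_)
    have hu0 : 0 < u := one_pos.trans hu
    rw [Real.norm_of_nonneg (one_sub_cos_div_sq_nonneg u x), Real.rpow_neg hu0.le, Real.rpow_two,
      ← div_eq_mul_inv]
    gcongr
    linarith [Real.neg_one_le_cos (u * x)]

lemma integral_one_sub_cos_div_sq_eq_mul_abs (x : ℝ) :
    ∫ u in Ioi (0 : ℝ), (1 - Real.cos (u * x)) / u ^ 2 =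
      (∫ u in Ioi (0 : ℝ), (1 - Real.cos u) / u ^ 2) * |x| := by
  rcases eq_or_ne x 0 with rfl | hx
  · simp
  · have hx' : 0 < |x| := abs_pos.2 hx
    have hscale := integral_comp_mul_right_Ioi (fun u : ℝ ↦ (1 - Real.cos u) / u ^ 2) 0 hx'
    rw [zero_mul, smul_eq_mul, inv_mul_eq_div, eq_div_iff hx'.ne'] at hscale
    rw [← hscale, mul_assoc, ← sq, sq_abs, ← integral_mul_const]
    refine integral_congr_ae (ae_of_all _ fun u ↦ ?_)
    have hcos : Real.cos (u * |x|) = Real.cos (u * x) := by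
      rw [← Real.cos_abs (u * x), abs_mul, ← Real.cos_abs, abs_mul, abs_abs]
    simp only [hcos, mul_pow, sq_abs]
    field_simp

lemma integrable_prod_one_sub_cos_div_sq {m : Measure ℝ} [SFinite m]
    (hm : Integrable (fun x ↦ x) m) :
    Integrable (fun p : ℝ × ℝ ↦ (1 - Real.cos (p.2 * p.1)) / p.2 ^ 2)
      (m.prod (volume.restrict (Ioi 0))) := by
  rw [integrable_prod_iff (Measurable.aestronglyMeasurable (by fun_prop))]
  refine ⟨ae_of_all _ integrableOn_one_sub_cos_div_sq, ?_⟩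
  simp only [Real.norm_of_nonneg (one_sub_cos_div_sq_nonneg _ _),
    integral_one_sub_cos_div_sq_eq_mul_abs]
  exact hm.abs.const_mul _

lemma integral_integral_one_sub_cos_div_sq {m : Measure ℝ} [SFinite m]
    (hm : Integrable (fun x ↦ x) m) :
    ∫ u in Ioi (0 : ℝ), (∫ x, (1 - Real.cos (u * x)) / u ^ 2 ∂m) =
      (∫ u in Ioi (0 : ℝ), (1 - Real.cos u) / u ^ 2) * ∫ x, |x| ∂m := by
  rw [← integral_integral_swap (f := fun x u : ℝ ↦ (1 - Real.cos (u * x)) / u ^ 2)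
    (integrable_prod_one_sub_cos_div_sq hm)]
  simp only [integral_one_sub_cos_div_sq_eq_mul_abs, integral_const_mul]

lemma integral_Ioi_exp_neg_mul_one_sub_cos (u : ℝ) :
    ∫ x in Ioi (0 : ℝ), Real.exp (-x) * (1 - Real.cos (u * x)) = u ^ 2 * (1 + u ^ 2)⁻¹ := by
  have ha : (-1 + u * I).re < 0 := by simp
  have hint := integrableOn_exp_mul_complex_Ioi ha 0
  have hre : ∀ x : ℝ, (Complex.exp ((-1 + u * I) * x)).re = Real.exp (-x) * Real.cos (u * x) := by
    intro x
    simp [Complex.exp_re]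
  have hcos : ∫ x in Ioi (0 : ℝ), Real.exp (-x) * Real.cos (u * x) = (1 + u ^ 2)⁻¹ := by
    simp only [← hre]
    refine (integral_re hint).trans ?_
    rw [integral_exp_mul_complex_Ioi ha]
    simp [Complex.div_re, Complex.normSq_apply, sq]
  have hcos_int : Integrable (fun x ↦ Real.exp (-x) * Real.cos (u * x))
      (volume.restrict (Ioi 0)) := by
    simpa only [RCLike.re_to_complex, hre] using hint.re
  simp only [mul_sub, mul_one]
  rw [integral_sub (integrableOn_exp_neg_Ioi 0) hcos_int, hcos, integral_exp_neg_Ioi_zero]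
  field_simp
  ring

/- The constant is read off from the standard exponential law, whose characteristic function has
real part `1 / (1 + u²)` and whose mean is `1`. -/
lemma integral_one_sub_cos_div_sq : ∫ u in Ioi (0 : ℝ), (1 - Real.cos u) / u ^ 2 = π / 2 := by
  set m := (volume.restrict (Ioi (0 : ℝ))).withDensity fun x ↦ ENNReal.ofReal (Real.exp (-x))
  have hdens : Measurable fun x : ℝ ↦ ENNReal.ofReal (Real.exp (-x)) := by fun_prop
  have hdens_top : ∀ᵐ x ∂volume.restrict (Ioi (0 : ℝ)), ENNReal.ofReal (Real.exp (-x)) < ⊤ :=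
    ae_of_all _ fun _ ↦ ENNReal.ofReal_lt_top
  have hm : ∀ f : ℝ → ℝ, ∫ x, f x ∂m = ∫ x in Ioi (0 : ℝ), Real.exp (-x) * f x := fun f ↦ by
    rw [integral_withDensity_eq_integral_toReal_smul hdens hdens_top]
    simp only [ENNReal.toReal_ofReal (Real.exp_pos _).le, smul_eq_mul]
  have hid : IntegrableOn (fun x : ℝ ↦ x * Real.exp (-x)) (Ioi 0) := by
    simpa using integrableOn_rpow_mul_exp_neg_mul_rpow (s := 1) (by norm_num) one_pos one_pos
  have hid' : Integrable (fun x ↦ x) m := by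
    rw [integrable_withDensity_iff hdens hdens_top]
    simp only [ENNReal.toReal_ofReal (Real.exp_pos _).le]
    exact hid
  have habs : ∫ x, |x| ∂m = 1 := by
    rw [hm, ← Real.Gamma_two, Real.Gamma_eq_integral two_pos]
    refine setIntegral_congr_fun measurableSet_Ioi fun x hx ↦ ?_
    norm_num [abs_of_pos (mem_Ioi.1 hx)]
  calc ∫ u in Ioi (0 : ℝ), (1 - Real.cos u) / u ^ 2
      = ∫ u in Ioi (0 : ℝ), (∫ x, (1 - Real.cos (u * x)) / u ^ 2 ∂m) := by
        rw [integral_integral_one_sub_cos_div_sq hid', habs, mul_one]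
    _ = ∫ u in Ioi (0 : ℝ), (1 + u ^ 2)⁻¹ := by
        refine setIntegral_congr_fun measurableSet_Ioi fun u hu ↦ ?_
        simp only [hm, ← mul_div_assoc]
        rw [integral_div, integral_Ioi_exp_neg_mul_one_sub_cos,
          mul_div_cancel_left₀ _ (pow_ne_zero 2 (mem_Ioi.1 hu).ne')]
    _ = π / 2 := by simp

lemma integral_one_sub_re_charFun_div_sq {m : Measure ℝ} [IsProbabilityMeasure m]
    (hm : Integrable (fun x ↦ x) m) :
    IntegrableOn (fun u ↦ (1 - (charFun m u).re) / u ^ 2) (Ioi 0) ∧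
    ∫ u in Ioi (0 : ℝ), (1 - (charFun m u).re) / u ^ 2 = π / 2 * ∫ x, |x| ∂m := by
  have hslice : ∀ u, ∫ x, (1 - Real.cos (u * x)) / u ^ 2 ∂m = (1 - (charFun m u).re) / u ^ 2 := by
    intro u
    have hint : Integrable (fun x : ℝ ↦ Complex.exp (u * x * I)) m :=
      Integrable.of_bound (by fun_prop) 1 (ae_of_all _ fun x ↦ by
        rw [← Complex.ofReal_mul, Complex.norm_exp_ofReal_mul_I])
    have hre : ∀ x : ℝ, (Complex.exp (u * x * I)).re = Real.cos (u * x) := fun x ↦ by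
      rw [← Complex.ofReal_mul, Complex.exp_ofReal_mul_I_re]
    have hcos_int : Integrable (fun x ↦ Real.cos (u * x)) m := by
      simpa only [RCLike.re_to_complex, hre] using hint.re
    have hcos : ∫ x, Real.cos (u * x) ∂m = (charFun m u).re := by
      rw [charFun_apply_real]
      simp only [← hre]
      exact integral_re hint
    rw [integral_div, integral_sub (integrable_const _) hcos_int, hcos]
    simp
  simp only [← hslice]
  exact ⟨(integrable_prod_one_sub_cos_div_sq hm).integral_prod_right,
    by rw [integral_integral_one_sub_cos_div_sq hm, integral_one_sub_cos_div_sq]⟩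

end AbsMoment

section ShiftedMoment

variable {m : Measure ℝ} [IsProbabilityMeasure m] {φ : ℝ → ℝ}

lemma integral_abs_add_sub_abs (hm : Integrable (fun x ↦ x) m) (hφ : ∀ u, charFun m u = φ u)
    (a : ℝ) :
    ∫ x, (|x + a| - |x|) ∂m =
      2 / π * ∫ u in Ioi (0 : ℝ), (1 - Real.cos (u * a)) / u ^ 2 * φ u := by
  have hshift : AEMeasurable (fun x ↦ x + a) m := by fun_prop
  have := Measure.isProbabilityMeasure_map hshift
  have hadd : Integrable (fun x ↦ x + a) m := hm.add (integrable_const a)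
  have hchar : ∀ u, (charFun (m.map fun x ↦ x + a) u).re = Real.cos (u * a) * φ u := by
    intro u
    rw [charFun_map_add_const, hφ, Complex.re_ofReal_mul, Complex.exp_ofReal_mul_I_re, mul_comm]
    simp
  obtain ⟨h₁, e₁⟩ := integral_one_sub_re_charFun_div_sq
    ((integrable_map_measure (by fun_prop) hshift).2 hadd)
  obtain ⟨h₀, e₀⟩ := integral_one_sub_re_charFun_div_sq hm
  rw [integral_map hshift (by fun_prop)] at e₁
  simp only [hchar] at h₁ e₁
  simp only [hφ, Complex.ofReal_re] at h₀ e₀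
  rw [integral_sub hadd.abs hm.abs, ← mul_right_inj' (by positivity : π / 2 ≠ 0), mul_sub, ← e₁,
    ← e₀, ← integral_sub h₁ h₀, ← mul_assoc, show π / 2 * (2 / π) = 1 by field_simp,
    one_mul]
  congr 1
  ext u
  ring

lemma tendsto_integral_abs_add_sub_abs_div_sq (hm : Integrable (fun x ↦ x) m)
    (hφ : ∀ u, charFun m u = φ u) (hφ_int : IntegrableOn φ (Ioi 0)) :
    Tendsto (fun a ↦ (∫ x, (|x + a| - |x|) ∂m) / a ^ 2) (𝓝[≠] 0)
      (𝓝 ((∫ u in Ioi 0, φ u) / π)) := by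
  have hsinc : Tendsto (fun a : ℝ ↦ ∫ u in Ioi 0, Real.sinc (u * a / 2) ^ 2 / 2 * φ u) (𝓝[≠] 0)
      (𝓝 (∫ u in Ioi 0, 1 / 2 * φ u)) := by
    refine tendsto_integral_filter_of_dominated_convergence (fun u ↦ ‖φ u‖)
      (Eventually.of_forall fun a ↦ ?_) (Eventually.of_forall fun a ↦ ae_of_all _ fun u ↦ ?_)
      hφ_int.norm (ae_of_all _ fun u ↦ ?_)
    · have := Real.continuous_sinc
      exact Continuous.aestronglyMeasurable (by fun_prop) |>.mul hφ_int.aestronglyMeasurable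
    · rw [norm_mul, Real.norm_of_nonneg (by positivity)]
      refine mul_le_of_le_one_left (norm_nonneg _) ?_
      nlinarith [(sq_le_one_iff_abs_le_one _).2 (Real.abs_sinc_le_one (u * a / 2))]
    · have hcont : Continuous fun a : ℝ ↦ Real.sinc (u * a / 2) ^ 2 / 2 * φ u := by
        have := Real.continuous_sinc
        fun_prop
      simpa using (hcont.tendsto 0).mono_left nhdsWithin_le_nhds
  rw [integral_const_mul] at hsinc
  convert (hsinc.const_mul (2 / π)).congr' ?_ using 2
  · field_simp
  filter_upwards [self_mem_nhdsWithin] with a ha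
  rw [integral_abs_add_sub_abs hm hφ, mul_div_assoc, ← integral_div]
  congr 1
  refine setIntegral_congr_fun measurableSet_Ioi fun u hu ↦ ?_
  simp only [one_sub_cos_div_sq_eq_sinc_sq (ne_of_gt hu)]
  have ha : a ≠ 0 := ha
  field_simp

lemma max_zero_eq_half_abs_add (x : ℝ) : max x 0 = (|x| + x) / 2 := by
  rcases le_total 0 x with hx | hx
  · rw [max_eq_left hx, abs_of_nonneg hx, add_self_div_two]
  · rw [max_eq_right hx, abs_of_nonpos hx, neg_add_cancel, zero_div]

lemma integral_max_zero_of_charFun_eq_exp {s q : ℝ} (hs : 0 < s) (hq : 1 < q)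
    (hm : Integrable (fun x ↦ x) m) (hmean : ∫ x, x ∂m = 0)
    (hφ : ∀ u, charFun m u = (Real.exp (-(s * |u| ^ q)) : ℝ)) :
    ∫ x, max x 0 ∂m = 1 / π * Real.Gamma (1 - 1 / q) * s ^ (1 / q) := by
  have habs : π / 2 * ∫ x, |x| ∂m = s ^ (1 / q) * Real.Gamma (1 - 1 / q) := by
    rw [← (integral_one_sub_re_charFun_div_sq hm).2]
    simp only [hφ, Complex.ofReal_re]
    calc ∫ u in Ioi (0 : ℝ), (1 - Real.exp (-(s * |u| ^ q))) / u ^ 2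
        = ∫ u in Ioi (0 : ℝ), (1 - Real.exp (-(s * u ^ q))) * u ^ (-2 : ℝ) := by
          refine setIntegral_congr_fun measurableSet_Ioi fun u hu ↦ ?_
          have hu : 0 < u := hu
          simp only [abs_of_pos hu, Real.rpow_neg hu.le, Real.rpow_two, div_eq_mul_inv]
      _ = s ^ (1 / q) * Real.Gamma (1 - 1 / q) := by
          rw [integral_one_sub_exp_mul_rpow hs (zero_lt_one.trans hq) one_lt_two (by linarith)]
          norm_num
  simp only [max_zero_eq_half_abs_add]
  rw [integral_div, integral_add hm.abs hm, hmean, add_zero]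
  field_simp at habs ⊢
  linarith

theorem isLittleO_integral_max_add_sub_max (hm : Integrable (fun x ↦ x) m)
    (hφ : ∀ u, charFun m u = φ u) (hφ_int : IntegrableOn φ (Ioi 0)) :
    (fun a ↦ ∫ x, (max (x + a) 0 - max x 0) ∂m - a / 2 -
      (∫ u in Ioi 0, φ u) / (2 * π) * a ^ 2) =o[𝓝 0] fun a ↦ a ^ 2 := by
  have habs : ∀ a, ∫ x, (max (x + a) 0 - max x 0) ∂m - a / 2 = (∫ x, (|x + a| - |x|) ∂m) / 2 := by
    intro a
    have hint : Integrable (fun x ↦ |x + a| - |x|) m := (hm.add (integrable_const a)).abs.sub hm.abs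
    have hsplit : ∀ x, max (x + a) 0 - max x 0 = (|x + a| - |x|) / 2 + a / 2 := fun x ↦ by
      rw [max_zero_eq_half_abs_add, max_zero_eq_half_abs_add]; ring
    simp only [hsplit]
    rw [integral_add (hint.div_const 2) (integrable_const _), integral_div]
    simp
  have hlim := (tendsto_integral_abs_add_sub_abs_div_sq hm hφ hφ_int).sub_const
    ((∫ u in Ioi 0, φ u) / π)
  rw [sub_self] at hlim
  rw [← nhdsNE_sup_pure, isLittleO_sup]
  refine ⟨isLittleO_iff_exists_eq_mul.2 ⟨_, (hlim.div_const 2).trans_eq (by simp), ?_⟩, ?_⟩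
  · filter_upwards [self_mem_nhdsWithin] with a ha
    have ha : a ≠ 0 := ha
    simp only [habs, Pi.mul_apply]
    field_simp
  · rw [isLittleO_iff]
    simp

end ShiftedMoment

section Spread

/-- The scale `s` of the symmetric stable law of `U - V`, whose characteristic function is
`exp (-(s * |u| ^ Y))`. -/
noncomputable def spreadScale (C Y : ℝ) : ℝ := -2 * C * Real.Gamma (-Y) * Real.cos (π * Y / 2)

namespace IsOneSidedStable

variable {C Y : ℝ} {m : Measure ℝ}

lemma spreadScale_pos (h : IsOneSidedStable C Y m) : 0 < spreadScale C Y := by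
  have hcos := cos_pi_mul_div_two_neg h.one_lt h.lt_two
  unfold spreadScale
  nlinarith [h.scale_pos]

lemma integral_cexp_prod (h : IsOneSidedStable C Y m) {z w : ℂ} (hz : 0 ≤ z.re) (hw : 0 ≤ w.re) :
    ∫ p : ℝ × ℝ, Complex.exp (-(z * p.1 + w * p.2)) ∂m.prod m =
      Complex.exp ((C * Real.Gamma (-Y) : ℝ) * (z ^ (Y : ℂ) + w ^ (Y : ℂ))) := by
  have := h.isProbabilityMeasure
  simp only [neg_add, Complex.exp_add]
  rw [integral_prod_mul (fun x : ℝ ↦ Complex.exp (-(z * x))) (fun y : ℝ ↦ Complex.exp (-(w * y))),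
    h.integral_cexp hz, h.integral_cexp hw, mul_add, Complex.exp_add]

lemma integral_exp_prod (h : IsOneSidedStable C Y m) {a b : ℝ} (ha : 0 ≤ a) (hb : 0 ≤ b) :
    ∫ p : ℝ × ℝ, Real.exp (-(a * p.1 + b * p.2)) ∂m.prod m =
      Real.exp (C * Real.Gamma (-Y) * (a ^ Y + b ^ Y)) := by
  have := h.isProbabilityMeasure
  simp only [neg_add, Real.exp_add]
  rw [integral_prod_mul (fun x ↦ Real.exp (-(a * x))) (fun y ↦ Real.exp (-(b * y))),
    h.integral_exp ha, h.integral_exp hb, mul_add, Real.exp_add]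

lemma integrable_id_map_sub (h : IsOneSidedStable C Y m) :
    Integrable (fun x ↦ x) ((m.prod m).map fun p ↦ p.1 - p.2) := by
  rw [integrable_map_measure (by fun_prop) (by fun_prop)]
  simpa [Function.comp_def, ← sub_eq_add_neg] using h.integrable_linear_prod 1 (-1)

lemma integral_id_map_sub (h : IsOneSidedStable C Y m) :
    ∫ x, x ∂(m.prod m).map (fun p ↦ p.1 - p.2) = 0 := by
  rw [integral_map (by fun_prop) (by fun_prop)]
  simpa [← sub_eq_add_neg] using h.integral_linear_prod 1 (-1)

lemma charFun_map_sub (h : IsOneSidedStable C Y m) (u : ℝ) :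
    charFun ((m.prod m).map fun p ↦ p.1 - p.2) u =
      (Real.exp (-(spreadScale C Y * |u| ^ Y)) : ℝ) := by
  have hY : 0 < Y := zero_lt_one.trans h.one_lt
  rw [charFun_apply_real, integral_map (by fun_prop) (by fun_prop)]
  calc ∫ p : ℝ × ℝ, Complex.exp (u * (p.1 - p.2 : ℝ) * I) ∂m.prod m
      = ∫ p : ℝ × ℝ, Complex.exp (-(-(I * u) * p.1 + -(I * (-u : ℝ)) * p.2)) ∂m.prod m := by
        refine integral_congr_ae (ae_of_all _ fun p ↦ ?_)
        push_cast
        ring_nf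
    _ = Complex.exp ((C * Real.Gamma (-Y) : ℝ) *
          ((-(I * u)) ^ (Y : ℂ) + (-(I * (-u : ℝ))) ^ (Y : ℂ))) :=
        h.integral_cexp_prod (by simp) (by simp)
    _ = (Real.exp (-(spreadScale C Y * |u| ^ Y)) : ℝ) := by
        rw [neg_I_mul_cpow hY, neg_I_mul_cpow hY, Real.sign_neg, abs_neg, spreadScale]
        push_cast
        ring_nf

lemma integral_max_sub_zero (h : IsOneSidedStable C Y m) :
    ∫ p : ℝ × ℝ, max (p.1 - p.2) 0 ∂m.prod m =
      1 / π * Real.Gamma (1 - 1 / Y) * spreadScale C Y ^ (1 / Y) := by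
  have := h.isProbabilityMeasure
  have := Measure.isProbabilityMeasure_map (μ := m.prod m) (f := fun p ↦ p.1 - p.2) (by fun_prop)
  rw [← integral_max_zero_of_charFun_eq_exp h.spreadScale_pos h.one_lt h.integrable_id_map_sub
    h.integral_id_map_sub h.charFun_map_sub, integral_map (by fun_prop) (by fun_prop)]

lemma isLittleO_integral_max_sub_add_sub_max (h : IsOneSidedStable C Y m) :
    (fun a ↦ ∫ p : ℝ × ℝ, (max (p.1 - p.2 + a) 0 - max (p.1 - p.2) 0) ∂m.prod m - a / 2 -
      spreadScale C Y ^ (-(1 / Y)) * Real.Gamma (1 + 1 / Y) / (2 * π) * a ^ 2)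
        =o[𝓝 0] fun a ↦ a ^ 2 := by
  have := h.isProbabilityMeasure
  have := Measure.isProbabilityMeasure_map (μ := m.prod m) (f := fun p ↦ p.1 - p.2) (by fun_prop)
  have hY : 0 < Y := zero_lt_one.trans h.one_lt
  have hfourier : ∫ u in Ioi (0 : ℝ), Real.exp (-(spreadScale C Y * |u| ^ Y)) =
      spreadScale C Y ^ (-(1 / Y)) * Real.Gamma (1 + 1 / Y) := by
    rw [add_comm, ← neg_div, ← integral_exp_neg_mul_rpow hY h.spreadScale_pos]
    refine setIntegral_congr_fun measurableSet_Ioi fun u hu ↦ ?_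
    have hu : 0 < u := hu
    simp only [abs_of_pos hu, neg_mul]
  have hint : Integrable fun u ↦ Real.exp (-(spreadScale C Y * |u| ^ Y)) := by
    simpa only [neg_mul] using integrable_exp_neg_mul_abs_rpow h.spreadScale_pos hY
  have hlittle := isLittleO_integral_max_add_sub_max h.integrable_id_map_sub h.charFun_map_sub
    hint.integrableOn
  simp only [hfourier] at hlittle
  refine hlittle.congr_left fun a ↦ ?_
  rw [integral_map (by fun_prop) (by fun_prop)]

end IsOneSidedStable

end Spread

section CallPrice

lemma ofReal_mul_cpow {s : ℝ} (hs : 0 < s) {w : ℂ} (hw : w ≠ 0) (y : ℂ) :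
    (s * w) ^ y = (s : ℂ) ^ y * w ^ y := by
  have hs' : (s : ℂ) ≠ 0 := Complex.ofReal_ne_zero.2 hs.ne'
  rw [Complex.cpow_def_of_ne_zero (mul_ne_zero hs' hw), Complex.log_ofReal_mul hs hw,
    Complex.cpow_def_of_ne_zero hs', Complex.cpow_def_of_ne_zero hw, ← Complex.exp_add,
    Complex.ofReal_log hs.le, add_mul]

lemma max_exp_sub_one_zero (x : ℝ) :
    max (Real.exp x - 1) 0 = Real.exp x * (1 - Real.exp (-max x 0)) := by
  rcases le_total 0 x with hx | hx
  · rw [max_eq_left hx, max_eq_left (sub_nonneg.2 (Real.one_le_exp hx)), mul_sub, ← Real.exp_add,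
      add_neg_cancel, Real.exp_zero, mul_one]
  · rw [max_eq_right hx, max_eq_right (sub_nonpos.2 (Real.exp_le_one_iff.2 hx)), neg_zero,
      Real.exp_zero, sub_self, mul_zero]

/-- The Lévy exponent of the CGMY process with drift `c`: at time `t` its characteristic function
is `exp (t * cgmyExponent C G M Y c u)`. -/
noncomputable def cgmyExponent (C G M Y c u : ℝ) : ℂ :=
  I * c * u + (C * Real.Gamma (-Y) : ℝ) *
    ((M - I * u) ^ (Y : ℂ) + (G + I * u) ^ (Y : ℂ) - (M : ℂ) ^ (Y : ℂ) - (G : ℂ) ^ (Y : ℂ))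

/-- The share-measure form of the call price: with `(U, V)` distributed as `m.prod m`, the
expectation of `exp (-h * Ũ) * (1 - exp (-(h * Z + b)⁺))`, where `Z = U - V` and
`Ũ = (M - 1) * U + (G + 1) * V`. -/
noncomputable def tiltedCall (M G : ℝ) (m : Measure ℝ) (h b : ℝ) : ℝ :=
  ∫ p : ℝ × ℝ, Real.exp (-(h * ((M - 1) * p.1 + (G + 1) * p.2))) *
    (1 - Real.exp (-max (h * (p.1 - p.2) + b) 0)) ∂m.prod m

namespace IsOneSidedStable

variable {C Y M G : ℝ} {m : Measure ℝ}

/- The tempered process is an Esscher transform of the difference of two independent one-sided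
stable processes; self-similarity brings time `t` back to time `1`. -/
lemma eq_map_withDensity_of_charFun_eq_cgmyExponent (h : IsOneSidedStable C Y m) (hM : 0 < M)
    (hG : 0 < G) {t c : ℝ} (ht : 0 < t) {μ : Measure ℝ} [IsFiniteMeasure μ]
    (hμ : ∀ u, charFun μ u = Complex.exp (t * cgmyExponent C G M Y c u)) :
    μ = ((m.prod m).withDensity fun p ↦ ENNReal.ofReal
      (Real.exp (-(t * (C * Real.Gamma (-Y) * (M ^ Y + G ^ Y)))) *
        Real.exp (-(t ^ (1 / Y) * M * p.1 + t ^ (1 / Y) * G * p.2)))).map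
      fun p ↦ t ^ (1 / Y) * (p.1 - p.2) + c * t := by
  have := h.isProbabilityMeasure
  have hY : Y ≠ 0 := (zero_lt_one.trans h.one_lt).ne'
  have hr : 0 < t ^ (1 / Y) := Real.rpow_pos_of_pos ht _
  have hrY : (t ^ (1 / Y)) ^ Y = t := by
    rw [← Real.rpow_mul ht.le, one_div_mul_cancel hY, Real.rpow_one]
  set r := t ^ (1 / Y)
  set N := Real.exp (-(t * (C * Real.Gamma (-Y) * (M ^ Y + G ^ Y))))
  have := isFiniteMeasure_withDensity_ofReal
    ((h.integrable_exp_prod (mul_pos hr hM).le (mul_pos hr hG).le).const_mul N).2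
  refine Measure.ext_of_charFun (funext fun u ↦ ?_)
  have hpow {A : ℝ} (hA : 0 < A) (v : ℝ) :
      ((r : ℂ) * (A + I * v)) ^ (Y : ℂ) = t * (A + I * v) ^ (Y : ℂ) := by
    have hne : (A + I * v : ℂ) ≠ 0 := fun h0 ↦ hA.ne' (by simpa using congrArg Complex.re h0)
    rw [ofReal_mul_cpow hr hne, ← Complex.ofReal_cpow hr.le, hrY]
  have hre {A : ℝ} (hA : 0 < A) (v : ℝ) : 0 ≤ ((r : ℂ) * (A + I * v)).re := by
    simpa using (mul_pos hr hA).le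
  have hintegrand (p : ℝ × ℝ) :
      (ENNReal.ofReal (N * Real.exp (-(r * M * p.1 + r * G * p.2)))).toReal •
        Complex.exp (u * (r * (p.1 - p.2) + c * t : ℝ) * I) =
      (N : ℂ) * Complex.exp (I * c * u * t) *
        Complex.exp (-(r * (M + I * (-u : ℝ)) * p.1 + r * (G + I * u) * p.2)) := by
    rw [ENNReal.toReal_ofReal (by positivity), Complex.real_smul]
    simp only [N, Complex.ofReal_mul, Complex.ofReal_exp, ← Complex.exp_add]
    push_cast
    ring_nf
  rw [hμ, charFun_apply_real, integral_map (by fun_prop) (by fun_prop),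
    integral_withDensity_eq_integral_toReal_smul (by fun_prop)
      (ae_of_all _ fun _ ↦ ENNReal.ofReal_lt_top)]
  simp only [hintegrand]
  rw [integral_const_mul, h.integral_cexp_prod (hre hM _) (hre hG u), hpow hM, hpow hG,
    cgmyExponent, Complex.ofReal_exp, ← Complex.exp_add, ← Complex.exp_add]
  push_cast [Complex.ofReal_cpow hM.le, Complex.ofReal_cpow hG.le]
  ring_nf

lemma integral_max_exp_sub_one_eq_tiltedCall (h : IsOneSidedStable C Y m) (hM : 0 < M)
    (hG : 0 < G) {t c : ℝ} (ht : 0 < t)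
    (hc : c = -C * Real.Gamma (-Y) * ((M - 1) ^ Y + (G + 1) ^ Y - M ^ Y - G ^ Y))
    {μ : Measure ℝ} [IsFiniteMeasure μ]
    (hμ : ∀ u, charFun μ u = Complex.exp (t * cgmyExponent C G M Y c u)) :
    ∫ x, max (Real.exp x - 1) 0 ∂μ =
      Real.exp (-(C * Real.Gamma (-Y) * ((M - 1) ^ Y + (G + 1) ^ Y)) * t) *
        tiltedCall M G m (t ^ (1 / Y)) (c * t) := by
  rw [h.eq_map_withDensity_of_charFun_eq_cgmyExponent hM hG ht hμ,
    integral_map (by fun_prop) (by fun_prop),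
    integral_withDensity_eq_integral_toReal_smul (by fun_prop)
      (ae_of_all _ fun _ ↦ ENNReal.ofReal_lt_top),
    tiltedCall, ← integral_const_mul]
  refine integral_congr_ae (ae_of_all _ fun p ↦ ?_)
  simp only [max_exp_sub_one_zero]
  rw [ENNReal.toReal_ofReal (by positivity), smul_eq_mul, ← mul_assoc (Real.exp _ * _),
    ← mul_assoc (Real.exp (-(C * _ * _) * t)), ← Real.exp_add, ← Real.exp_add, ← Real.exp_add, hc]
  ring_nf

end IsOneSidedStable

end CallPrice

section DriftError

lemma abs_mul_exp_neg_sub_exp_neg_sub_le {x y : ℝ} (hx : 0 ≤ x) (hy : 0 ≤ y) (a : ℝ) :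
    |a * (Real.exp (-x) - Real.exp (-y)) - (y - x)| ≤ (|a - 1| + max x y) * |y - x| := by
  have hderiv (z : ℝ) :
      HasDerivAt (fun z ↦ -(a * Real.exp (-z)) - z) (a * Real.exp (-z) - 1) z := by
    simpa using (((hasDerivAt_neg z).exp.const_mul a).fun_neg).fun_sub (hasDerivAt_id' z)
  have hbound {z : ℝ} (hz : z ∈ Icc 0 (max x y)) :
      ‖a * Real.exp (-z) - 1‖ ≤ |a - 1| + max x y := by
    have hle : |Real.exp (-z) - 1| ≤ z := by
      rw [abs_sub_comm, abs_of_nonneg (one_sub_exp_neg_nonneg hz.1)]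
      linarith [Real.one_sub_le_exp_neg z]
    calc ‖a * Real.exp (-z) - 1‖ = |(a - 1) * Real.exp (-z) + (Real.exp (-z) - 1)| := by
          rw [Real.norm_eq_abs]
          ring_nf
      _ ≤ |a - 1| * Real.exp (-z) + |Real.exp (-z) - 1| := by
          refine (abs_add_le _ _).trans_eq ?_
          rw [abs_mul, Real.abs_exp]
      _ ≤ |a - 1| + max x y :=
          add_le_add (mul_le_of_le_one_right (abs_nonneg _)
            (Real.exp_le_one_iff.2 (neg_nonpos.2 hz.1))) (hle.trans hz.2)
  have hmean := (convex_Icc 0 (max x y)).norm_image_sub_le_of_norm_hasDerivWithin_le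
    (fun z _ ↦ (hderiv z).hasDerivWithinAt) (fun z ↦ hbound) ⟨hx, le_max_left x y⟩
    ⟨hy, le_max_right x y⟩
  rw [Real.norm_eq_abs, Real.norm_eq_abs] at hmean
  calc |a * (Real.exp (-x) - Real.exp (-y)) - (y - x)|
      = |-(a * Real.exp (-y)) - y - (-(a * Real.exp (-x)) - x)| := by ring_nf
    _ ≤ (|a - 1| + max x y) * |y - x| := hmean

lemma abs_exp_neg_mul_sub_one_le {h : ℝ} (hh : h ∈ Icc (0 : ℝ) 1) (x : ℝ) :
    |Real.exp (-(h * x)) - 1| ≤ h * (|x| + Real.exp (-x)) := by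
  have hconv := convexOn_exp.2 (mem_univ (-x)) (mem_univ 0) hh.1 (sub_nonneg.2 hh.2) (by ring)
  simp only [smul_eq_mul, mul_zero, add_zero, Real.exp_zero, mul_one, mul_neg] at hconv
  have hlow := Real.one_sub_le_exp_neg (h * x)
  rw [abs_le]
  constructor
  · nlinarith [mul_nonneg hh.1 (Real.exp_pos (-x)).le,
      mul_le_mul_of_nonneg_left (le_abs_self x) hh.1]
  · linarith [mul_nonneg hh.1 (abs_nonneg x), hh.1]

lemma abs_max_add_sub_max_le (x b : ℝ) : |max (x + b) 0 - max x 0| ≤ |b| := by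
  simpa using abs_max_sub_max_le_abs (x + b) x 0

lemma integrable_max_add_sub_max {α : Type*} [MeasurableSpace α] {Q : Measure α}
    [IsFiniteMeasure Q] {D : α → ℝ} (hD : Measurable D) (b : ℝ) :
    Integrable (fun p ↦ max (D p + b) 0 - max (D p) 0) Q :=
  (integrable_const |b|).mono' (by fun_prop) (ae_of_all _ fun p ↦ abs_max_add_sub_max_le _ _)

namespace IsOneSidedStable

variable {C Y M G l : ℝ} {m : Measure ℝ}

lemma integrable_exp_neg_mul_linear (h : IsOneSidedStable C Y m) (hM : 1 ≤ M) (hG : 0 ≤ G)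
    (hl : 0 ≤ l) :
    Integrable (fun p : ℝ × ℝ ↦ Real.exp (-(l * ((M - 1) * p.1 + (G + 1) * p.2)))) (m.prod m) := by
  refine (h.integrable_exp_prod (mul_nonneg hl (sub_nonneg.2 hM)) (b := l * (G + 1))
    (by positivity)).congr (ae_of_all _ fun p ↦ ?_)
  ring_nf

lemma integral_exp_neg_mul_linear (h : IsOneSidedStable C Y m) (hM : 1 ≤ M) (hG : 0 ≤ G)
    (hl : 0 ≤ l) :
    ∫ p : ℝ × ℝ, Real.exp (-(l * ((M - 1) * p.1 + (G + 1) * p.2))) ∂m.prod m =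
      Real.exp (C * Real.Gamma (-Y) * ((M - 1) ^ Y + (G + 1) ^ Y) * l ^ Y) := by
  have hM' := sub_nonneg.2 hM
  have hprod := h.integral_exp_prod (mul_nonneg hl hM') (b := l * (G + 1)) (by positivity)
  rw [Real.mul_rpow hl hM', Real.mul_rpow hl (by positivity)] at hprod
  simp only [mul_add, ← mul_assoc] at hprod ⊢
  rw [hprod]
  ring_nf

lemma integrable_tiltedCall (h : IsOneSidedStable C Y m) (hM : 1 ≤ M) (hG : 0 ≤ G)
    (hl : 0 ≤ l) (b : ℝ) :
    Integrable (fun p : ℝ × ℝ ↦ Real.exp (-(l * ((M - 1) * p.1 + (G + 1) * p.2))) *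
      (1 - Real.exp (-max (l * (p.1 - p.2) + b) 0))) (m.prod m) := by
  refine (h.integrable_exp_neg_mul_linear hM hG hl).mul_bdd (c := 1) (by fun_prop)
    (ae_of_all _ fun p ↦ ?_)
  rw [Real.norm_of_nonneg (one_sub_exp_neg_nonneg (le_max_right _ _))]
  exact one_sub_exp_neg_le_one _

/- Replacing `1 - exp (-x⁺)` by its value at zero drift plus the increment of `x⁺` isolates the
drift `b` in an expectation that no longer involves the tilt. -/
lemma tiltedCall_sub_eq_integral (h : IsOneSidedStable C Y m) (hM : 1 ≤ M) (hG : 0 ≤ G)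
    (hl : 0 ≤ l) (b : ℝ) :
    tiltedCall M G m l b -
        (Real.exp (C * Real.Gamma (-Y) * ((M - 1) ^ Y + (G + 1) ^ Y) * l ^ Y) -
          ∫ p, Real.exp (-(l * tiltedSpread M G p)) ∂m.prod m +
          ∫ p : ℝ × ℝ, (max (l * (p.1 - p.2) + b) 0 - max (l * (p.1 - p.2)) 0) ∂m.prod m) =
      ∫ p : ℝ × ℝ, (Real.exp (-(l * ((M - 1) * p.1 + (G + 1) * p.2))) *
        (Real.exp (-max (l * (p.1 - p.2)) 0) - Real.exp (-max (l * (p.1 - p.2) + b) 0)) -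
        (max (l * (p.1 - p.2) + b) 0 - max (l * (p.1 - p.2)) 0)) ∂m.prod m := by
  have := h.isProbabilityMeasure
  have hlin := h.integrable_exp_neg_mul_linear hM hG hl
  have hspread := h.integrable_exp_tiltedSpread (zero_le_one.trans hM) hG hl
  have hdrift := integrable_max_add_sub_max (Q := m.prod m)
    (D := fun p : ℝ × ℝ ↦ l * (p.1 - p.2)) (by fun_prop) b
  rw [tiltedCall, ← h.integral_exp_neg_mul_linear hM hG hl, ← integral_sub' hlin hspread,
    ← integral_add' (hlin.sub hspread) hdrift,
    ← integral_sub' (h.integrable_tiltedCall hM hG hl b) ((hlin.sub hspread).add hdrift)]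
  refine integral_congr_ae (ae_of_all _ fun p ↦ ?_)
  have hexp : Real.exp (-(l * tiltedSpread M G p)) =
      Real.exp (-(l * ((M - 1) * p.1 + (G + 1) * p.2))) * Real.exp (-max (l * (p.1 - p.2)) 0) := by
    rw [← Real.exp_add, tiltedSpread, ← mul_zero l, ← mul_max_of_nonneg _ _ hl, mul_zero]
    ring_nf
  simp only [Pi.add_apply, Pi.sub_apply, hexp]
  ring

lemma exists_abs_tiltedCall_sub_le (h : IsOneSidedStable C Y m) (hM : 1 ≤ M) (hG : 0 ≤ G) :
    ∃ K, ∀ l ∈ Icc (0 : ℝ) 1, ∀ b, |tiltedCall M G m l b -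
        (Real.exp (C * Real.Gamma (-Y) * ((M - 1) ^ Y + (G + 1) ^ Y) * l ^ Y) -
          ∫ p, Real.exp (-(l * tiltedSpread M G p)) ∂m.prod m +
          ∫ p : ℝ × ℝ, (max (l * (p.1 - p.2) + b) 0 - max (l * (p.1 - p.2)) 0) ∂m.prod m)| ≤
      (K * l + |b|) * |b| := by
  have := h.isProbabilityMeasure
  have hexp := h.integrable_exp_neg_mul_linear hM hG zero_le_one
  simp only [one_mul] at hexp
  let k (p : ℝ × ℝ) : ℝ := |(M - 1) * p.1 + (G + 1) * p.2| +
    Real.exp (-((M - 1) * p.1 + (G + 1) * p.2)) + max (p.1 - p.2) 0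
  have hk : Integrable k (m.prod m) :=
    ((h.integrable_linear_prod _ _).abs.add hexp).add h.integrable_max_sub_zero
  refine ⟨∫ p, k p ∂m.prod m, fun l hl b ↦ ?_⟩
  have hbound : Integrable (fun p ↦ (k p * l + |b|) * |b|) (m.prod m) :=
    ((hk.mul_const l).add (integrable_const |b|)).mul_const |b|
  have hint : ∫ p, (k p * l + |b|) * |b| ∂m.prod m = ((∫ p, k p ∂m.prod m) * l + |b|) * |b| := by
    rw [integral_mul_const, integral_add (hk.mul_const l) (integrable_const _),
      integral_mul_const, integral_const, probReal_univ, one_smul]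
  rw [h.tiltedCall_sub_eq_integral hM hG hl.1, ← Real.norm_eq_abs, ← hint]
  refine norm_integral_le_of_norm_le hbound (ae_of_all _ fun p ↦ ?_)
  have hshift := abs_max_add_sub_max_le (l * (p.1 - p.2)) b
  have hmul : max (l * (p.1 - p.2)) 0 = l * max (p.1 - p.2) 0 := by
    rw [mul_max_of_nonneg _ _ hl.1, mul_zero]
  have hmax : max (max (l * (p.1 - p.2)) 0) (max (l * (p.1 - p.2) + b) 0) ≤
      l * max (p.1 - p.2) 0 + |b| := by
    rw [← hmul]
    exact max_le (by linarith [abs_nonneg b]) (by linarith [(abs_le.1 hshift).2])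
  have htilt := abs_exp_neg_mul_sub_one_le hl ((M - 1) * p.1 + (G + 1) * p.2)
  have hfactor : |Real.exp (-(l * ((M - 1) * p.1 + (G + 1) * p.2))) - 1| +
      max (max (l * (p.1 - p.2)) 0) (max (l * (p.1 - p.2) + b) 0) ≤ k p * l + |b| := by
    simp only [k]
    linarith
  exact (abs_mul_exp_neg_sub_exp_neg_sub_le (le_max_right _ _) (le_max_right _ _) _).trans
    (mul_le_mul hfactor hshift (abs_nonneg _) ((add_nonneg (abs_nonneg _)
      (le_max_of_le_left (le_max_right _ _))).trans hfactor))

end IsOneSidedStable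

end DriftError

section CallExpansion

lemma tendsto_rpow_nhdsGT_zero {p : ℝ} (hp : 0 < p) :
    Tendsto (fun x : ℝ ↦ x ^ p) (𝓝[>] 0) (𝓝[>] 0) := by
  refine tendsto_nhdsWithin_iff.2 ⟨?_, ?_⟩
  · simpa [Real.zero_rpow hp.ne'] using
      (Real.continuousAt_rpow_const 0 p (.inr hp.le)).tendsto.mono_left nhdsWithin_le_nhds
  · filter_upwards [self_mem_nhdsWithin] with x hx using Real.rpow_pos_of_pos hx p

lemma isLittleO_rpow_rpow_nhdsGT_zero {p q : ℝ} (h : q < p) :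
    (fun x : ℝ ↦ x ^ p) =o[𝓝[>] 0] fun x ↦ x ^ q := by
  refine isLittleO_iff_exists_eq_mul.2 ⟨fun x ↦ x ^ (p - q),
    (tendsto_rpow_nhdsGT_zero (sub_pos.2 h)).mono_right nhdsWithin_le_nhds, ?_⟩
  filter_upwards [self_mem_nhdsWithin] with x hx
  rw [Pi.mul_apply, ← Real.rpow_add hx, sub_add_cancel]

lemma isBigO_rpow_rpow_nhdsGT_zero {p q : ℝ} (h : q ≤ p) :
    (fun x : ℝ ↦ x ^ p) =O[𝓝[>] 0] fun x ↦ x ^ q := by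
  rcases h.eq_or_lt with rfl | h
  · exact isBigO_refl _ _
  · exact (isLittleO_rpow_rpow_nhdsGT_zero h).isBigO

lemma isBigO_exp_sub_one_sub_id :
    (fun x : ℝ ↦ Real.exp x - 1 - x) =O[𝓝 0] fun x ↦ x ^ 2 := by
  simpa [Finset.sum_range_succ, sub_sub] using Real.exp_sub_sum_range_isBigO_pow 2

lemma isBigO_exp_mul_rpow_sub {Y : ℝ} (hY : 0 < Y) (η : ℝ) :
    (fun l : ℝ ↦ Real.exp (η * l ^ Y) - 1 - η * l ^ Y) =O[𝓝[>] 0] fun l ↦ l ^ (2 * Y) := by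
  have hlim : Tendsto (fun l : ℝ ↦ η * l ^ Y) (𝓝[>] 0) (𝓝 0) := by
    simpa using ((tendsto_rpow_nhdsGT_zero hY).mono_right nhdsWithin_le_nhds).const_mul η
  refine (isBigO_exp_sub_one_sub_id.comp_tendsto hlim).trans
    (((isBigO_refl _ _).const_mul_left (η ^ 2)).congr' ?_ EventuallyEq.rfl)
  filter_upwards [self_mem_nhdsWithin] with l (hl : 0 < l)
  rw [Function.comp, mul_pow, two_mul, Real.rpow_add hl, sq (l ^ Y)]

namespace IsOneSidedStable

variable {C Y M G : ℝ} {m : Measure ℝ}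

lemma isLittleO_integral_max_mul_sub_add_sub_max (h : IsOneSidedStable C Y m) (c : ℝ) :
    (fun l : ℝ ↦ ∫ p : ℝ × ℝ,
        (max (l * (p.1 - p.2) + c * l ^ Y) 0 - max (l * (p.1 - p.2)) 0) ∂m.prod m -
      c / 2 * l ^ Y - c ^ 2 / (2 * π) * Real.Gamma (1 + 1 / Y) *
        spreadScale C Y ^ (-(1 / Y)) * l ^ (2 * Y - 1))
      =o[𝓝[>] 0] fun l ↦ l ^ (2 * Y - 1) := by
  have hlim : Tendsto (fun l : ℝ ↦ c * l ^ (Y - 1)) (𝓝[>] 0) (𝓝 0) := by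
    simpa using ((tendsto_rpow_nhdsGT_zero (sub_pos.2 h.one_lt)).mono_right
      nhdsWithin_le_nhds).const_mul c
  have hshift := (isBigO_refl (fun l : ℝ ↦ l) (𝓝[>] 0)).mul_isLittleO
    (h.isLittleO_integral_max_sub_add_sub_max.comp_tendsto hlim)
  have hmul {l : ℝ} (hl : 0 < l) : l * (c * l ^ (Y - 1)) = c * l ^ Y := by
    rw [Real.rpow_sub_one hl.ne']
    field_simp
  have hsq {l : ℝ} (hl : 0 < l) : l * (c * l ^ (Y - 1)) ^ 2 = c ^ 2 * l ^ (2 * Y - 1) := by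
    rw [Real.rpow_sub_one hl.ne', Real.rpow_sub_one hl.ne', two_mul, Real.rpow_add hl]
    field_simp
  refine (hshift.trans_isBigO (k := fun l ↦ l ^ (2 * Y - 1)) ?_).congr' ?_ EventuallyEq.rfl
  · refine ((isBigO_refl _ _).const_mul_left (c ^ 2)).congr' ?_ EventuallyEq.rfl
    filter_upwards [self_mem_nhdsWithin] with l hl using (hsq hl).symm
  · filter_upwards [self_mem_nhdsWithin] with l (hl : 0 < l)
    have hscale (z : ℝ) : max (l * z + c * l ^ Y) 0 - max (l * z) 0 =
        l * (max (z + c * l ^ (Y - 1)) 0 - max z 0) := by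
      rw [mul_sub, mul_max_of_nonneg _ _ hl.le, mul_max_of_nonneg _ _ hl.le, mul_zero, mul_add,
        hmul hl]
    simp only [Function.comp, hscale, integral_const_mul]
    linear_combination (-1 / 2) * hmul hl - spreadScale C Y ^ (-(1 / Y)) *
      Real.Gamma (1 + 1 / Y) / (2 * π) * hsq hl

lemma isLittleO_integral_exp_tiltedSpread (h : IsOneSidedStable C Y m) (hM : 1 ≤ M)
    (hG : 0 ≤ G) :
    (fun l : ℝ ↦ ∫ p, Real.exp (-(l * tiltedSpread M G p)) ∂m.prod m - 1 +
        (∫ p : ℝ × ℝ, max (p.1 - p.2) 0 ∂m.prod m) * l -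
        C * Real.Gamma (-Y) * (M ^ Y + (G + 1) ^ Y) * l ^ Y - tiltedSpreadCoeff C Y M G m * l ^ 2)
      =o[𝓝[>] 0] fun l ↦ l ^ 2 := by
  have := h.isProbabilityMeasure
  have hlim := (h.tendsto_integral_exp_tiltedSpread_sub_rpow_div_sq hM hG).sub_const
    (tiltedSpreadCoeff C Y M G m)
  rw [sub_self] at hlim
  refine isLittleO_iff_exists_eq_mul.2 ⟨_, hlim, ?_⟩
  filter_upwards [self_mem_nhdsWithin] with l (hl : 0 < l)
  have hexp := h.integrable_exp_tiltedSpread (zero_le_one.trans hM) hG hl.le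
  have hsub : Integrable (fun p ↦ Real.exp (-(l * tiltedSpread M G p)) - 1) (m.prod m) :=
    hexp.sub (integrable_const 1)
  rw [Pi.mul_apply, integral_add hsub ((h.integrable_tiltedSpread M G).const_mul l),
    integral_sub hexp (integrable_const 1), integral_const_mul, h.integral_tiltedSpread,
    integral_const, probReal_univ, one_smul]
  field_simp

lemma isBigO_tiltedCall_sub (h : IsOneSidedStable C Y m) (hM : 1 ≤ M) (hG : 0 ≤ G) (c : ℝ) :
    (fun l : ℝ ↦ tiltedCall M G m l (c * l ^ Y) -
        (Real.exp (C * Real.Gamma (-Y) * ((M - 1) ^ Y + (G + 1) ^ Y) * l ^ Y) -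
          ∫ p, Real.exp (-(l * tiltedSpread M G p)) ∂m.prod m +
          ∫ p : ℝ × ℝ, (max (l * (p.1 - p.2) + c * l ^ Y) 0 - max (l * (p.1 - p.2)) 0) ∂m.prod m))
      =O[𝓝[>] 0] fun l ↦ l ^ (Y + 1) := by
  obtain ⟨K, hK⟩ := h.exists_abs_tiltedCall_sub_le hM hG
  refine IsBigO.of_bound ((K + |c|) * |c|) ?_
  filter_upwards [Ioc_mem_nhdsGT zero_lt_one] with l hl
  have hlY : 0 ≤ l ^ Y := Real.rpow_nonneg hl.1.le Y
  have hle : l ^ Y ≤ l := by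
    simpa using Real.rpow_le_rpow_of_exponent_ge hl.1 hl.2 h.one_lt.le
  rw [Real.norm_of_nonneg (Real.rpow_nonneg hl.1.le _), Real.rpow_add_one hl.1.ne']
  refine (hK l ⟨hl.1.le, hl.2⟩ (c * l ^ Y)).trans ?_
  rw [abs_mul, abs_of_nonneg hlY]
  calc (K * l + |c| * l ^ Y) * (|c| * l ^ Y) ≤ (K * l + |c| * l) * (|c| * l ^ Y) := by gcongr
    _ = (K + |c|) * |c| * (l ^ Y * l) := by ring

theorem isLittleO_tiltedCall (h : IsOneSidedStable C Y m) (hM : 1 ≤ M) (hG : 0 ≤ G) (c : ℝ) :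
    (fun l : ℝ ↦ tiltedCall M G m l (c * l ^ Y) -
        ((∫ p : ℝ × ℝ, max (p.1 - p.2) 0 ∂m.prod m) * l +
          (C * Real.Gamma (-Y) * ((M - 1) ^ Y - M ^ Y) + c / 2) * l ^ Y +
          c ^ 2 / (2 * π) * Real.Gamma (1 + 1 / Y) * spreadScale C Y ^ (-(1 / Y)) *
            l ^ (2 * Y - 1) -
          tiltedSpreadCoeff C Y M G m * l ^ 2))
      =o[𝓝[>] 0] fun l ↦ l ^ min 2 (2 * Y - 1) := by
  have hmin : min 2 (2 * Y - 1) ≤ 2 := min_le_left _ _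
  have hY := h.one_lt
  have hexp := (isBigO_exp_mul_rpow_sub (zero_lt_one.trans hY)
    (C * Real.Gamma (-Y) * ((M - 1) ^ Y + (G + 1) ^ Y))).trans_isLittleO
    (isLittleO_rpow_rpow_nhdsGT_zero ((min_le_right 2 (2 * Y - 1)).trans_lt (sub_one_lt _)))
  have hsq : (fun l : ℝ ↦ l ^ 2) =O[𝓝[>] 0] fun l ↦ l ^ min 2 (2 * Y - 1) := by
    simpa using isBigO_rpow_rpow_nhdsGT_zero hmin
  have hspread := (h.isLittleO_integral_exp_tiltedSpread hM hG).trans_isBigO hsq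
  have hdrift := (h.isLittleO_integral_max_mul_sub_add_sub_max c).trans_isBigO
    (isBigO_rpow_rpow_nhdsGT_zero (min_le_right 2 _))
  have herror := (h.isBigO_tiltedCall_sub hM hG c).trans_isLittleO
    (isLittleO_rpow_rpow_nhdsGT_zero (hmin.trans_lt (by linarith : 2 < Y + 1)))
  refine ((hexp.sub hspread).add (hdrift.add herror)).congr_left fun l ↦ ?_
  ring

end IsOneSidedStable

end CallExpansion

section CallPriceExpansion

lemma isBigO_exp_mul_rpow_sub_one {Y : ℝ} (hY : 0 < Y) (η : ℝ) :
    (fun l : ℝ ↦ Real.exp (η * l ^ Y) - 1) =O[𝓝[>] 0] fun l ↦ l ^ Y := by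
  have hquad := (isBigO_exp_mul_rpow_sub hY η).trans
    (isBigO_rpow_rpow_nhdsGT_zero (by linarith : Y ≤ 2 * Y))
  exact (hquad.add ((isBigO_refl _ _).const_mul_left η)).congr_left fun l ↦ by ring

namespace IsOneSidedStable

variable {C Y M G : ℝ} {m : Measure ℝ}

lemma isBigO_tiltedCall (h : IsOneSidedStable C Y m) (hM : 1 ≤ M) (hG : 0 ≤ G) (c : ℝ) :
    (fun l : ℝ ↦ tiltedCall M G m l (c * l ^ Y)) =O[𝓝[>] 0] fun l ↦ l := by
  have hle {q : ℝ} (hq : 1 ≤ q) : (fun l : ℝ ↦ l ^ q) =O[𝓝[>] 0] fun l ↦ l := by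
    simpa using isBigO_rpow_rpow_nhdsGT_zero hq
  have hsq : (fun l : ℝ ↦ l ^ 2) =O[𝓝[>] 0] fun l ↦ l := by
    simpa using hle one_le_two
  have hY := h.one_lt
  have herror := (h.isLittleO_tiltedCall hM hG c).isBigO.trans
    (hle (le_min one_le_two (by linarith)))
  refine (herror.add ((((isBigO_refl _ _).const_mul_left _).add
    ((hle hY.le).const_mul_left _)).add ((hle (by linarith)).const_mul_left _) |>.sub
      (hsq.const_mul_left _))).congr_left fun l ↦ sub_add_cancel _ _

lemma isLittleO_exp_mul_tiltedCall (h : IsOneSidedStable C Y m) (hM : 1 ≤ M) (hG : 0 ≤ G)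
    (c η : ℝ) :
    (fun l : ℝ ↦ Real.exp (η * l ^ Y) * tiltedCall M G m l (c * l ^ Y) -
        ((∫ p : ℝ × ℝ, max (p.1 - p.2) 0 ∂m.prod m) * l +
          (C * Real.Gamma (-Y) * ((M - 1) ^ Y - M ^ Y) + c / 2) * l ^ Y +
          c ^ 2 / (2 * π) * Real.Gamma (1 + 1 / Y) * spreadScale C Y ^ (-(1 / Y)) *
            l ^ (2 * Y - 1) -
          tiltedSpreadCoeff C Y M G m * l ^ 2))
      =o[𝓝[>] 0] fun l ↦ l ^ min 2 (2 * Y - 1) := by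
  have hY := h.one_lt
  have hfactor := (isBigO_exp_mul_rpow_sub_one (zero_lt_one.trans hY) η).mul
    (h.isBigO_tiltedCall hM hG c)
  have hfactor' := (hfactor.congr' EventuallyEq.rfl (by
    filter_upwards [self_mem_nhdsWithin] with l (hl : 0 < l)
    rw [← Real.rpow_add_one hl.ne'])).trans_isLittleO
    (isLittleO_rpow_rpow_nhdsGT_zero
      ((min_le_left 2 (2 * Y - 1)).trans_lt (by linarith : 2 < Y + 1)))
  exact (hfactor'.add (h.isLittleO_tiltedCall hM hG c)).congr_left fun l ↦ by ring

variable {c : ℝ} {μ : ℝ → Measure ℝ}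

lemma exists_integral_max_exp_sub_one_eventuallyEq (h : IsOneSidedStable C Y m) (hM : 0 < M)
    (hG : 0 < G)
    (hc : c = -C * Real.Gamma (-Y) * ((M - 1) ^ Y + (G + 1) ^ Y - M ^ Y - G ^ Y))
    (hμ : ∀ t > 0, IsFiniteMeasure (μ t))
    (hchar : ∀ t > 0, ∀ u, charFun (μ t) u = Complex.exp (t * cgmyExponent C G M Y c u)) :
    ∃ η, (fun t ↦ ∫ x, max (Real.exp x - 1) 0 ∂μ t) =ᶠ[𝓝[>] 0]
      (fun l : ℝ ↦ Real.exp (η * l ^ Y) * tiltedCall M G m l (c * l ^ Y)) ∘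
        fun t ↦ t ^ (1 / Y) := by
  refine ⟨-(C * Real.Gamma (-Y) * ((M - 1) ^ Y + (G + 1) ^ Y)), ?_⟩
  filter_upwards [self_mem_nhdsWithin] with t (ht : 0 < t)
  have := hμ t ht
  have hpow : (t ^ (1 / Y)) ^ Y = t := by
    rw [← Real.rpow_mul ht.le, one_div_mul_cancel (zero_lt_one.trans h.one_lt).ne', Real.rpow_one]
  rw [h.integral_max_exp_sub_one_eq_tiltedCall hM hG ht hc (hchar t ht), Function.comp, hpow]

lemma isBigO_integral_max_exp_sub_one (h : IsOneSidedStable C Y m) (hM : 1 ≤ M) (hG : 0 < G)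
    (hc : c = -C * Real.Gamma (-Y) * ((M - 1) ^ Y + (G + 1) ^ Y - M ^ Y - G ^ Y))
    (hμ : ∀ t > 0, IsFiniteMeasure (μ t))
    (hchar : ∀ t > 0, ∀ u, charFun (μ t) u = Complex.exp (t * cgmyExponent C G M Y c u)) :
    (fun t ↦ ∫ x, max (Real.exp x - 1) 0 ∂μ t) =O[𝓝[>] 0] fun t ↦ t ^ (1 / Y) := by
  have hY := zero_lt_one.trans h.one_lt
  obtain ⟨η, hη⟩ := h.exists_integral_max_exp_sub_one_eventuallyEq (zero_lt_one.trans_le hM) hG hc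
    hμ hchar
  have hexp : (fun l : ℝ ↦ Real.exp (η * l ^ Y)) =O[𝓝[>] 0] fun _ ↦ (1 : ℝ) :=
    (((isBigO_exp_mul_rpow_sub_one hY η).trans
      (by simpa using isBigO_rpow_rpow_nhdsGT_zero hY.le)).add
      (isBigO_refl _ _)).congr_left fun l ↦ sub_add_cancel _ _
  refine ((hexp.mul (h.isBigO_tiltedCall hM hG.le c)).comp_tendsto
    (tendsto_rpow_nhdsGT_zero (one_div_pos.2 hY))).congr' hη.symm (.of_eq ?_)
  simp only [Function.comp_def, one_mul]

theorem isLittleO_integral_max_exp_sub_one (h : IsOneSidedStable C Y m) (hM : 1 ≤ M) (hG : 0 < G)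
    (hc : c = -C * Real.Gamma (-Y) * ((M - 1) ^ Y + (G + 1) ^ Y - M ^ Y - G ^ Y))
    (hμ : ∀ t > 0, IsFiniteMeasure (μ t))
    (hchar : ∀ t > 0, ∀ u, charFun (μ t) u = Complex.exp (t * cgmyExponent C G M Y c u)) :
    (fun t ↦ ∫ x, max (Real.exp x - 1) 0 ∂μ t -
        ((∫ p : ℝ × ℝ, max (p.1 - p.2) 0 ∂m.prod m) * t ^ (1 / Y) +
          (C * Real.Gamma (-Y) * ((M - 1) ^ Y - M ^ Y) + c / 2) * t +
          c ^ 2 / (2 * π) * Real.Gamma (1 + 1 / Y) * spreadScale C Y ^ (-(1 / Y)) *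
            t ^ (2 - 1 / Y) -
          tiltedSpreadCoeff C Y M G m * t ^ (2 / Y)))
      =o[𝓝[>] 0] fun t ↦ t ^ min (2 - 1 / Y) (2 / Y) := by
  have hY := zero_lt_one.trans h.one_lt
  have hpow {t : ℝ} (ht : 0 < t) (q : ℝ) : (t ^ (1 / Y)) ^ q = t ^ (q / Y) := by
    rw [← Real.rpow_mul ht.le, one_div_mul_eq_div]
  obtain ⟨η, hη⟩ := h.exists_integral_max_exp_sub_one_eventuallyEq (zero_lt_one.trans_le hM) hG hc
    hμ hchar
  refine ((h.isLittleO_exp_mul_tiltedCall hM hG.le c η).comp_tendsto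
    (tendsto_rpow_nhdsGT_zero (one_div_pos.2 hY))).congr' ?_ ?_
  · filter_upwards [hη, self_mem_nhdsWithin] with t ht (ht0 : 0 < t)
    have hsq : (t ^ (1 / Y)) ^ 2 = t ^ (2 / Y) :=
      (Real.rpow_two _).symm.trans (hpow ht0 2)
    rw [ht]
    simp only [Function.comp_apply]
    rw [hpow ht0, hpow ht0, hsq, div_self hY.ne', Real.rpow_one, sub_div,
      mul_div_cancel_right₀ _ hY.ne']
  · filter_upwards [self_mem_nhdsWithin] with t (ht : 0 < t)
    rw [Function.comp_apply, hpow ht, ← min_div_div_right hY.le, min_comm, sub_div,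
      mul_div_cancel_right₀ _ hY.ne']

end IsOneSidedStable

end CallPriceExpansion

section BlackScholes

lemma integrable_exp_neg_sq_div_two_div :
    Integrable fun t : ℝ ↦ Real.exp (-t ^ 2 / 2) / √(2 * π) := by
  convert (integrable_exp_neg_mul_sq one_half_pos).div_const (√(2 * π)) using 4
  ring

lemma stdGaussianCDF_zero : stdGaussianCDF 0 = 1 / 2 := by
  have hmass := integral_gaussian_Ioi (1 / 2)
  have hsymm := integral_comp_neg_Iic 0 fun t : ℝ ↦ Real.exp (-t ^ 2 / 2) / √(2 * π)
  simp only [neg_sq, neg_zero] at hsymm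
  have hexponent (t : ℝ) : -t ^ 2 / 2 = -(1 / 2) * t ^ 2 := by ring
  have : √(2 * π) ≠ 0 := (Real.sqrt_pos.2 Real.two_pi_pos).ne'
  rw [stdGaussianCDF, hsymm, integral_div]
  simp only [hexponent]
  rw [hmass, show π / (1 / 2) = 2 * π by ring]
  field_simp

lemma stdGaussianCDF_mono : Monotone stdGaussianCDF := fun _ _ hxy ↦
  setIntegral_mono_set integrable_exp_neg_sq_div_two_div.integrableOn
    (ae_of_all _ fun _ ↦ div_nonneg (Real.exp_pos _).le (Real.sqrt_nonneg _))
    (Iic_subset_Iic.2 hxy).eventuallyLE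

lemma two_mul_stdGaussianCDF_sub_one (x : ℝ) :
    2 * stdGaussianCDF x - 1 = 2 * ∫ t in 0..x, Real.exp (-t ^ 2 / 2) / √(2 * π) := by
  rw [← intervalIntegral.integral_Iic_sub_Iic integrable_exp_neg_sq_div_two_div.integrableOn
    integrable_exp_neg_sq_div_two_div.integrableOn, ← stdGaussianCDF, ← stdGaussianCDF,
    stdGaussianCDF_zero]
  ring

lemma abs_two_mul_stdGaussianCDF_sub_one_sub_le {x : ℝ} (hx : 0 ≤ x) :
    |2 * stdGaussianCDF x - 1 - 2 * x / √(2 * π)| ≤ x ^ 3 / √(2 * π) := by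
  have hsqrt : 0 < √(2 * π) := Real.sqrt_pos.2 Real.two_pi_pos
  have hdiff : 2 * stdGaussianCDF x - 1 - 2 * x / √(2 * π) =
      2 * ∫ t in 0..x, (Real.exp (-t ^ 2 / 2) / √(2 * π) - 1 / √(2 * π)) := by
    rw [two_mul_stdGaussianCDF_sub_one, intervalIntegral.integral_sub
      integrable_exp_neg_sq_div_two_div.intervalIntegrable intervalIntegrable_const,
      intervalIntegral.integral_const, smul_eq_mul]
    ring
  have hbound : ∀ t ∈ uIoc 0 x,
      ‖Real.exp (-t ^ 2 / 2) / √(2 * π) - 1 / √(2 * π)‖ ≤ x ^ 2 / 2 / √(2 * π) := by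
    intro t ht
    rw [uIoc_of_le hx] at ht
    have hsq : t ^ 2 ≤ x ^ 2 := pow_le_pow_left₀ ht.1.le ht.2 2
    have hle : Real.exp (-t ^ 2 / 2) ≤ 1 := Real.exp_le_one_iff.2 (by linarith [sq_nonneg t])
    rw [← sub_div, norm_div, Real.norm_of_nonneg hsqrt.le, Real.norm_of_nonpos (sub_nonpos.2 hle)]
    gcongr
    linarith [Real.add_one_le_exp (-t ^ 2 / 2)]
  have hintegral := intervalIntegral.norm_integral_le_of_norm_le_const hbound
  rw [sub_zero, abs_of_nonneg hx, Real.norm_eq_abs] at hintegral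
  rw [hdiff, abs_mul, abs_two]
  calc 2 * |∫ t in 0..x, (Real.exp (-t ^ 2 / 2) / √(2 * π) - 1 / √(2 * π))|
      ≤ 2 * (x ^ 2 / 2 / √(2 * π) * x) := by gcongr
    _ = x ^ 3 / √(2 * π) := by ring

lemma le_sqrt_two_pi_mul_stdGaussianCDF {x : ℝ} (hx : 0 ≤ x)
    (hlt : 2 * stdGaussianCDF x - 1 < 1 / √(2 * π)) :
    x ≤ √(2 * π) * (2 * stdGaussianCDF x - 1) := by
  have hsqrt : 0 < √(2 * π) := Real.sqrt_pos.2 Real.two_pi_pos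
  have hunit {y : ℝ} (h0 : 0 ≤ y) (h1 : y ≤ 1) : y / √(2 * π) ≤ 2 * stdGaussianCDF y - 1 := by
    have hcubic := (abs_le.1 (abs_two_mul_stdGaussianCDF_sub_one_sub_le h0)).1
    have hcube : y ^ 3 / √(2 * π) ≤ y / √(2 * π) := by
      gcongr
      exact pow_le_of_le_one h0 h1 three_ne_zero
    linarith [show 2 * y / √(2 * π) = y / √(2 * π) + y / √(2 * π) by ring]
  have hx1 : x ≤ 1 := by
    by_contra! hx1
    linarith [hunit zero_le_one le_rfl, stdGaussianCDF_mono hx1.le]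
  rw [mul_comm]
  exact (div_le_iff₀ hsqrt).1 (hunit hx hx1)

lemma abs_impliedVol_mul_sqrt_sub_CBS_le {t s : ℝ} (hs : 0 ≤ s)
    (hlt : CBS t s < 1 / √(2 * π)) :
    |s * √t / √(2 * π) - CBS t s| ≤ 2 * π * |CBS t s| ^ 3 := by
  have hsqrt : 0 < √(2 * π) := Real.sqrt_pos.2 Real.two_pi_pos
  have hx : 0 ≤ s * √t / 2 := by positivity
  have hle : s * √t / 2 ≤ √(2 * π) * CBS t s := le_sqrt_two_pi_mul_stdGaussianCDF hx hlt
  calc |s * √t / √(2 * π) - CBS t s|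
      = |CBS t s - 2 * (s * √t / 2) / √(2 * π)| := by rw [abs_sub_comm]; congr 2; ring
    _ ≤ (s * √t / 2) ^ 3 / √(2 * π) := abs_two_mul_stdGaussianCDF_sub_one_sub_le hx
    _ ≤ (√(2 * π) * |CBS t s|) ^ 3 / √(2 * π) := by
      gcongr
      exact hle.trans (mul_le_mul_of_nonneg_left (le_abs_self _) hsqrt.le)
    _ = √(2 * π) ^ 2 * |CBS t s| ^ 3 := by field_simp
    _ = 2 * π * |CBS t s| ^ 3 := by rw [Real.sq_sqrt Real.two_pi_pos.le]

variable {p r : ℝ} {Pr σ : ℝ → ℝ}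

lemma isLittleO_impliedVol_mul_sqrt_sub (hp : 0 < p) (hr : r < 3 * p)
    (hσ : ∀ᶠ t in 𝓝[>] 0, 0 ≤ σ t) (hBS : ∀ᶠ t in 𝓝[>] 0, CBS t (σ t) = Pr t)
    (hPr : Pr =O[𝓝[>] 0] fun t ↦ t ^ p) :
    (fun t ↦ σ t * √t / √(2 * π) - Pr t) =o[𝓝[>] 0] fun t ↦ t ^ r := by
  have hsqrt : 0 < √(2 * π) := Real.sqrt_pos.2 Real.two_pi_pos
  have hlim : Tendsto Pr (𝓝[>] 0) (𝓝 0) := hPr.trans_tendsto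
    ((tendsto_rpow_nhdsGT_zero hp).mono_right nhdsWithin_le_nhds)
  have hcubic : (fun t ↦ σ t * √t / √(2 * π) - Pr t) =O[𝓝[>] 0] fun t ↦ Pr t ^ 3 := by
    refine IsBigO.of_bound (2 * π) ?_
    filter_upwards [hσ, hBS, hlim.eventually_lt_const (one_div_pos.2 hsqrt)] with t hσt hBSt hlt
    rw [norm_pow, Real.norm_eq_abs, Real.norm_eq_abs, ← hBSt]
    exact abs_impliedVol_mul_sqrt_sub_CBS_le hσt (hBSt ▸ hlt)
  have hpow : (fun t : ℝ ↦ (t ^ p) ^ 3) =ᶠ[𝓝[>] 0] fun t ↦ t ^ (3 * p) := by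
    filter_upwards [self_mem_nhdsWithin] with t (ht : 0 < t)
    rw [mul_comm, Real.rpow_mul ht.le, Real.rpow_ofNat]
  exact (hcubic.trans ((hPr.pow 3).trans_eventuallyEq hpow)).trans_isLittleO
    (isLittleO_rpow_rpow_nhdsGT_zero hr)

lemma isLittleO_impliedVol_sub_of_isLittleO (hp : 0 < p) (hr : r < 3 * p)
    (hσ : ∀ᶠ t in 𝓝[>] 0, 0 ≤ σ t) (hBS : ∀ᶠ t in 𝓝[>] 0, CBS t (σ t) = Pr t)
    (hPr : Pr =O[𝓝[>] 0] fun t ↦ t ^ p) {a b d : ℝ}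
    (hexp : (fun t ↦ Pr t - (a * t ^ p + b * t + d * t ^ r)) =o[𝓝[>] 0] fun t ↦ t ^ r) :
    (fun t ↦ σ t / √(2 * π) -
        (a * t ^ (p - 1 / 2) + b * t ^ ((1 : ℝ) / 2) + d * t ^ (r - 1 / 2)))
      =o[𝓝[>] 0] fun t ↦ t ^ (r - 1 / 2) := by
  have hquot {t : ℝ} (ht : 0 < t) (q : ℝ) : t ^ (q - 1 / 2) = (√t)⁻¹ * t ^ q := by
    rw [Real.rpow_sub ht, ← Real.sqrt_eq_rpow, div_eq_inv_mul]
  refine ((isBigO_refl (fun t : ℝ ↦ (√t)⁻¹) _).mul_isLittleO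
    ((isLittleO_impliedVol_mul_sqrt_sub hp hr hσ hBS hPr).add hexp)).congr' ?_ ?_
  · filter_upwards [self_mem_nhdsWithin] with t (ht : 0 < t)
    have : √t ≠ 0 := (Real.sqrt_pos.2 ht).ne'
    have hhalf : t ^ ((1 : ℝ) / 2) = (√t)⁻¹ * t := by
      rw [← sub_half 1, hquot ht, Real.rpow_one]
    rw [hquot ht, hhalf, hquot ht]
    field_simp
    ring
  · filter_upwards [self_mem_nhdsWithin] with t (ht : 0 < t) using (hquot ht r).symm

end BlackScholes

section SmallTimeExponents

lemma isLittleO_rpow_add_rpow_sub_min {p q : ℝ} (a b : ℝ) :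
    (fun x : ℝ ↦ a * x ^ p + b * x ^ q -
        (if p < q then a else if q < p then b else a + b) * x ^ min p q)
      =o[𝓝[>] 0] fun x ↦ x ^ min p q := by
  rcases lt_trichotomy p q with hpq | rfl | hpq
  · simpa [hpq, min_eq_left hpq.le] using
      (isLittleO_rpow_rpow_nhdsGT_zero hpq).const_mul_left b
  · simp [add_mul]
  · simpa [hpq, hpq.not_gt, min_eq_right hpq.le] using
      (isLittleO_rpow_rpow_nhdsGT_zero hpq).const_mul_left a

lemma two_sub_one_div_lt_two_div_iff {Y : ℝ} (hY : 0 < Y) : 2 - 1 / Y < 2 / Y ↔ Y < 3 / 2 := by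
  rw [sub_lt_iff_lt_add, ← add_div, lt_div_iff₀ hY, lt_div_iff₀ two_pos, mul_comm]
  norm_num

lemma two_div_lt_two_sub_one_div_iff {Y : ℝ} (hY : 0 < Y) : 2 / Y < 2 - 1 / Y ↔ 3 / 2 < Y := by
  rw [lt_sub_iff_add_lt, ← add_div, div_lt_iff₀ hY, div_lt_iff₀ two_pos, mul_comm]
  norm_num

end SmallTimeExponents

section RandomVariables

variable {Ω : Type*} [MeasurableSpace Ω] {P : Measure Ω} {C G M Y : ℝ} {U V : Ω → ℝ}

lemma charFun_eq_integral_exp_I_mul (μ : Measure ℝ) (u : ℝ) :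
    charFun μ u = ∫ x, Complex.exp (I * u * x) ∂μ := by
  rw [charFun_apply_real]
  congr 1 with x
  ring_nf

lemma isOneSidedStable_map_of_integral_exp_eq [IsProbabilityMeasure P] (hC : 0 < C)
    (hY : Y ∈ Ioo 1 2) (hU : AEMeasurable U P)
    (hchar : ∀ u : ℝ, ∫ ω, Complex.exp (I * u * U ω) ∂P =
      Complex.exp ((C * Real.Gamma (-Y) * |u| ^ Y : ℝ) *
        (Real.cos (π * Y / 2) - I * Real.sign u * Real.sin (π * Y / 2)))) :
    IsOneSidedStable C Y (P.map U) where
  pos := hC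
  one_lt := hY.1
  lt_two := hY.2
  isProbabilityMeasure := Measure.isProbabilityMeasure_map hU
  charFun_eq u := by
    rw [charFun_eq_integral_exp_I_mul, integral_map hU (by fun_prop), hchar,
      neg_I_mul_cpow (zero_lt_one.trans hY.1)]
    congr 1
    push_cast
    ring

lemma IsOneSidedStable.measure_eq {m m' : Measure ℝ} (h : IsOneSidedStable C Y m)
    (h' : IsOneSidedStable C Y m') : m = m' := by
  have := h.isProbabilityMeasure
  have := h'.isProbabilityMeasure
  exact Measure.ext_of_charFun (funext fun u ↦ (h.charFun_eq u).trans (h'.charFun_eq u).symm)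

lemma IsOneSidedStable.map_prodMk_eq_prod_self [IsFiniteMeasure P]
    (hU : IsOneSidedStable C Y (P.map U)) (hV : IsOneSidedStable C Y (P.map V))
    (hindep : IndepFun U V P) :
    P.map (fun ω ↦ (U ω, V ω)) = (P.map U).prod (P.map U) := by
  have := hU.isProbabilityMeasure
  have := hV.isProbabilityMeasure
  rw [(indepFun_iff_map_prod_eq_prod_map_map (AEMeasurable.of_map_ne_zero (NeZero.ne _))
    (AEMeasurable.of_map_ne_zero (NeZero.ne _))).1 hindep, hV.measure_eq hU]

lemma indicator_nonpos_sq_eq_min_sq {α : Type*} (f : α → ℝ) (x : α) :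
    {x | f x ≤ 0}.indicator (fun x ↦ f x ^ 2) x = min (f x) 0 ^ 2 := by
  by_cases hx : f x ≤ 0
  · rw [indicator_of_mem (s := {x | f x ≤ 0}) hx, min_eq_left hx]
  · rw [indicator_of_notMem (s := {x | f x ≤ 0}) hx, min_eq_right (not_le.1 hx).le, sq, zero_mul]

lemma neg_tiltedSpreadCoeff_eq_of_map_eq {m : Measure ℝ} (hU : Measurable U) (hV : Measurable V)
    (hmap : P.map (fun ω ↦ (U ω, V ω)) = m.prod m) :
    -tiltedSpreadCoeff C Y M G m =
      -(1 / 2) * ∫ ω, {ω | tiltedSpread M G (U ω, V ω) ≤ 0}.indicator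
          (fun ω ↦ tiltedSpread M G (U ω, V ω) ^ 2) ω ∂P -
        ∫ w in Ioi (0 : ℝ), w * (P.real {ω | w ≤ tiltedSpread M G (U ω, V ω)} -
          C * M ^ Y / (Y * w ^ Y) - C * (G + 1) ^ Y / (Y * w ^ Y)) := by
  have hUV : Measurable fun ω ↦ (U ω, V ω) := hU.prodMk hV
  have hW := measurable_tiltedSpread M G
  have hsq : ∫ p, min (tiltedSpread M G p) 0 ^ 2 / 2 ∂P.map (fun ω ↦ (U ω, V ω)) =
      1 / 2 * ∫ ω, {ω | tiltedSpread M G (U ω, V ω) ≤ 0}.indicator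
        (fun ω ↦ tiltedSpread M G (U ω, V ω) ^ 2) ω ∂P := by
    rw [integral_map hUV.aemeasurable
      (((hW.min measurable_const).pow_const 2).div_const 2).aestronglyMeasurable, integral_div]
    simp only [indicator_nonpos_sq_eq_min_sq]
    ring
  have htail : ∫ w in Ioi (0 : ℝ), w * ((P.map (fun ω ↦ (U ω, V ω))).real
        {p | w ≤ tiltedSpread M G p} - C * (M ^ Y + (G + 1) ^ Y) / Y * w ^ (-Y)) =
      ∫ w in Ioi (0 : ℝ), w * (P.real {ω | w ≤ tiltedSpread M G (U ω, V ω)} -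
        C * M ^ Y / (Y * w ^ Y) - C * (G + 1) ^ Y / (Y * w ^ Y)) := by
    refine setIntegral_congr_fun measurableSet_Ioi fun w (hw : 0 < w) ↦ ?_
    simp only [map_measureReal_apply hUV (measurableSet_le measurable_const hW), preimage_ofPred_eq,
      Real.rpow_neg hw.le]
    ring
  rw [tiltedSpreadCoeff, ← hmap, hsq, htail]
  ring

end RandomVariables

section ImpliedVolExpansion

namespace IsOneSidedStable

variable {C Y M G c : ℝ} {m : Measure ℝ} {μ : ℝ → Measure ℝ}

lemma integral_max_sub_zero_eq_abs_cos (h : IsOneSidedStable C Y m) :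
    ∫ p : ℝ × ℝ, max (p.1 - p.2) 0 ∂m.prod m =
      1 / π * Real.Gamma (1 - 1 / Y) *
        (2 * C * Real.Gamma (-Y) * |Real.cos (π * Y / 2)|) ^ (1 / Y) := by
  rw [h.integral_max_sub_zero, abs_of_neg (cos_pi_mul_div_two_neg h.one_lt h.lt_two),
    spreadScale]
  ring_nf

lemma isLittleO_integral_max_exp_sub_one_sub_min (h : IsOneSidedStable C Y m) (hM : 1 ≤ M)
    (hG : 0 < G)
    (hc : c = -C * Real.Gamma (-Y) * ((M - 1) ^ Y + (G + 1) ^ Y - M ^ Y - G ^ Y))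
    (hμ : ∀ t > 0, IsFiniteMeasure (μ t))
    (hchar : ∀ t > 0, ∀ u, charFun (μ t) u = Complex.exp (t * cgmyExponent C G M Y c u))
    {a b : ℝ}
    (ha : a = c ^ 2 / (2 * π) * Real.Gamma (1 + 1 / Y) * spreadScale C Y ^ (-(1 / Y)))
    (hb : b = -tiltedSpreadCoeff C Y M G m) :
    (fun t ↦ ∫ x, max (Real.exp x - 1) 0 ∂μ t -
        (1 / π * Real.Gamma (1 - 1 / Y) *
            (2 * C * Real.Gamma (-Y) * |Real.cos (π * Y / 2)|) ^ (1 / Y) * t ^ (1 / Y) +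
          C * Real.Gamma (-Y) / 2 * ((M - 1) ^ Y - M ^ Y - (G + 1) ^ Y + G ^ Y) * t +
          (if Y < 3 / 2 then a else if 3 / 2 < Y then b else a + b) *
            t ^ min (2 - 1 / Y) (2 / Y)))
      =o[𝓝[>] 0] fun t ↦ t ^ min (2 - 1 / Y) (2 / Y) := by
  have hY : 0 < Y := zero_lt_one.trans h.one_lt
  have hsecond : C * Real.Gamma (-Y) * ((M - 1) ^ Y - M ^ Y) + c / 2 =
      C * Real.Gamma (-Y) / 2 * ((M - 1) ^ Y - M ^ Y - (G + 1) ^ Y + G ^ Y) := by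
    rw [hc]
    ring
  have hthird := isLittleO_rpow_add_rpow_sub_min (p := 2 - 1 / Y) (q := 2 / Y) a b
  simp only [two_sub_one_div_lt_two_div_iff hY, two_div_lt_two_sub_one_div_iff hY] at hthird
  refine ((h.isLittleO_integral_max_exp_sub_one hM hG hc hμ hchar).add hthird).congr_left
    fun t ↦ ?_
  rw [← ha, h.integral_max_sub_zero_eq_abs_cos, hsecond, hb]
  ring

theorem isLittleO_impliedVol_sub (h : IsOneSidedStable C Y m) (hM : 1 ≤ M) (hG : 0 < G)
    (hc : c = -C * Real.Gamma (-Y) * ((M - 1) ^ Y + (G + 1) ^ Y - M ^ Y - G ^ Y))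
    (hμ : ∀ t > 0, IsFiniteMeasure (μ t))
    (hchar : ∀ t > 0, ∀ u, charFun (μ t) u = Complex.exp (t * cgmyExponent C G M Y c u))
    {a b : ℝ}
    (ha : a = c ^ 2 / (2 * π) * Real.Gamma (1 + 1 / Y) * spreadScale C Y ^ (-(1 / Y)))
    (hb : b = -tiltedSpreadCoeff C Y M G m) {σ : ℝ → ℝ} (hσ : ∀ᶠ t in 𝓝[>] 0, 0 ≤ σ t)
    (hBS : ∀ᶠ t in 𝓝[>] 0, CBS t (σ t) = ∫ x, max (Real.exp x - 1) 0 ∂μ t) :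
    (fun t ↦ σ t / √(2 * π) -
        (1 / π * Real.Gamma (1 - 1 / Y) *
            (2 * C * Real.Gamma (-Y) * |Real.cos (π * Y / 2)|) ^ (1 / Y) * t ^ (1 / Y - 1 / 2) +
          C * Real.Gamma (-Y) / 2 * ((M - 1) ^ Y - M ^ Y - (G + 1) ^ Y + G ^ Y) *
            t ^ ((1 : ℝ) / 2) +
          (if Y < 3 / 2 then a else if 3 / 2 < Y then b else a + b) *
            t ^ (min (2 - 1 / Y) (2 / Y) - 1 / 2)))
      =o[𝓝[>] 0] fun t ↦ t ^ (min (2 - 1 / Y) (2 / Y) - 1 / 2) := by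
  have hY : 0 < 1 / Y := one_div_pos.2 (zero_lt_one.trans h.one_lt)
  have hr : min (2 - 1 / Y) (2 / Y) < 3 * (1 / Y) :=
    (min_le_right _ _).trans_lt (by linarith [show 2 / Y = 2 * (1 / Y) by ring])
  exact isLittleO_impliedVol_sub_of_isLittleO hY hr hσ hBS
    (h.isBigO_integral_max_exp_sub_one hM hG hc hμ hchar)
    (h.isLittleO_integral_max_exp_sub_one_sub_min hM hG hc hμ hchar ha hb)

end IsOneSidedStable

end ImpliedVolExpansion

end CGMY

/-- Third-order at-the-money implied volatility asymptotics for the pure-jump CGMY model. -/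
theorem stmt1
    {Ω : Type} [MeasurableSpace Ω] (P : Measure Ω) [IsProbabilityMeasure P]
    (C G M Y : ℝ) (hC : 0 < C) (hG : 0 < G) (hM : 1 < M) (hY : Y ∈ Set.Ioo (1:ℝ) 2)
    (c : ℝ)
    (hc : c = -C * Real.Gamma (-Y) * ((M-1) ^ Y + (G+1) ^ Y - M ^ Y - G ^ Y))
    (μ : ℝ → Measure ℝ)
    (hμprob : ∀ t > (0:ℝ), IsProbabilityMeasure (μ t))
    (hμchar : ∀ t > (0:ℝ), ∀ u : ℝ,
      (∫ x, Complex.exp (Complex.I * u * x) ∂(μ t)) =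
        Complex.exp ((t : ℂ) * (Complex.I * (c : ℂ) * (u : ℂ) +
          ((C * Real.Gamma (-Y) : ℝ) : ℂ) *
          (((M : ℂ) - Complex.I * (u : ℂ)) ^ (Y : ℂ) + ((G : ℂ) + Complex.I * (u : ℂ)) ^ (Y : ℂ)
            - (M : ℂ) ^ (Y : ℂ) - (G : ℂ) ^ (Y : ℂ)))))
    (Pr : ℝ → ℝ)
    (hPr : ∀ t > (0:ℝ), Pr t = ∫ x, max (Real.exp x - 1) 0 ∂(μ t))
    (U V : Ω → ℝ) (hU : Measurable U) (hV : Measurable V)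
    (hIndep : IndepFun U V P)
    (hUchar : ∀ u : ℝ, (∫ ω, Complex.exp (Complex.I * u * (U ω)) ∂P) =
      Complex.exp (((C * Real.Gamma (-Y) * |u| ^ Y : ℝ) : ℂ) *
        (((Real.cos (Real.pi * Y / 2) : ℝ) : ℂ)
          - Complex.I * ((Real.sign u : ℝ) : ℂ) * ((Real.sin (Real.pi * Y / 2) : ℝ) : ℂ))))
    (hVchar : ∀ u : ℝ, (∫ ω, Complex.exp (Complex.I * u * (V ω)) ∂P) =
      Complex.exp (((C * Real.Gamma (-Y) * |u| ^ Y : ℝ) : ℂ) *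
        (((Real.cos (Real.pi * Y / 2) : ℝ) : ℂ)
          - Complex.I * ((Real.sign u : ℝ) : ℂ) * ((Real.sin (Real.pi * Y / 2) : ℝ) : ℂ))))
    (Z Ut : Ω → ℝ)
    (hZ : Z = fun ω => U ω - V ω)
    (hUt : Ut = fun ω => (M - 1) * U ω + (G + 1) * V ω)
    (γ' d₁ d₂ d₃₁ d₃₂ d₃ : ℝ)
    (hγ' : γ' = -C * Real.Gamma (-Y) * ((M-1) ^ Y + (G+1) ^ Y - M ^ Y - G ^ Y))
    (hd₁ : d₁ = (1 / Real.pi) * Real.Gamma (1 - 1/Y) *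
      (2 * C * Real.Gamma (-Y) * |Real.cos (Real.pi * Y / 2)|) ^ (1/Y))
    (hd₂ : d₂ = (C * Real.Gamma (-Y) / 2) * ((M-1) ^ Y - M ^ Y - (G+1) ^ Y + G ^ Y))
    (hd₃₁ : d₃₁ = (γ' ^ 2 / (2 * Real.pi)) * Real.Gamma (1 + 1/Y) *
      (-2 * C * Real.Gamma (-Y) * Real.cos (Real.pi * Y / 2)) ^ (-(1/Y)))
    (hd₃₂ : d₃₂ = -(1/2) * (∫ ω, Set.indicator {ω | max (Z ω) 0 + Ut ω ≤ 0}
        (fun ω => (max (Z ω) 0 + Ut ω) ^ 2) ω ∂P)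
      - ∫ w in Set.Ioi (0:ℝ), w * ((P {ω | w ≤ max (Z ω) 0 + Ut ω}).toReal
          - C * M ^ Y / (Y * w ^ Y) - C * (G+1) ^ Y / (Y * w ^ Y)))
    (hd₃ : d₃ = if Y < 3/2 then d₃₁ else if 3/2 < Y then d₃₂ else d₃₁ + d₃₂)
    (δ : ℝ) (hδ : 0 < δ) (σhat : ℝ → ℝ)
    (hσhatpos : ∀ t ∈ Set.Ioo (0:ℝ) δ, 0 < σhat t)
    (hBS : ∀ t ∈ Set.Ioo (0:ℝ) δ, CBS t (σhat t) = Pr t) :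
    (Y ≤ 3/2 →
      (fun t => σhat t / Real.sqrt (2 * Real.pi)
          - (d₁ * t ^ (1/Y - 1/2) + d₂ * t ^ ((1:ℝ)/2) + d₃ * t ^ (3/2 - 1/Y)))
        =o[𝓝[>] (0:ℝ)] fun t => t ^ (3/2 - 1/Y)) ∧
    (3/2 < Y →
      (fun t => σhat t / Real.sqrt (2 * Real.pi)
          - (d₁ * t ^ (1/Y - 1/2) + d₂ * t ^ ((1:ℝ)/2) + d₃ * t ^ (2/Y - 1/2)))
        =o[𝓝[>] (0:ℝ)] fun t => t ^ (2/Y - 1/2)) := by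
  have hUlaw := isOneSidedStable_map_of_integral_exp_eq hC hY hU.aemeasurable hUchar
  have hVlaw := isOneSidedStable_map_of_integral_exp_eq hC hY hV.aemeasurable hVchar
  have hprice {t : ℝ} (ht : t ∈ Ioo 0 δ) : CBS t (σhat t) = ∫ x, max (Real.exp x - 1) 0 ∂μ t :=
    (hBS t ht).trans (hPr t ht.1)
  have hd₃₂' : d₃₂ = -tiltedSpreadCoeff C Y M G (P.map U) := by
    rw [hd₃₂, hZ, hUt]
    exact (neg_tiltedSpreadCoeff_eq_of_map_eq hU hV
      (hUlaw.map_prodMk_eq_prod_self hVlaw hIndep)).symm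
  have hvol := hUlaw.isLittleO_impliedVol_sub hM.le hG hc
    (fun t ht ↦ by have := hμprob t ht; infer_instance)
    (fun t ht u ↦ (charFun_eq_integral_exp_I_mul _ _).trans (hμchar t ht u))
    (hd₃₁.trans (by rw [hγ', ← hc, spreadScale])) hd₃₂'
    (eventually_of_mem (Ioo_mem_nhdsGT hδ) fun t ht ↦ (hσhatpos t ht).le)
    (eventually_of_mem (Ioo_mem_nhdsGT hδ) fun t ↦ hprice)
  rw [← hd₁, ← hd₂, ← hd₃] at hvol
  have hiff := two_div_lt_two_sub_one_div_iff (zero_lt_one.trans hY.1)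
  refine ⟨fun hle ↦ ?_, fun hlt ↦ ?_⟩
  · rw [min_eq_left (not_lt.1 (hiff.not.2 hle.not_gt)),
      show 2 - 1 / Y - 1 / 2 = 3 / 2 - 1 / Y by ring] at hvol
    exact hvol
  · rwa [min_eq_right (hiff.2 hlt).le] at hvol
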